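/- arXiv:2011.02984 — 2 statements merged into one kernel-verified Lean document; each statement's English description precedes it below -/
import Mathlib

section
/- For every integer n ≥ 1: if n is odd then N̄(0,2,n) > N̄(1,2,n), and if n is even then N̄(0,2,n) < N̄(1,2,n). -/
/-- An overpartition of `n`: a partition of `n` together with a chosen subset of its
distinct part sizes (the overlined parts). -/
def Overpartition (n : ℕ) : Type :=
  {P : n.Partition × Finset ℕ // P.2 ⊆ P.1.parts.toFinset}

/-- The Dyson rank of an overpartition: largest part minus number of parts. -/
def Overpartition.rank {n : ℕ} (P : Overpartition n) : ℤ :=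
  (P.1.1.parts.sup : ℤ) - (P.1.1.parts.card : ℤ)

/-- `nbarRank m n` is the number of overpartitions of `n` with rank `m`. -/
noncomputable def nbarRank (m : ℤ) (n : ℕ) : ℕ :=
  Nat.card {P : Overpartition n // P.rank = m}

/-- `nbar a c n` is the number of overpartitions of `n` with rank congruent to `a` mod `c`. -/
noncomputable def nbar (a : ℤ) (c : ℕ) (n : ℕ) : ℕ :=
  Nat.card {P : Overpartition n // P.rank ≡ a [ZMOD (c : ℤ)]}

/-- `pbar n` is the number of overpartitions of `n`. -/
noncomputable def pbar (n : ℕ) : ℕ := Nat.card (Overpartition n)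

section Alg

variable {R : Type*} [CommRing R]

/-- `(q;q)_k`. -/
def ovP (q : R) (k : ℕ) : R := ∏ i ∈ Finset.range k, (1 - q ^ (i + 1))

/-- Inverse of `(q;q)_k`. -/
def ovI (ge : ℕ → R) (k : ℕ) : R := ∏ i ∈ Finset.range k, ge (i + 1)

/-- The sequence `γ_r`. -/
def ovGam (q : R) : ℕ → R
  | 0 => 0
  | r + 1 => q ^ (2 * r) * ovGam q r - (-1) ^ r * (1 - q ^ r) ^ 2

/-- The sequence `α_r`. -/
def ovAl (q : R) (r : ℕ) : R := ovGam q r - ovGam q (r + 1)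

/-- `1/((q)_{m-r} (q)_{m+r})`. -/
def ovE (ge : ℕ → R) (m r : ℕ) : R := if r ≤ m then ovI ge (m - r) * ovI ge (m + r) else 0

/-- `B_m`. -/
def ovB (q : R) (ge : ℕ → R) (m : ℕ) : R :=
  ∑ r ∈ Finset.range (m + 1), ovAl q r * ovE ge m r

theorem ovP_succ (q : R) (k : ℕ) : ovP q (k + 1) = ovP q k * (1 - q ^ (k + 1)) := by
  simp [ovP, Finset.prod_range_succ]

theorem ovI_succ (ge : ℕ → R) (k : ℕ) : ovI ge (k + 1) = ovI ge k * ge (k + 1) := by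
  simp [ovI, Finset.prod_range_succ]

theorem ovP_mul_ovI (q : R) (ge : ℕ → R) (hge : ∀ k, (1 - q ^ (k + 1)) * ge (k + 1) = 1) (k : ℕ) :
    ovP q k * ovI ge k = 1 := by
  rw [ovP, ovI, ← Finset.prod_mul_distrib]
  exact Finset.prod_eq_one fun i _ => hge i

theorem ovE_step (q : R) (ge : ℕ → R) (hge : ∀ k, (1 - q ^ (k + 1)) * ge (k + 1) = 1)
    (i r : ℕ) : ovE ge (r + i) (r + 1) * (1 - q ^ (r + i + r + 1))
      = ovE ge (r + i) r * (1 - q ^ i) := by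
  unfold ovE
  rcases i with _ | i
  · simp
  · rw [if_pos (by omega), if_pos (by omega)]
    have h1 : r + (i + 1) - (r + 1) = i := by omega
    have h2 : r + (i + 1) - r = i + 1 := by omega
    have h3 : r + (i + 1) + (r + 1) = (r + (i + 1) + r) + 1 := by omega
    rw [h1, h2, h3, ovI_succ, ovI_succ]
    linear_combination (ovI ge i * ovI ge (r + (i + 1) + r)) * hge (r + (i + 1) + r)
      - (ovI ge i * ovI ge (r + (i + 1) + r)) * hge i

theorem ovE_up (q : R) (ge : ℕ → R) (hge : ∀ k, (1 - q ^ (k + 1)) * ge (k + 1) = 1)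
    (i r m : ℕ) (hm : m + 1 = r + i) :
    ovE ge m r = (1 - q ^ i) * (1 - q ^ (m + 1 + r)) * ovE ge (m + 1) r := by
  unfold ovE
  rcases i with _ | i
  · rw [if_neg (by omega)]; simp
  · rw [if_pos (by omega), if_pos (by omega)]
    have h1 : m + 1 - r = i + 1 := by omega
    have h2 : m - r = i := by omega
    have h3 : m + 1 + r = (m + r) + 1 := by omega
    rw [h1, h2, h3, ovI_succ, ovI_succ]
    linear_combination (-(ovI ge i * ovI ge (m + r))) * hge i
      - (ovI ge i * ovI ge (m + r)) * ((1 - q ^ (i + 1)) * ge (i + 1)) * hge (m + r)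

/-- Certificate for creative telescoping (times `q`). -/
def ovG (q : R) (ge : ℕ → R) (m r : ℕ) : R :=
  ovE ge (m + 1) r * (1 - q ^ (m + 1 + r)) *
    (q * (q ^ (m + 1 - r) - 2 - q ^ (m + 1) + q ^ m + q ^ (m + r)) * ovGam q r -
      q ^ (m + 1 - r) * (q ^ r - 1) * (q ^ r - q) * (-1) ^ r)

theorem ovG_tele (q : R) (ge : ℕ → R) (hge : ∀ k, (1 - q ^ (k + 1)) * ge (k + 1) = 1)
    (m r : ℕ) (hr : r ≤ m) :
    q * ((1 - q ^ m) * (1 + q ^ (m + 1)) * (ovAl q r * ovE ge (m + 1) r)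
      + ovAl q r * ovE ge m r) = ovG q ge m (r + 1) - ovG q ge m r := by
  obtain ⟨i, rfl⟩ := Nat.exists_eq_add_of_le hr
  have h1 := ovE_step q ge hge (i + 1) r
  have h2 := ovE_up q ge hge (i + 1) r (r + i) (by omega)
  have e1 : r + i + 1 - (r + 1) = i := by omega
  have e2 : r + i + 1 - r = i + 1 := by omega
  have e3 : ovGam q (r + 1) = q ^ (2 * r) * ovGam q r - (-1) ^ r * (1 - q ^ r) ^ 2 := rfl
  unfold ovG
  rw [h2, e1, e2, show r + i + 1 + (r + 1) = r + (i + 1) + r + 1 by ring]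
  rw [show r + i + 1 = r + (i + 1) by ring] at *
  rw [h1]
  unfold ovAl
  rw [e3]
  ring

theorem ovG_last (q : R) (ge : ℕ → R) (m : ℕ) :
    q * ((1 - q ^ m) * (1 + q ^ (m + 1)) * (ovAl q (m + 1) * ovE ge (m + 1) (m + 1)))
      = - ovG q ge m (m + 1) := by
  have e3 : ovGam q (m + 1 + 1) = q ^ (2 * (m + 1)) * ovGam q (m + 1)
    - (-1) ^ (m + 1) * (1 - q ^ (m + 1)) ^ 2 := rfl
  unfold ovG ovAl
  rw [e3, Nat.sub_self]
  ring

theorem ovB_rec [IsDomain R] (q : R) (hq : q ≠ 0) (ge : ℕ → R)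
    (hge : ∀ k, (1 - q ^ (k + 1)) * ge (k + 1) = 1) (m : ℕ) :
    (1 - q ^ m) * (1 + q ^ (m + 1)) * ovB q ge (m + 1) + ovB q ge m = 0 := by
  apply mul_left_cancel₀ hq
  have h0 : ovG q ge m 0 = 0 := by simp [ovG, ovGam]
  have hs : ∑ r ∈ Finset.range (m + 1), (ovG q ge m (r + 1) - ovG q ge m r)
      = ovG q ge m (m + 1) - ovG q ge m 0 := Finset.sum_range_sub _ _
  have hs2 : ∑ r ∈ Finset.range (m + 1), (ovG q ge m (r + 1) - ovG q ge m r)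
      = ∑ r ∈ Finset.range (m + 1), q * ((1 - q ^ m) * (1 + q ^ (m + 1)) *
        (ovAl q r * ovE ge (m + 1) r) + ovAl q r * ovE ge m r) := by
    refine Finset.sum_congr rfl fun r hr => ?_
    rw [ovG_tele q ge hge m r (by simpa [Nat.lt_succ_iff] using hr)]
  rw [hs2, ← Finset.mul_sum, Finset.sum_add_distrib, ← Finset.mul_sum] at hs
  have hl := ovG_last q ge m
  unfold ovB
  rw [Finset.sum_range_succ _ (m + 1)]
  linear_combination hs + hl - h0

/-- partial sums -/
theorem ovS_step (q : R) (ge c : ℕ → R)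
    (hge : ∀ k, (1 - q ^ (k + 1)) * ge (k + 1) = 1)
    (hc : ∀ r, c r * (1 - q ^ r) ^ 2 = q ^ r * ovAl q r) (N : ℕ) :
    ∑ r ∈ Finset.range (N + 2), c r * (ovP q (N + 1) ^ 2 * ovE ge (N + 1) r)
      = ∑ r ∈ Finset.range (N + 1), c r * (ovP q N ^ 2 * ovE ge N r)
        + ovP q N ^ 2 * q ^ (N + 1) * ovB q ge (N + 1) := by
  have hz : ∑ r ∈ Finset.range (N + 1), c r * (ovP q N ^ 2 * ovE ge N r)
      = ∑ r ∈ Finset.range (N + 2), c r * (ovP q N ^ 2 * ovE ge N r) := by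
    rw [Finset.sum_range_succ _ (N + 1)]
    simp [ovE]
  rw [hz, ovB, Finset.mul_sum, ← Finset.sum_add_distrib]
  refine Finset.sum_congr rfl fun r hr => ?_
  obtain ⟨i, hi⟩ := Nat.exists_eq_add_of_le (show r ≤ N + 1 by
    have := Finset.mem_range.1 hr; omega)
  rw [ovE_up q ge hge i r N hi, ovP_succ]
  have hc := hc r
  rw [hi]
  have : q ^ (r + i) = q ^ r * q ^ i := pow_add _ _ _
  rw [show r + i + r = r + r + i by ring, pow_add, pow_add, pow_add]
  linear_combination (ovP q N ^ 2 * ovE ge (r + i) r * q ^ i) * hc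

theorem ov_main_alg [IsDomain R] (q : R) (hq : q ≠ 0) (ge c T : ℕ → R)
    (hge : ∀ k, (1 - q ^ (k + 1)) * ge (k + 1) = 1)
    (hp : ∀ k, 1 + q ^ (k + 1) ≠ 0)
    (hc : ∀ r, c r * (1 - q ^ r) ^ 2 = q ^ r * ovAl q r)
    (hc0 : c 0 = 0) (hT0 : T 0 = 1)
    (hT : ∀ m, (1 + q ^ (m + 1)) * T (m + 1) = (1 - q ^ (m + 1)) * T m) (N : ℕ) :
    ∑ m ∈ Finset.range N, (-1) ^ (m + 1) * (T (m + 1) - T m)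
      = -2 * ∑ r ∈ Finset.range (N + 1), c r * (ovP q N ^ 2 * ovE ge N r) := by
  have hn : ∀ k, 1 - q ^ (k + 1) ≠ 0 := fun k h => by
    have := hge k; rw [h] at this; simp at this
  have key : ∀ m, (-1) ^ (m + 1) * (T (m + 1) - T m)
      = -2 * (ovP q m ^ 2 * q ^ (m + 1) * ovB q ge (m + 1)) := by
    intro m
    induction m with
    | zero =>
      have h := hT 0
      rw [hT0] at h
      have hg1 := hge 0
      have hg2 := hge 1
      apply mul_left_cancel₀ (hp 0)
      apply mul_left_cancel₀ (hn 0)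
      simp only [zero_add, pow_one] at *
      have hB1 : ovB q ge 1 = -(1 - q) ^ 2 * (ge 1 * ge 2) := by
        simp [ovB, Finset.sum_range_succ, ovAl, ovGam, ovE, ovI, Finset.prod_range_succ]
      have hP0 : ovP q 0 = 1 := by simp [ovP]
      rw [hT0, hB1, hP0]
      linear_combination (-(1 - q)) * h + (-2 * q * (1 - q)) * ((1 - q ^ 2) * ge 2 * hg1 + hg2)
    | succ m ih =>
      have hB := ovB_rec q hq ge hge (m + 1)
      have h1 := hT m
      have h2 := hT (m + 1)
      apply mul_left_cancel₀ (hp (m + 1))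
      rw [ovP_succ]
      have hV : (1 + q ^ (m + 1 + 1)) * (T (m + 1 + 1) - T (m + 1))
          = q * (1 - q ^ (m + 1)) * (T (m + 1) - T m) := by
        linear_combination h2 - q * h1
      have : (-1 : R) ^ (m + 1 + 1) = - (-1) ^ (m + 1) := by ring
      rw [this]
      linear_combination (-(-1) ^ (m + 1)) * hV - q * (1 - q ^ (m + 1)) * ih
        + (2 * ovP q m ^ 2 * (1 - q ^ (m + 1)) * q ^ (m + 2)) * hB
  induction N with
  | zero =>
    simp [hc0]
  | succ N ih =>
    rw [Finset.sum_range_succ, ih, key, ovS_step q ge c hge hc N]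
    ring

end Alg
section PS

open PowerSeries

theorem ov_dvd_sub {k n : ℕ} (h : k ≤ n) : k ∣ n - k ↔ k ∣ n := by
  obtain ⟨b, rfl⟩ := Nat.exists_eq_add_of_le h
  rw [Nat.add_sub_cancel_left, Nat.dvd_add_right (dvd_refl k)]

/-- Geometric series `1/(1 - X^r)`. -/
noncomputable def ovGeo (r : ℕ) : ℤ⟦X⟧ := PowerSeries.mk fun n => if r ∣ n then 1 else 0

theorem ovGeo_mul (k : ℕ) : (1 - (X : ℤ⟦X⟧) ^ (k + 1)) * ovGeo (k + 1) = 1 := by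
  ext n
  rw [sub_mul, one_mul, map_sub, coeff_X_pow_mul', coeff_one]
  simp only [ovGeo, coeff_mk]
  by_cases h : k + 1 ≤ n
  · rw [if_pos h, if_neg (by omega : n ≠ 0)]
    have : k + 1 ∣ n - (k + 1) ↔ k + 1 ∣ n := ov_dvd_sub h
    simp [this]
  · rw [if_neg h]
    by_cases h0 : n = 0
    · simp [h0]
    · have : ¬ (k + 1 ∣ n) := fun hd => h (Nat.le_of_dvd (by omega) hd)
      simp [this, h0]

/-- The terms `C_r`. -/
noncomputable def ovC (r : ℕ) : ℤ⟦X⟧ :=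
  if r = 0 then 0 else X ^ r * ovGam X r * (1 + X ^ r) * ovGeo r + (-1) ^ r * X ^ r

theorem ovC_spec (r : ℕ) : ovC r * (1 - X ^ r) ^ 2 = X ^ r * ovAl X r := by
  rcases r with _ | r
  · simp [ovC, ovAl, ovGam]
  · have h := ovGeo_mul r
    have e3 : ovGam (X : ℤ⟦X⟧) (r + 1 + 1) = X ^ (2 * (r + 1)) * ovGam X (r + 1)
      - (-1) ^ (r + 1) * (1 - X ^ (r + 1)) ^ 2 := rfl
    rw [ovC, if_neg (by omega), ovAl, e3]
    have : (X : ℤ⟦X⟧) ^ (2 * (r + 1)) = (X ^ (r + 1)) ^ 2 := by ring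
    rw [this]
    linear_combination (X ^ (r + 1) * ovGam X (r + 1) * (1 + X ^ (r + 1)) * (1 - X ^ (r + 1))) * h

theorem ovC_dvd (r : ℕ) : (X : ℤ⟦X⟧) ^ r ∣ ovC r := by
  unfold ovC
  split_ifs with h
  · exact dvd_zero _
  · exact dvd_add (Dvd.intro _ (by rw [← mul_assoc, ← mul_assoc])) (Dvd.intro_left _ rfl)

theorem ovP_dvd (a d : ℕ) : (X : ℤ⟦X⟧) ^ (a + 1) ∣ ovP X (a + d) - ovP X a := by
  induction d with
  | zero => simp
  | succ d ih =>
    rw [← add_assoc, ovP_succ]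
    have : ovP (X : ℤ⟦X⟧) (a + d) * (1 - X ^ (a + d + 1)) - ovP X a
      = (ovP X (a + d) - ovP X a) - X ^ (a + 1) * (X ^ d * ovP X (a + d)) := by ring
    rw [this]
    exact dvd_sub ih (Dvd.intro _ rfl)

theorem ovE_dvd (r i : ℕ) :
    (X : ℤ⟦X⟧) ^ (i + 1) ∣ ovP X (r + i) ^ 2 * ovE ovGeo (r + i) r - 1 := by
  rw [ovE, if_pos (by omega), show r + i - r = i by omega]
  have h1 := ovP_mul_ovI (X : ℤ⟦X⟧) ovGeo ovGeo_mul i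
  have h2 := ovP_mul_ovI (X : ℤ⟦X⟧) ovGeo ovGeo_mul (r + i + r)
  obtain ⟨a, ha⟩ := ovP_dvd i r
  obtain ⟨b, hb⟩ := ovP_dvd (r + i) r
  rw [add_comm i r] at ha
  refine ⟨(a * ovP X (r + i) - ovP X i * (X ^ r * b)) *
    (ovI ovGeo i * ovI ovGeo (r + i + r)), ?_⟩
  have hb' : ovP (X : ℤ⟦X⟧) (r + i + r) - ovP X (r + i) = X ^ (i + 1) * (X ^ r * b) := by
    rw [hb]; ring
  linear_combination (ovP X (r + i) * (ovI ovGeo i * ovI ovGeo (r + i + r))) * ha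
    - (ovP X i * (ovI ovGeo i * ovI ovGeo (r + i + r))) * hb'
    + (ovP X (r + i + r) * ovI ovGeo (r + i + r)) * h1 + h2

theorem ov_coeff_S (n : ℕ) :
    coeff n (∑ r ∈ Finset.range (n + 1), ovC r * (ovP X n ^ 2 * ovE ovGeo n r))
      = coeff n (∑ r ∈ Finset.range (n + 1), ovC r) := by
  rw [← sub_eq_zero, ← map_sub, ← Finset.sum_sub_distrib]
  have : (X : ℤ⟦X⟧) ^ (n + 1) ∣
      ∑ r ∈ Finset.range (n + 1), (ovC r * (ovP X n ^ 2 * ovE ovGeo n r) - ovC r) := by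
    refine Finset.dvd_sum fun r hr => ?_
    obtain ⟨i, rfl⟩ := Nat.exists_eq_add_of_le (show r ≤ n by
      have := Finset.mem_range.1 hr; omega)
    have h := mul_dvd_mul (ovC_dvd r) (ovE_dvd r i)
    rw [← pow_add, mul_sub, mul_one] at h
    exact h
  exact (X_pow_dvd_iff.1 this) n (by omega)

theorem ovGam_closed (r : ℕ) : (X : ℤ⟦X⟧) ^ (r + 1) * ovGam X (r + 1) =
    ∑ i ∈ Finset.range (2 * r + 1), (-1) ^ (i + r) * X ^ ((i + 1) * (2 * r + 1 - i))
      + (-1) ^ (r + 1) * X ^ (r + 1) := by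
  induction r with
  | zero => simp [ovGam]
  | succ r ih =>
    have e3 : ovGam (X : ℤ⟦X⟧) (r + 1 + 1) = X ^ (2 * (r + 1)) * ovGam X (r + 1)
      - (-1) ^ (r + 1) * (1 - X ^ (r + 1)) ^ 2 := rfl
    have hs : ∑ i ∈ Finset.range (2 * (r + 1) + 1),
        (-1) ^ (i + (r + 1)) * (X : ℤ⟦X⟧) ^ ((i + 1) * (2 * (r + 1) + 1 - i))
        = X ^ (2 * r + 3) * (∑ i ∈ Finset.range (2 * r + 1),
          (-1) ^ (i + r) * X ^ ((i + 1) * (2 * r + 1 - i))) + 2 * (-1) ^ (r + 1) * X ^ (2 * r + 3) := by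
      rw [show 2 * (r + 1) + 1 = (2 * r + 1) + 1 + 1 by ring, Finset.sum_range_succ,
        Finset.sum_range_succ', Finset.mul_sum]
      have h1 : ∀ i ∈ Finset.range (2 * r + 1), (-1) ^ (i + 1 + (r + 1)) *
          (X : ℤ⟦X⟧) ^ ((i + 1 + 1) * (2 * r + 1 + 1 + 1 - (i + 1)))
          = X ^ (2 * r + 3) * ((-1) ^ (i + r) * X ^ ((i + 1) * (2 * r + 1 - i))) := by
        intro i hi
        obtain ⟨d, hd⟩ := Nat.exists_eq_add_of_le (show i ≤ 2 * r + 1 by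
          have := Finset.mem_range.1 hi; omega)
        have a1 : 2 * r + 1 - i = d := by omega
        have a2 : 2 * r + 1 + 1 + 1 - (i + 1) = d + 1 := by omega
        have a3 : (i + 1 + 1) * (d + 1) = (2 * r + 3) + (i + 1) * d := by
          rw [show 2 * r + 3 = i + d + 2 by omega]; ring
        rw [a1, a2, a3]
        ring
      rw [Finset.sum_congr rfl h1]
      have a4 : 2 * r + 1 + 1 + 1 - (2 * r + 1 + 1) = 1 := by omega
      rw [a4]
      have a5 : (-1 : ℤ⟦X⟧) ^ (2 * r + 1 + 1 + (r + 1)) = (-1) ^ (r + 1) := by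
        rw [show 2 * r + 1 + 1 + (r + 1) = 2 * (r + 1) + (r + 1) by ring, pow_add, pow_mul]; simp
      rw [a5]
      simp only [zero_add, Nat.sub_zero, one_mul, mul_one]
      rw [show 2 * r + 1 + 1 + 1 = 2 * r + 3 by ring]
      ring
    rw [e3, hs]
    linear_combination X ^ (2 * r + 3) * ih

/-- The index set. -/
def ovOm (n : ℕ) : Finset (ℕ × ℕ × ℕ) :=
  (Finset.range (n + 1) ×ˢ Finset.range (2 * n + 2) ×ˢ Finset.range (n + 1)).filter
    fun x => 0 < x.2.1 ∧ x.2.1 < 2 * x.1 ∧ x.2.1 * (2 * x.1 - x.2.1) + x.1 * x.2.2 = n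

theorem ov_coeff_term (n r a : ℕ) : coeff n ((X : ℤ⟦X⟧) ^ a * (2 * ovGeo (r + 1) - 1))
    = ∑ k ∈ Finset.range (n + 1), if a + (r + 1) * k = n then (if k = 0 then 1 else 2) else 0 := by
  rw [coeff_X_pow_mul']
  split_ifs with h
  · obtain ⟨b, rfl⟩ := Nat.exists_eq_add_of_le h
    rw [show a + b - a = b by omega, show (2 : ℤ⟦X⟧) = C 2 from (map_ofNat C 2).symm, map_sub,
      coeff_C_mul, coeff_one]
    simp only [ovGeo, coeff_mk, add_right_inj]
    by_cases hd : r + 1 ∣ b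
    · obtain ⟨c, rfl⟩ := hd
      rw [Finset.sum_eq_single c]
      · by_cases hc : c = 0 <;> simp [hc]
      · intro k _ hk
        rw [if_neg]
        intro hh
        exact hk (Nat.eq_of_mul_eq_mul_left (by omega) hh)
      · intro hc
        exfalso; apply hc
        rw [Finset.mem_range]
        nlinarith
    · rw [Finset.sum_eq_zero]
      · have : b ≠ 0 := fun h0 => hd (by simp [h0])
        simp [hd, this]
      · intro k _
        rw [if_neg]
        rintro rfl
        exact hd (Dvd.intro _ rfl)
  · rw [Finset.sum_eq_zero]
    intro k _
    rw [if_neg]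
    omega

theorem ov_coeff_C (n r : ℕ) (hn : 1 ≤ n) : coeff n (ovC (r + 1)) =
    2 * (if r + 1 ∣ n then (-1) ^ (r + 1) else 0) +
    ∑ i ∈ Finset.range (2 * r + 1), ∑ k ∈ Finset.range (n + 1),
      if (i + 1) * (2 * r + 1 - i) + (r + 1) * k = n then
        (-1) ^ (i + r) * (if k = 0 then 1 else 2) else 0 := by
  have h := ovGeo_mul r
  have hC : ovC (r + 1) = C (2 * (-1) ^ (r + 1)) * (X ^ (r + 1) * ovGeo (r + 1)) +
      ∑ i ∈ Finset.range (2 * r + 1), C ((-1) ^ (i + r)) *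
        (X ^ ((i + 1) * (2 * r + 1 - i)) * (2 * ovGeo (r + 1) - 1)) := by
    rw [ovC, if_neg (by omega), ovGam_closed]
    have : ∑ i ∈ Finset.range (2 * r + 1), C ((-1 : ℤ) ^ (i + r)) *
        (X ^ ((i + 1) * (2 * r + 1 - i)) * (2 * ovGeo (r + 1) - 1))
        = (∑ i ∈ Finset.range (2 * r + 1), (-1) ^ (i + r) * X ^ ((i + 1) * (2 * r + 1 - i)))
          * (2 * ovGeo (r + 1) - 1) := by
      rw [Finset.sum_mul]
      refine Finset.sum_congr rfl fun i _ => ?_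
      simp only [map_pow, map_neg, map_one]
      ring
    rw [this]
    simp only [map_mul, map_pow, map_neg, map_one, map_ofNat]
    linear_combination (-(∑ i ∈ Finset.range (2 * r + 1), (-1) ^ (i + r) *
      X ^ ((i + 1) * (2 * r + 1 - i))) - (-1) ^ (r + 1) * X ^ (r + 1)) * h
  rw [hC, map_add, map_sum, coeff_C_mul, coeff_X_pow_mul']
  congr 1
  · simp only [ovGeo, coeff_mk]
    by_cases hd : r + 1 ∣ n
    · have hle := Nat.le_of_dvd hn hd
      rw [if_pos hle, if_pos ((ov_dvd_sub hle).2 hd), if_pos hd]; ring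
    · rw [if_neg hd]
      split_ifs with h1 h2
      · exact absurd ((ov_dvd_sub h1).1 h2) hd
      · simp
      · simp
  · refine Finset.sum_congr rfl fun i _ => ?_
    rw [coeff_C_mul, ov_coeff_term, Finset.mul_sum]
    refine Finset.sum_congr rfl fun k _ => ?_
    rw [mul_ite, mul_zero]

theorem ov_coeff_total (n : ℕ) (hn : 1 ≤ n) :
    (-1) ^ n * coeff n (∑ r ∈ Finset.range (n + 1), ovC r) =
    2 * ∑ r ∈ n.divisors, (-1 : ℤ) ^ (n + r) +
    ∑ x ∈ ovOm n, (-1 : ℤ) ^ (n + x.1 + x.2.1) * (if x.2.2 = 0 then 1 else 2) := by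
  have h0 : ovC 0 = 0 := by simp [ovC]
  rw [Finset.sum_range_succ', h0, add_zero, map_sum,
    Finset.sum_congr rfl (fun r _ => ov_coeff_C n r hn), Finset.sum_add_distrib, mul_add]
  congr 1
  · rw [← Finset.mul_sum, mul_left_comm, Finset.mul_sum]
    congr 1
    rw [Nat.divisors, Finset.sum_filter, Finset.sum_Ico_eq_sum_range]
    refine Finset.sum_congr (by simp) fun r _ => ?_
    rw [add_comm 1 r]
    split_ifs <;> ring
  · rw [ovOm, Finset.sum_filter, Finset.sum_product, Finset.sum_range_succ', Finset.mul_sum]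
    rw [Finset.sum_eq_zero (s := Finset.range (2 * n + 2) ×ˢ Finset.range (n + 1)), add_zero]
    · refine Finset.sum_congr rfl fun r hr => ?_
      have hr := Finset.mem_range.1 hr
      rw [Finset.sum_product, Finset.sum_range_succ' _ (2 * n + 1), Finset.mul_sum]
      simp only [lt_self_iff_false, false_and, if_false, Finset.sum_const_zero, add_zero]
      rw [← Finset.sum_subset (s₁ := Finset.range (2 * r + 1)) (s₂ := Finset.range (2 * n + 1))]
      · refine Finset.sum_congr rfl fun i hi => ?_
        have hi := Finset.mem_range.1 hi
        rw [Finset.mul_sum]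
        refine Finset.sum_congr rfl fun k _ => ?_
        have e1 : 2 * (r + 1) - (i + 1) = 2 * r + 1 - i := by omega
        have e2 : 0 < i + 1 ∧ i + 1 < 2 * (r + 1) := by omega
        simp only [e1, e2, true_and]
        rw [mul_ite, mul_zero]
        split_ifs <;> ring
      · intro i hi
        have := Finset.mem_range.1 hi
        simp; omega
      · intro i _ hi
        refine Finset.sum_eq_zero fun k _ => ?_
        rw [if_neg]
        have : ¬ i < 2 * r + 1 := by simpa using hi
        rintro ⟨_, h, _⟩
        omega
    · intro x _
      simp

end PS
section Pos

theorem ov_mem_Om (n r u k : ℕ) : (r, u, k) ∈ ovOm n ↔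
    ∃ v, u + v = 2 * r ∧ 0 < u ∧ 0 < v ∧ u * v + r * k = n := by
  simp only [ovOm, Finset.mem_filter, Finset.mem_product, Finset.mem_range]
  constructor
  · rintro ⟨_, h1, h2, h3⟩
    exact ⟨2 * r - u, by omega, h1, by omega, h3⟩
  · rintro ⟨v, h1, h2, h3, h4⟩
    have e : 2 * r - u = v := by omega
    have a1 : u + v ≤ u * v + 1 := by nlinarith
    have a2 : u ≤ u * v := Nat.le_mul_of_pos_right u h3
    have a3 : k ≤ r * k := Nat.le_mul_of_pos_left k (by omega)
    refine ⟨⟨by omega, by omega, by omega⟩, h2, by omega, ?_⟩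
    rw [e, h4]

/-- Negative terms with `k ≥ 1`. -/
def ovPm (n : ℕ) := (ovOm n).filter fun x => x.2.2 ≠ 0 ∧ (x.1 % 2 = 1 ∧ x.2.2 % 2 = 0)
/-- Positive terms with `k ≥ 1`. -/
def ovPp (n : ℕ) := (ovOm n).filter fun x => x.2.2 ≠ 0 ∧ ¬ (x.1 % 2 = 1 ∧ x.2.2 % 2 = 0)
/-- Negative terms with `k = 0`. -/
def ovZm (n : ℕ) := (ovOm n).filter fun x => x.2.2 = 0 ∧ x.1 % 2 = 1
/-- Positive terms with `k = 0`. -/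
def ovZp (n : ℕ) := (ovOm n).filter fun x => x.2.2 = 0 ∧ x.1 % 2 = 0

theorem ov_sign (n r u v k : ℕ) (h : u + v = 2 * r) (h2 : u * v + r * k = n) :
    (n + r + u) % 2 = if r % 2 = 1 ∧ k % 2 = 0 then 1 else 0 := by
  subst h2
  have e1 : u % 2 = v % 2 := by omega
  rw [Nat.add_mod, Nat.add_mod (u * v + r * k), Nat.add_mod (u * v), Nat.mul_mod u, Nat.mul_mod r,
    ← e1]
  rcases Nat.mod_two_eq_zero_or_one u with a | a <;>
  rcases Nat.mod_two_eq_zero_or_one r with b | b <;>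
  rcases Nat.mod_two_eq_zero_or_one k with c | c <;> simp [a, b, c]

theorem ov_sum_split (n : ℕ) :
    ∑ x ∈ ovOm n, (-1 : ℤ) ^ (n + x.1 + x.2.1) * (if x.2.2 = 0 then 1 else 2) =
    2 * (ovPp n).card - 2 * (ovPm n).card + (ovZp n).card - (ovZm n).card := by
  simp only [ovPp, ovPm, ovZp, ovZm, Finset.card_filter]
  push_cast
  rw [Finset.mul_sum, Finset.mul_sum, ← Finset.sum_sub_distrib, ← Finset.sum_add_distrib,
    ← Finset.sum_sub_distrib]
  refine Finset.sum_congr rfl ?_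
  rintro ⟨r, u, k⟩ hx
  obtain ⟨v, h1, h2, h3, h4⟩ := (ov_mem_Om n r u k).1 hx
  have hs := ov_sign n r u v k h1 h4
  dsimp only
  rw [neg_one_pow_eq_pow_mod_two, hs]
  rcases Nat.mod_two_eq_zero_or_one r with b | b <;>
  rcases Nat.mod_two_eq_zero_or_one k with c | c <;>
  by_cases hk : k = 0 <;> simp_all

theorem ov_phi_mem (n u v l : ℕ) (hu : 0 < u) (hv : 0 < v) (hl : 0 < l)
    (h : u * v + l * (u + v) = n) :
    (min u l + v, min u l, (u - l) + (l - u)) ∈ ovOm n := by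
  rw [ov_mem_Om]
  refine ⟨min u l + 2 * v, by ring, by omega, by omega, ?_⟩
  subst h
  rcases le_total u l with h | h
  · obtain ⟨d, rfl⟩ := Nat.exists_eq_add_of_le h
    rw [min_eq_left h, show u - (u + d) + (u + d - u) = d by omega]; ring
  · obtain ⟨d, rfl⟩ := Nat.exists_eq_add_of_le h
    rw [min_eq_right h, show l + d - l + (l - (l + d)) = d by omega]; ring

theorem ov_swap_mem {n r u k : ℕ} (h : (r, u, k) ∈ ovOm n) : (r, 2 * r - u, k) ∈ ovOm n := by
  rw [ov_mem_Om] at h ⊢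
  obtain ⟨v, h1, h2, h3, h4⟩ := h
  refine ⟨u, by omega, by omega, h2, ?_⟩
  rw [show 2 * r - u = v by omega, mul_comm v u, h4]

theorem ov_par (n r u v l : ℕ) (h : u + v = 2 * r) (hr : r % 2 = 1)
    (h2 : u * v + r * (2 * l) = n) :
    (u % 2 = 1 ∧ n % 4 = (1 + 2 * l) % 4) ∨ (u % 2 = 0 ∧ n % 4 = (2 * l) % 4) := by
  have e : n % 4 = ((u % 4) * (v % 4) + (r % 4) * ((2 * l) % 4)) % 4 := by
    rw [← h2, Nat.add_mod, Nat.mul_mod u, Nat.mul_mod r]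
    simp [Nat.add_mod]
  have hr4 : r % 4 = 1 ∨ r % 4 = 3 := by omega
  have hl4 : (2 * l) % 4 = 0 ∨ (2 * l) % 4 = 2 := by omega
  have hu4 : (u % 4 = 0 ∧ v % 4 = 2) ∨ (u % 4 = 1 ∧ v % 4 = 1) ∨ (u % 4 = 2 ∧ v % 4 = 0) ∨
    (u % 4 = 3 ∧ v % 4 = 3) := by omega
  rcases hr4 with a | a <;> rcases hl4 with b | b <;>
  rcases hu4 with ⟨c, d⟩ | ⟨c, d⟩ | ⟨c, d⟩ | ⟨c, d⟩ <;> rw [a, b, c, d] at e <;> omega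

/-- Unpacking membership in `ovPm`. -/
theorem ov_mem_Pm {n r u k : ℕ} (h : (r, u, k) ∈ ovPm n) : ∃ v l, v = 2 * r - u ∧ l = k / 2 ∧
    u + v = 2 * r ∧ k = 2 * l ∧ r % 2 = 1 ∧ 0 < u ∧ 0 < v ∧ 0 < l ∧
    u * v + l * (u + v) = n ∧
    ((u % 2 = 1 ∧ n % 4 = (1 + 2 * l) % 4) ∨ (u % 2 = 0 ∧ n % 4 = (2 * l) % 4)) := by
  simp only [ovPm, Finset.mem_filter] at h
  obtain ⟨h0, hk, hr, hk2⟩ := h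
  obtain ⟨v, h1, h2, h3, h4⟩ := (ov_mem_Om n r u k).1 h0
  obtain ⟨l, rfl⟩ : ∃ l, k = 2 * l := ⟨k / 2, by omega⟩
  refine ⟨v, l, by omega, by omega, h1, rfl, hr, h2, h3, by omega, ?_, ov_par n r u v l h1 hr h4⟩
  rw [h1, ← h4]; ring

/-- The core map, in terms of `(r,u,k)`. -/
def ovPhi (x : ℕ × ℕ × ℕ) : ℕ × ℕ × ℕ :=
  (min x.2.1 (x.2.2 / 2) + (2 * x.1 - x.2.1), min x.2.1 (x.2.2 / 2),
    (x.2.1 - x.2.2 / 2) + (x.2.2 / 2 - x.2.1))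

theorem ov_le_one (n : ℕ) (hn : n % 4 = 1) : (ovPm n).card ≤ (ovPp n).card := by
  refine Finset.card_le_card_of_injOn ovPhi ?_ ?_
  · rintro ⟨r, u, k⟩ hx
    obtain ⟨v, l, e1, e2, h1, h2, h3, h4, h5, h6, h7, h8⟩ := ov_mem_Pm hx
    simp only [ovPhi, ← e1, ← e2, ovPp, Finset.coe_filter, Set.mem_ofPred_eq]
    exact ⟨ov_phi_mem n u v l h4 h5 h6 h7, by omega, by omega⟩
  · rintro ⟨r, u, k⟩ hx ⟨r', u', k'⟩ hx' heq
    obtain ⟨v, l, e1, e2, h1, h2, h3, h4, h5, h6, h7, h8⟩ := ov_mem_Pm hx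
    obtain ⟨v', l', e1', e2', h1', h2', h3', h4', h5', h6', h7', h8'⟩ := ov_mem_Pm hx'
    simp only [ovPhi, ← e1, ← e2, ← e1', ← e2', Prod.mk.injEq] at heq ⊢
    omega

theorem ov_lt_two (n : ℕ) (hn : n % 4 = 2) : (ovPm n).card < (ovPp n).card := by
  have hm : (1, 1, n - 1) ∈ ovPp n := by
    simp only [ovPp, Finset.mem_filter]
    refine ⟨(ov_mem_Om _ _ _ _).2 ⟨1, by omega, by omega, by omega, by omega⟩, by omega, by omega⟩
  have : (ovPm n).card ≤ ((ovPp n).erase (1, 1, n - 1)).card := by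
    refine Finset.card_le_card_of_injOn ovPhi ?_ ?_
    · rintro ⟨r, u, k⟩ hx
      obtain ⟨v, l, e1, e2, h1, h2, h3, h4, h5, h6, h7, h8⟩ := ov_mem_Pm hx
      simp only [ovPhi, ← e1, ← e2, ovPp, Finset.coe_erase, Set.mem_sdiff, Finset.coe_filter,
        Set.mem_ofPred_eq, Set.mem_singleton_iff, Prod.mk.injEq]
      exact ⟨⟨ov_phi_mem n u v l h4 h5 h6 h7, by omega, by omega⟩, by omega⟩
    · rintro ⟨r, u, k⟩ hx ⟨r', u', k'⟩ hx' heq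
      obtain ⟨v, l, e1, e2, h1, h2, h3, h4, h5, h6, h7, h8⟩ := ov_mem_Pm hx
      obtain ⟨v', l', e1', e2', h1', h2', h3', h4', h5', h6', h7', h8'⟩ := ov_mem_Pm hx'
      simp only [ovPhi, ← e1, ← e2, ← e1', ← e2', Prod.mk.injEq] at heq ⊢
      omega
  exact lt_of_le_of_lt this (Finset.card_erase_lt_of_mem hm)

/-- The map for `n ≡ 3 mod 4`. -/
def ovPhi3 (x : ℕ × ℕ × ℕ) : ℕ × ℕ × ℕ :=
  if (x.2.1 + x.2.2 / 2) % 4 = 0 then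
    ((x.2.1 + x.2.2 / 2) / 2, x.2.1, 2 * (2 * x.1 - x.2.1))
  else if x.2.1 ≤ x.2.2 / 2 then ovPhi x
  else ((ovPhi x).1, 2 * (ovPhi x).1 - (ovPhi x).2.1, (ovPhi x).2.2)

theorem ov_le_three (n : ℕ) (hn : n % 4 = 3) : (ovPm n).card ≤ (ovPp n).card + (ovZp n).card := by
  have hu : (ovPp n).card + (ovZp n).card =
      ((ovOm n).filter fun x => ¬ (x.1 % 2 = 1 ∧ x.2.2 % 2 = 0)).card := by
    simp only [ovPp, ovZp]
    rw [← Finset.card_union_of_disjoint, ← Finset.filter_or]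
    · congr 1
      refine Finset.filter_congr fun x _ => ?_
      omega
    · rw [Finset.disjoint_filter]
      intro x _; omega
  rw [hu]
  refine Finset.card_le_card_of_injOn ovPhi3 ?_ ?_
  · rintro ⟨r, u, k⟩ hx
    obtain ⟨v, l, e1, e2, h1, h2, h3, h4, h5, h6, h7, h8⟩ := ov_mem_Pm hx
    have hp := ov_phi_mem n u v l h4 h5 h6 h7
    simp only [ovPhi3, ovPhi, ← e1, ← e2, Finset.coe_filter, Set.mem_ofPred_eq]
    split_ifs with c1 c2
    · refine ⟨(ov_mem_Om _ _ _ _).2 ⟨l, by omega, h4, h6, ?_⟩, by omega⟩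
      obtain ⟨t, ht⟩ : ∃ t, u + l = 2 * t := ⟨(u + l) / 2, by omega⟩
      rw [ht, Nat.mul_div_cancel_left t (by omega), ← h7]
      nlinarith
    · exact ⟨hp, by omega⟩
    · exact ⟨ov_swap_mem hp, by omega⟩
  · rintro ⟨r, u, k⟩ hx ⟨r', u', k'⟩ hx' heq
    obtain ⟨v, l, e1, e2, h1, h2, h3, h4, h5, h6, h7, h8⟩ := ov_mem_Pm hx
    obtain ⟨v', l', e1', e2', h1', h2', h3', h4', h5', h6', h7', h8'⟩ := ov_mem_Pm hx'
    simp only [ovPhi3, ovPhi, ← e1, ← e2, ← e1', ← e2'] at heq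
    clear h7 h7'
    rw [Prod.mk.injEq, Prod.mk.injEq]
    split_ifs at heq <;> simp only [Prod.mk.injEq] at heq <;> omega

/-- The map for `n ≡ 0 mod 4`. -/
def ovPhi0 (x : ℕ × ℕ × ℕ) : ℕ × ℕ × ℕ :=
  if (x.2.1 + x.2.2 / 2) % 4 = 2 then ovPhi x
  else (min (2 * x.1 - x.2.1) (x.2.2 / 2) + x.2.1,
    2 * (min (2 * x.1 - x.2.1) (x.2.2 / 2) + x.2.1) - min (2 * x.1 - x.2.1) (x.2.2 / 2),
    ((2 * x.1 - x.2.1) - x.2.2 / 2) + (x.2.2 / 2 - (2 * x.1 - x.2.1)))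

theorem ov_le_zero (n : ℕ) (hn : n % 4 = 0) : (ovPm n).card ≤ (ovPp n).card := by
  refine Finset.card_le_card_of_injOn ovPhi0 ?_ ?_
  · rintro ⟨r, u, k⟩ hx
    obtain ⟨v, l, e1, e2, h1, h2, h3, h4, h5, h6, h7, h8⟩ := ov_mem_Pm hx
    have hp := ov_phi_mem n u v l h4 h5 h6 h7
    have hp2 := ov_swap_mem (ov_phi_mem n v u l h5 h4 h6 (by rw [← h7]; ring))
    simp only [ovPhi0, ovPhi, ← e1, ← e2, ovPp, Finset.coe_filter, Set.mem_ofPred_eq]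
    clear hx h7
    obtain ⟨a, rfl⟩ : ∃ a, u = 2 * a := ⟨u / 2, by omega⟩
    obtain ⟨b, rfl⟩ : ∃ b, v = 2 * b := ⟨v / 2, by omega⟩
    obtain ⟨c, rfl⟩ : ∃ c, l = 2 * c := ⟨l / 2, by omega⟩
    have hab : (a + b) % 2 = 1 := by omega
    split_ifs with c1
    · have : (a + c) % 2 = 1 := by omega
      have hne : a < c ∨ c < a := by
        rcases lt_trichotomy a c with h | h | h
        · exact Or.inl h
        · subst h; omega
        · exact Or.inr h
      dsimp only
      exact ⟨hp, by rcases hne with h | h <;> omega, by omega⟩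
    · have : (b + c) % 2 = 1 := by omega
      have hne : b < c ∨ c < b := by
        rcases lt_trichotomy b c with h | h | h
        · exact Or.inl h
        · subst h; omega
        · exact Or.inr h
      dsimp only
      exact ⟨hp2, by rcases hne with h | h <;> omega, by omega⟩
  · rintro ⟨r, u, k⟩ hx ⟨r', u', k'⟩ hx' heq
    obtain ⟨v, l, e1, e2, h1, h2, h3, h4, h5, h6, h7, h8⟩ := ov_mem_Pm hx
    obtain ⟨v', l', e1', e2', h1', h2', h3', h4', h5', h6', h7', h8'⟩ := ov_mem_Pm hx'
    simp only [ovPhi0, ovPhi, ← e1, ← e2, ← e1', ← e2'] at heq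
    clear h7 h7'
    rw [Prod.mk.injEq, Prod.mk.injEq]
    split_ifs at heq <;> simp only [Prod.mk.injEq] at heq <;> omega

theorem ov_mem_Zm {n r u k : ℕ} (h : (r, u, k) ∈ ovZm n) : ∃ v, k = 0 ∧ r % 2 = 1 ∧
    u + v = 2 * r ∧ 0 < u ∧ 0 < v ∧ u * v = n ∧
    ((u % 2 = 1 ∧ n % 4 = 1) ∨ (u % 2 = 0 ∧ n % 4 = 0)) := by
  simp only [ovZm, Finset.mem_filter] at h
  obtain ⟨h0, rfl, hr⟩ := h
  obtain ⟨v, h1, h2, h3, h4⟩ := (ov_mem_Om n r u _).1 h0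
  exact ⟨v, rfl, hr, h1, h2, h3, by simpa using h4, by simpa using ov_par n r u v 0 h1 hr h4⟩

theorem ov_Z_le (n : ℕ) (hn : 1 ≤ n) : (ovZm n).card + (ovZp n).card ≤ n.divisors.card := by
  have hu : (ovZm n).card + (ovZp n).card = ((ovOm n).filter fun x => x.2.2 = 0).card := by
    simp only [ovZm, ovZp]
    rw [← Finset.card_union_of_disjoint, ← Finset.filter_or]
    · congr 1
      refine Finset.filter_congr fun x _ => ?_
      omega
    · rw [Finset.disjoint_filter]
      intro x _; omega
  rw [hu]
  refine Finset.card_le_card_of_injOn (fun x => x.2.1) ?_ ?_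
  · rintro ⟨r, u, k⟩ hx
    simp only [Finset.coe_filter, Set.mem_ofPred_eq] at hx
    obtain ⟨v, h1, h2, h3, h4⟩ := (ov_mem_Om n r u k).1 hx.1
    simp only [Finset.mem_coe, Nat.mem_divisors]
    refine ⟨⟨v, ?_⟩, by omega⟩
    rw [hx.2] at h4; simpa using h4.symm
  · rintro ⟨r, u, k⟩ hx ⟨r', u', k'⟩ hx' heq
    simp only [Finset.coe_filter, Set.mem_ofPred_eq] at hx hx' heq
    obtain ⟨h0, rfl⟩ := hx
    obtain ⟨h0', rfl⟩ := hx'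
    obtain ⟨v, h1, h2, h3, h4⟩ := (ov_mem_Om n r u _).1 h0
    obtain ⟨v', h1', h2', h3', h4'⟩ := (ov_mem_Om n r' u' _).1 h0'
    subst heq
    have : v = v' := Nat.eq_of_mul_eq_mul_left h2 (by omega)
    rw [Prod.mk.injEq, Prod.mk.injEq]
    omega

/-- Odd divisors. -/
def ovO (n : ℕ) := n.divisors.filter fun d => d % 2 = 1

theorem ov_O_le (n s : ℕ) (h : 2 ^ s ∣ n) :
    (ovO n).card ≤ (n.divisors.filter fun d => d % (2 ^ (s + 1)) = 2 ^ s).card := by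
  refine Finset.card_le_card_of_injOn (fun d => 2 ^ s * d) ?_ ?_
  · intro d hd
    simp only [ovO, Finset.coe_filter, Set.mem_ofPred_eq, Nat.mem_divisors] at hd ⊢
    refine ⟨⟨Nat.Coprime.mul_dvd_of_dvd_of_dvd ?_ h hd.1.1, hd.1.2⟩, ?_⟩
    · exact Nat.Coprime.pow_left s ((Nat.coprime_two_left).2 (Nat.odd_iff.2 hd.2))
    · rw [pow_succ, Nat.mul_mod_mul_left, hd.2, mul_one]
  · intro a _ b _ hab
    exact Nat.eq_of_mul_eq_mul_left (by positivity) hab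

theorem ov_O_pos (n : ℕ) (hn : 1 ≤ n) : 0 < (ovO n).card := by
  refine Finset.card_pos.2 ⟨1, ?_⟩
  simp only [ovO, Finset.mem_filter, Nat.mem_divisors]
  exact ⟨⟨one_dvd _, by omega⟩, by norm_num⟩

theorem ov_D_even (n : ℕ) (hn : n % 2 = 0) : ∑ r ∈ n.divisors, (-1 : ℤ) ^ (n + r) =
    (n.divisors.filter fun d => d % 2 = 0).card - (ovO n).card := by
  simp only [ovO, Finset.card_filter]
  push_cast
  rw [← Finset.sum_sub_distrib]
  refine Finset.sum_congr rfl fun r _ => ?_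
  rw [neg_one_pow_eq_pow_mod_two]
  rcases Nat.mod_two_eq_zero_or_one r with b | b
  · rw [show (n + r) % 2 = 0 by omega]; simp [b]
  · rw [show (n + r) % 2 = 1 by omega]; simp [b]

theorem ov_D_odd (n : ℕ) (hn : n % 2 = 1) : ∑ r ∈ n.divisors, (-1 : ℤ) ^ (n + r) =
    n.divisors.card := by
  rw [Finset.card_eq_sum_ones]
  push_cast
  refine Finset.sum_congr rfl fun r hr => ?_
  obtain ⟨c, hc⟩ := (Nat.mem_divisors.1 hr).1
  have : r % 2 = 1 := by
    rcases Nat.mod_two_eq_zero_or_one r with b | b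
    · rw [hc, Nat.mul_mod, b] at hn; simp at hn
    · exact b
  rw [neg_one_pow_eq_pow_mod_two, show (n + r) % 2 = 0 by omega]
  rfl

theorem ov_E_two (n : ℕ) (hn : n % 4 = 2) :
    (ovO n).card ≤ (n.divisors.filter fun d => d % 2 = 0).card := by
  refine le_trans (ov_O_le n 1 (by omega)) (Finset.card_le_card ?_)
  refine Finset.monotone_filter_right _ fun d _ hd => ?_
  norm_num at hd ⊢; omega

theorem ov_E_four (n : ℕ) (hn1 : 1 ≤ n) (hn : n % 4 = 0) :
    2 * (ovO n).card ≤ (n.divisors.filter fun d => d % 2 = 0).card := by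
  have h1 := ov_O_le n 1 (by omega)
  have h2 := ov_O_le n 2 (by omega)
  have h3 : (n.divisors.filter fun d => d % (2 ^ (1 + 1)) = 2 ^ 1).card +
      (n.divisors.filter fun d => d % (2 ^ (2 + 1)) = 2 ^ 2).card ≤
      (n.divisors.filter fun d => d % 2 = 0).card := by
    rw [← Finset.card_union_of_disjoint, ← Finset.filter_or]
    · refine Finset.card_le_card (Finset.monotone_filter_right _ fun d _ hd => ?_)
      norm_num at hd ⊢; omega
    · rw [Finset.disjoint_filter]
      intro d _; norm_num; omega
  omega

theorem ov_E_eight (n : ℕ) (hn1 : 1 ≤ n) (hn : n % 8 = 0) :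
    3 * (ovO n).card ≤ (n.divisors.filter fun d => d % 2 = 0).card := by
  have h1 := ov_O_le n 1 (by omega)
  have h2 := ov_O_le n 2 (by omega)
  have h4 := ov_O_le n 3 (by omega)
  have h3 : (n.divisors.filter fun d => d % (2 ^ (1 + 1)) = 2 ^ 1).card +
      (n.divisors.filter fun d => d % (2 ^ (2 + 1)) = 2 ^ 2).card +
      (n.divisors.filter fun d => d % (2 ^ (3 + 1)) = 2 ^ 3).card ≤
      (n.divisors.filter fun d => d % 2 = 0).card := by
    rw [← Finset.card_union_of_disjoint, ← Finset.filter_or, ← Finset.card_union_of_disjoint,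
      ← Finset.filter_or]
    · refine Finset.card_le_card (Finset.monotone_filter_right _ fun d _ hd => ?_)
      norm_num at hd ⊢; omega
    · rw [Finset.disjoint_filter]
      intro d _; norm_num; omega
    · rw [Finset.disjoint_filter]
      intro d _; norm_num; omega
  omega

theorem ov_Zm_eight (n : ℕ) (hn : n % 4 = 0) (hn8 : n % 8 ≠ 0) : (ovZm n).card = 0 := by
  rw [Finset.card_eq_zero, Finset.eq_empty_iff_forall_notMem]
  rintro ⟨r, u, k⟩ hx
  obtain ⟨v, rfl, h1, h2, h3, h4, h5, h6⟩ := ov_mem_Zm hx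
  apply hn8
  have : (u % 4 = 0 ∧ v % 4 = 2) ∨ (u % 4 = 2 ∧ v % 4 = 0) := by omega
  rcases this with ⟨a, b⟩ | ⟨a, b⟩
  · obtain ⟨c, rfl⟩ : ∃ c, u = 4 * c := ⟨u / 4, by omega⟩
    obtain ⟨d, rfl⟩ : ∃ d, v = 2 * d := ⟨v / 2, by omega⟩
    rw [← h5, show 4 * c * (2 * d) = 8 * (c * d) by ring]; omega
  · obtain ⟨c, rfl⟩ : ∃ c, u = 2 * c := ⟨u / 2, by omega⟩
    obtain ⟨d, rfl⟩ : ∃ d, v = 4 * d := ⟨v / 4, by omega⟩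
    rw [← h5, show 2 * c * (4 * d) = 8 * (c * d) by ring]; omega

theorem ov_Zm_le (n : ℕ) (hn1 : 1 ≤ n) (hn : n % 4 = 0) : (ovZm n).card ≤ 2 * (ovO n).card := by
  rw [← Finset.card_filter_add_card_filter_not (s := ovZm n) (fun x => x.2.1 % 4 = 2), two_mul]
  refine add_le_add ?_ ?_
  · refine Finset.card_le_card_of_injOn (fun x => x.2.1 / 2) ?_ ?_
    · rintro ⟨r, u, k⟩ hx
      simp only [Finset.coe_filter, Set.mem_ofPred_eq] at hx
      obtain ⟨v, rfl, h1, h2, h3, h4, h5, h6⟩ := ov_mem_Zm hx.1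
      simp only [ovO, Finset.coe_filter, Set.mem_ofPred_eq, Nat.mem_divisors]
      refine ⟨⟨Dvd.intro (2 * v) ?_, by omega⟩, by omega⟩
      obtain ⟨c, rfl⟩ : ∃ c, u = 2 * c := ⟨u / 2, by omega⟩
      rw [Nat.mul_div_cancel_left c (by omega), ← h5]; ring
    · rintro ⟨r, u, k⟩ hx ⟨r', u', k'⟩ hx' heq
      simp only [Finset.coe_filter, Set.mem_ofPred_eq] at hx hx' heq
      obtain ⟨v, rfl, h1, h2, h3, h4, h5, h6⟩ := ov_mem_Zm hx.1
      obtain ⟨v', rfl, h1', h2', h3', h4', h5', h6'⟩ := ov_mem_Zm hx'.1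
      have e : u = u' := by omega
      subst e
      have : v = v' := Nat.eq_of_mul_eq_mul_left h3 (by omega)
      rw [Prod.mk.injEq, Prod.mk.injEq]
      omega
  · refine Finset.card_le_card_of_injOn (fun x => (2 * x.1 - x.2.1) / 2) ?_ ?_
    · rintro ⟨r, u, k⟩ hx
      simp only [Finset.coe_filter, Set.mem_ofPred_eq] at hx
      obtain ⟨v, rfl, h1, h2, h3, h4, h5, h6⟩ := ov_mem_Zm hx.1
      simp only [ovO, Finset.coe_filter, Set.mem_ofPred_eq, Nat.mem_divisors]
      rw [show 2 * r - u = v by omega]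
      refine ⟨⟨Dvd.intro (2 * u) ?_, by omega⟩, by omega⟩
      obtain ⟨c, rfl⟩ : ∃ c, v = 2 * c := ⟨v / 2, by omega⟩
      rw [Nat.mul_div_cancel_left c (by omega), ← h5]; ring
    · rintro ⟨r, u, k⟩ hx ⟨r', u', k'⟩ hx' heq
      simp only [Finset.coe_filter, Set.mem_ofPred_eq] at hx hx' heq
      obtain ⟨v, rfl, h1, h2, h3, h4, h5, h6⟩ := ov_mem_Zm hx.1
      obtain ⟨v', rfl, h1', h2', h3', h4', h5', h6'⟩ := ov_mem_Zm hx'.1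
      have e : v = v' := by omega
      subst e
      have : u = u' := Nat.eq_of_mul_eq_mul_right h4 (by omega)
      rw [Prod.mk.injEq, Prod.mk.injEq]
      omega

theorem ov_pos (n : ℕ) (hn : 1 ≤ n) :
    0 < 2 * ∑ r ∈ n.divisors, (-1 : ℤ) ^ (n + r) +
    ∑ x ∈ ovOm n, (-1 : ℤ) ^ (n + x.1 + x.2.1) * (if x.2.2 = 0 then 1 else 2) := by
  rw [ov_sum_split]
  have hO := ov_O_pos n hn
  have hd : (ovO n).card ≤ n.divisors.card := Finset.card_filter_le _ _
  have hZ := ov_Z_le n hn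
  have h4 : n % 4 = 0 ∨ n % 4 = 1 ∨ n % 4 = 2 ∨ n % 4 = 3 := by omega
  rcases h4 with h | h | h | h
  · rw [ov_D_even n (by omega)]
    have a1 := ov_le_zero n h
    have a2 := ov_E_four n hn h
    have a3 := ov_Zm_le n hn h
    by_cases h8 : n % 8 = 0
    · have a4 := ov_E_eight n hn h8
      omega
    · have a4 := ov_Zm_eight n h h8
      omega
  · rw [ov_D_odd n (by omega)]
    have a1 := ov_le_one n h
    omega
  · rw [ov_D_even n (by omega)]
    have a1 := ov_lt_two n h
    have a2 := ov_E_two n h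
    have a3 : (ovZm n).card = 0 := by
      rw [Finset.card_eq_zero, Finset.eq_empty_iff_forall_notMem]
      rintro ⟨r, u, k⟩ hx
      obtain ⟨v, rfl, h1, h2, h3, h4, h5, h6⟩ := ov_mem_Zm hx
      omega
    omega
  · rw [ov_D_odd n (by omega)]
    have a1 := ov_le_three n h
    omega

end Pos
section GF

open PowerSeries
open scoped PowerSeries.WithPiTopology

/-- The character. -/
def ovF (m i j : ℕ) : ℤ := if i ≤ m then 2 * (-1) ^ j else 0

/-- Signed generating function of overpartitions with parts at most `m`. -/
noncomputable def ovT (m : ℕ) : ℤ⟦X⟧ := Nat.Partition.genFun (ovF m)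

/-- Its factors. -/
noncomputable def ovFac (i : ℕ) : ℤ⟦X⟧ :=
  1 + ∑' j : ℕ, (2 * (-1 : ℤ) ^ (j + 1)) • (X : ℤ⟦X⟧) ^ ((i + 1) * (j + 1))

theorem ovFac_mul (i : ℕ) : (1 + (X : ℤ⟦X⟧) ^ (i + 1)) * ovFac i = 1 - X ^ (i + 1) := by
  have hs : Summable fun j : ℕ => (2 * (-1 : ℤ) ^ (j + 1)) • (X : ℤ⟦X⟧) ^ ((i + 1) * (j + 1)) :=
    Nat.Partition.summable_genFun_term (fun _ j => 2 * (-1 : ℤ) ^ j) i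
  have h := hs.tsum_eq_zero_add
  have e : ∀ j : ℕ, (2 * (-1 : ℤ) ^ (j + 1 + 1)) • (X : ℤ⟦X⟧) ^ ((i + 1) * (j + 1 + 1))
      = (- X ^ (i + 1)) * ((2 * (-1 : ℤ) ^ (j + 1)) • (X : ℤ⟦X⟧) ^ ((i + 1) * (j + 1))) := by
    intro j
    simp only [zsmul_eq_mul]
    push_cast
    ring
  simp only [e] at h
  rw [hs.tsum_mul_left] at h
  rw [ovFac]
  set S := ∑' j : ℕ, (2 * (-1 : ℤ) ^ (j + 1)) • (X : ℤ⟦X⟧) ^ ((i + 1) * (j + 1)) with hS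
  simp only [zsmul_eq_mul, zero_add, pow_one, mul_one] at h
  push_cast at h
  linear_combination h

theorem ovT_prod (m : ℕ) : ovT m = ∏ i ∈ Finset.range m, ovFac i := by
  have h := Nat.Partition.hasProd_genFun (ovF m)
  have h2 := hasProd_prod_of_ne_finset_one (s := Finset.range m)
    (f := fun i => (1 : ℤ⟦X⟧) + ∑' j, ovF m (i + 1) (j + 1) • X ^ ((i + 1) * (j + 1)))
    (L := SummationFilter.unconditional ℕ) (by
      intro b hb
      have hb : ¬ (b + 1 ≤ m) := by simpa using hb
      simp [ovF, hb])
  rw [ovT, h.unique h2]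
  refine Finset.prod_congr rfl fun i hi => ?_
  have hi : i + 1 ≤ m := by simpa using hi
  simp only [ovF, hi, if_true, ovFac]

theorem ovT_succ (m : ℕ) :
    (1 + (X : ℤ⟦X⟧) ^ (m + 1)) * ovT (m + 1) = (1 - X ^ (m + 1)) * ovT m := by
  rw [ovT_prod, ovT_prod, Finset.prod_range_succ]
  linear_combination (∏ i ∈ Finset.range m, ovFac i) * ovFac_mul m

theorem ov_sup_le {n : ℕ} (p : n.Partition) (m : ℕ) :
    p.parts.sup ≤ m ↔ ∀ i ∈ p.parts, i ≤ m := Multiset.sup_le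

theorem ov_coeff_T (m n : ℕ) : coeff n (ovT m) = ∑ p : n.Partition,
    if p.parts.sup ≤ m then 2 ^ p.parts.toFinset.card * (-1 : ℤ) ^ p.parts.card else 0 := by
  rw [ovT, Nat.Partition.coeff_genFun]
  refine Finset.sum_congr rfl fun p _ => ?_
  rw [Finsupp.prod, Multiset.toFinsupp_support]
  split_ifs with h
  · rw [Finset.prod_congr rfl (g := fun i => 2 * (-1 : ℤ) ^ (p.parts.count i)),
      Finset.prod_mul_distrib, Finset.prod_const, Finset.prod_pow_eq_pow_sum,
      Multiset.toFinset_sum_count_eq]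
    intro i hi
    rw [ovF, if_pos ((ov_sup_le p m).1 h i (Multiset.mem_toFinset.1 hi)), Multiset.toFinsupp_apply]
  · rw [ov_sup_le] at h
    push Not at h
    obtain ⟨i, hi, him⟩ := h
    refine Finset.prod_eq_zero (Multiset.mem_toFinset.2 hi) ?_
    rw [ovF, if_neg (by omega)]

theorem ov_sup_pos {n : ℕ} (hn : 1 ≤ n) (p : n.Partition) : 1 ≤ p.parts.sup := by
  by_contra h
  have h0 : p.parts.sup ≤ 0 := by omega
  rw [ov_sup_le] at h0
  have : p.parts = 0 := by
    rw [Multiset.eq_zero_iff_forall_notMem]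
    intro i hi
    have := p.parts_pos hi
    have := h0 i hi
    omega
  have hs := p.parts_sum
  rw [this] at hs
  simp at hs
  omega

theorem ov_sup_le_n {n : ℕ} (p : n.Partition) : p.parts.sup ≤ n := by
  rw [ov_sup_le]
  intro i hi
  exact p.le_of_mem_parts hi

theorem ov_signed (n : ℕ) (hn : 1 ≤ n) :
    coeff n (∑ m ∈ Finset.range n, (-1) ^ (m + 1) * (ovT (m + 1) - ovT m)) =
    ∑ p : n.Partition, 2 ^ p.parts.toFinset.card * (-1 : ℤ) ^ (p.parts.sup + p.parts.card) := by
  rw [map_sum]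
  have h : ∀ m, coeff n ((-1) ^ (m + 1) * (ovT (m + 1) - ovT m)) = ∑ p : n.Partition,
      if p.parts.sup = m + 1 then
        2 ^ p.parts.toFinset.card * (-1 : ℤ) ^ (p.parts.sup + p.parts.card) else 0 := by
    intro m
    rw [show ((-1 : ℤ⟦X⟧) ^ (m + 1)) = C ((-1) ^ (m + 1)) by simp, coeff_C_mul, map_sub,
      ov_coeff_T, ov_coeff_T, ← Finset.sum_sub_distrib, Finset.mul_sum]
    refine Finset.sum_congr rfl fun p _ => ?_
    rcases lt_trichotomy p.parts.sup (m + 1) with h | h | h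
    · rw [if_pos (by omega), if_pos (by omega), if_neg (by omega)]; ring
    · rw [if_pos (by omega), if_neg (by omega), if_pos h, h]; ring
    · rw [if_neg (by omega), if_neg (by omega), if_neg (by omega)]; ring
  rw [Finset.sum_congr rfl fun m _ => h m, Finset.sum_comm]
  refine Finset.sum_congr rfl fun p _ => ?_
  have h1 := ov_sup_pos hn p
  have h2 := ov_sup_le_n p
  rw [Finset.sum_eq_single (p.parts.sup - 1)]
  · rw [if_pos (by omega)]
  · intro b _ hb
    rw [if_neg (by omega)]
  · intro hb
    exfalso; apply hb
    rw [Finset.mem_range]; omega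

theorem ov_nbar (a : ℤ) (n : ℕ) : nbar a 2 n = ∑ p : n.Partition,
    if ((p.parts.sup : ℤ) - p.parts.card) ≡ a [ZMOD 2] then 2 ^ p.parts.toFinset.card else 0 := by
  classical
  have e : {P : Overpartition n // P.rank ≡ a [ZMOD ((2 : ℕ) : ℤ)]} ≃
      (Σ p : {p : n.Partition // ((p.parts.sup : ℤ) - p.parts.card) ≡ a [ZMOD 2]},
        {s : Finset ℕ // s ∈ p.1.parts.toFinset.powerset}) :=
    { toFun := fun P => ⟨⟨P.1.1.1, P.2⟩, ⟨P.1.1.2, Finset.mem_powerset.2 P.1.2⟩⟩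
      invFun := fun x => ⟨⟨(x.1.1, x.2.1), Finset.mem_powerset.1 x.2.2⟩, x.1.2⟩
      left_inv := fun _ => rfl
      right_inv := fun _ => rfl }
  rw [nbar, Nat.card_congr e, Nat.card_eq_fintype_card, Fintype.card_sigma]
  simp only [Fintype.card_coe, Finset.card_powerset]
  rw [← Finset.sum_filter]
  exact (Finset.sum_subtype _ (by simp) (fun p : n.Partition => 2 ^ p.parts.toFinset.card)).symm

theorem ov_diff (n : ℕ) : (nbar 0 2 n : ℤ) - nbar 1 2 n =
    ∑ p : n.Partition, 2 ^ p.parts.toFinset.card * (-1 : ℤ) ^ (p.parts.sup + p.parts.card) := by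
  rw [ov_nbar, ov_nbar]
  push_cast
  rw [← Finset.sum_sub_distrib]
  refine Finset.sum_congr rfl fun p _ => ?_
  rw [neg_one_pow_eq_pow_mod_two]
  rcases Nat.mod_two_eq_zero_or_one (p.parts.sup + p.parts.card) with h | h
  · rw [h, if_pos (by unfold Int.ModEq; omega), if_neg (by unfold Int.ModEq; omega)]; ring
  · rw [h, if_neg (by unfold Int.ModEq; omega), if_pos (by unfold Int.ModEq; omega)]; ring

theorem ov_final (n : ℕ) (hn : 1 ≤ n) :
    0 < (-1 : ℤ) ^ (n + 1) * ((nbar 0 2 n : ℤ) - nbar 1 2 n) := by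
  have hT0 : ovT 0 = 1 := by simp [ovT_prod]
  have hp : ∀ k, 1 + (X : ℤ⟦X⟧) ^ (k + 1) ≠ 0 := by
    intro k h
    have := congrArg (coeff 0) h
    simp at this
  have h1 := ov_main_alg (X : ℤ⟦X⟧) X_ne_zero ovGeo ovC ovT ovGeo_mul hp ovC_spec
    (by simp [ovC]) hT0 ovT_succ n
  have h2 := congrArg (coeff n) h1
  rw [ov_signed n hn, ← ov_diff, show (-2 : ℤ⟦X⟧) = C (-2) by simp, coeff_C_mul, ov_coeff_S] at h2
  have h3 := ov_coeff_total n hn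
  have h4 := ov_pos n hn
  rw [← h3] at h4
  rw [h2, pow_succ]
  linarith

end GF

theorem stmt8 (n : ℕ) (hn : 1 ≤ n) :
    (Odd n → nbar 1 2 n < nbar 0 2 n) ∧ (Even n → nbar 0 2 n < nbar 1 2 n) := by
  have h := ov_final n hn
  constructor
  · intro ho
    rw [Even.neg_one_pow (by simpa [Nat.even_add_one] using ho)] at h
    omega
  · intro he
    rw [Odd.neg_one_pow (Even.add_one he)] at h
    omega
end

section
/- For every integer n ≥ 1: if n ≡ 0 or 1 (mod 3) then N̄(0,3,n) > N̄(1,3,n), and if n ≡ 2 (mod 3) then N̄(0,3,n) < N̄(1,3,n). -/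
section
open PowerSeries

noncomputable def cc : ℕ → ℕ → ℤ⟦X⟧
  | 0, _ => 1
  | _ + 1, 0 => 1
  | m + 1, j + 1 => X ^ (m + 1) * cc (m + 1) j + cc m (j + 1) + X ^ m * cc m j

theorem cc_zero_left (j : ℕ) : cc 0 j = 1 := by simp [cc]
theorem cc_zero_right (m : ℕ) : cc m 0 = 1 := by cases m <;> simp [cc]
theorem cc_rel1 (m j : ℕ) :
    cc (m + 1) (j + 1) = X ^ (m + 1) * cc (m + 1) j + cc m (j + 1) + X ^ m * cc m j := by
  rw [cc]

noncomputable def fL (l : ℕ) (i j : ℕ) : Polynomial ℤ :=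
  if i ≤ l then 2 * Polynomial.X ^ j else 0

noncomputable def GLs (l : ℕ) : (Polynomial ℤ)⟦X⟧ := Nat.Partition.genFun (fL l)

theorem coeff_GLs (l n : ℕ) : coeff n (GLs l) = ∑ p : n.Partition,
    if p.parts.sup ≤ l then (2:Polynomial ℤ) ^ (p.parts.toFinset.card) * Polynomial.X ^ p.parts.card
    else 0 := by
  rw [GLs, Nat.Partition.coeff_genFun]
  apply Finset.sum_congr rfl
  intro p _
  rw [Finsupp.prod, Multiset.toFinsupp_support]
  simp only [Multiset.toFinsupp_apply, fL]
  split_ifs with h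
  · rw [Multiset.sup_le] at h
    rw [Finset.prod_congr rfl (g := fun i => 2 * Polynomial.X ^ (p.parts.count i))]
    · rw [Finset.prod_mul_distrib, Finset.prod_const, Finset.prod_pow_eq_pow_sum]
      simp
    · intro i hi
      rw [if_pos (h i (by simpa using hi))]
  · rw [Multiset.sup_le] at h
    push Not at h
    obtain ⟨b, hb, hl⟩ := h
    exact Finset.prod_eq_zero (i := b) (by simpa using hb) (by rw [if_neg (by omega)])

theorem GLs_rel_gen {R : Type*} [CommRing R] (x : R) (l : ℕ) (f : ℕ → ℕ → ℕ → R)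
    (hf : ∀ l i j, f l i j = if i ≤ l then 2 * x ^ j else 0) :
    (1 - C x * X ^ (l + 1)) * Nat.Partition.genFun (f (l + 1))
    = (1 + C x * X ^ (l + 1)) * Nat.Partition.genFun (f l) := by
  letI : TopologicalSpace R := ⊥
  haveI : DiscreteTopology R := ⟨rfl⟩
  letI := PowerSeries.WithPiTopology.instTopologicalSpace R
  haveI := PowerSeries.WithPiTopology.instIsTopologicalRing R
  haveI := PowerSeries.WithPiTopology.instT2Space (R := R)
  have key (k : ℕ) : Nat.Partition.genFun (f k) = ∏ i ∈ Finset.range k,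
      (1 + ∑' j, (2 * x ^ (j+1) : R) • (X : R⟦X⟧) ^ ((i + 1) * (j + 1))) := by
    rw [Nat.Partition.genFun_eq_tprod, tprod_eq_prod (s := Finset.range k)]
    · apply Finset.prod_congr rfl
      intro i hi
      have : i + 1 ≤ k := by simpa using hi
      simp [hf, this]
    · intro i hi
      have : ¬ (i + 1 ≤ k) := by simpa using hi
      simp only [hf, if_neg this]
      simp
  rw [key (l+1), Finset.prod_range_succ, ← key l]
  set y : R⟦X⟧ := C x * X ^ (l + 1) with hy
  have h1 : ∀ j : ℕ, (2 * x ^ (j+1) : R) • (X : R⟦X⟧) ^ ((l + 1) * (j + 1)) = 2 * y ^ (j+1) := by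
    intro j
    rw [smul_eq_C_mul, hy, mul_pow, ← pow_mul, map_mul, map_pow]
    simp only [map_ofNat]; ring
  have hs : Summable (fun j : ℕ => (2 * x ^ (j+1) : R) • (X : R⟦X⟧) ^ ((l + 1) * (j + 1))) := by
    exact Nat.Partition.summable_genFun_term (fun _ j => (2 * x ^ j : R)) l
  have h2 := hs.tsum_eq_zero_add
  simp only [h1] at h2 ⊢
  simp only [h1] at hs
  have h3 : ∑' b : ℕ, 2 * y ^ (b + 1 + 1) = y * ∑' b : ℕ, 2 * y ^ (b + 1) := by
    rw [← hs.tsum_mul_left]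
    congr 1; ext1 b; ring
  rw [h3] at h2
  linear_combination (Nat.Partition.genFun (f l)) * h2

theorem GLs_rel (l : ℕ) : (1 - C (Polynomial.X : Polynomial ℤ) * X ^ (l + 1)) * GLs (l + 1)
    = (1 + C (Polynomial.X : Polynomial ℤ) * X ^ (l + 1)) * GLs l :=
  GLs_rel_gen Polynomial.X l fL (fun _ _ _ => rfl)

noncomputable def bb (l k : ℕ) : ℤ⟦X⟧ := mk fun n => (coeff n (GLs l)).coeff k

theorem coeff_bb (l k n : ℕ) : coeff n (bb l k) = ∑ p : n.Partition,
    if p.parts.sup ≤ l ∧ p.parts.card = k then (2:ℤ) ^ (p.parts.toFinset.card) else 0 := by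
  rw [bb, coeff_mk, coeff_GLs, Polynomial.finset_sum_coeff]
  apply Finset.sum_congr rfl
  intro p _
  by_cases h : p.parts.sup ≤ l
  · simp only [h, true_and, if_true]
    rw [show (2:Polynomial ℤ) = Polynomial.C 2 from rfl, ← Polynomial.C_pow, Polynomial.coeff_C_mul_X_pow]
    simp [eq_comm]
  · simp [h]

theorem bb_rel (l k : ℕ) : bb (l+1) (k+1) - X ^ (l+1) * bb (l+1) k =
    bb l (k+1) + X^(l+1) * bb l k := by
  ext n
  have h := congrArg (fun f => (coeff n f).coeff (k+1)) (GLs_rel l)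
  simp only [sub_mul, add_mul, one_mul, map_sub, map_add, Polynomial.coeff_sub, Polynomial.coeff_add, mul_assoc, coeff_C_mul, coeff_X_pow_mul'] at h ⊢
  simp only [bb, coeff_mk]
  convert h using 2
  · split_ifs <;> simp [Polynomial.coeff_X_mul]
  · split_ifs <;> simp [Polynomial.coeff_X_mul]

theorem bb_zero_right (l : ℕ) : bb l 0 = 1 := by
  ext n
  rw [coeff_bb, coeff_one]
  rcases Nat.eq_zero_or_pos n with rfl | hn
  · rw [Fintype.sum_unique]
    have : (default : Nat.Partition 0).parts = 0 := Nat.Partition.partition_zero_parts _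
    simp [this]
  · rw [if_neg (by omega)]
    apply Finset.sum_eq_zero
    intro p _
    rw [if_neg]
    rintro ⟨_, h⟩
    rw [Multiset.card_eq_zero] at h
    have := p.parts_sum
    rw [h] at this; simp at this; omega

theorem bb_zero_left (k : ℕ) : bb 0 (k+1) = 0 := by
  ext n
  rw [coeff_bb, map_zero]
  apply Finset.sum_eq_zero
  intro p _
  rw [if_neg]
  rintro ⟨h1, h⟩
  rw [Multiset.sup_le] at h1
  obtain ⟨a, ha⟩ := Multiset.card_pos_iff_exists_mem.mp (by omega : 0 < p.parts.card)
  have := h1 a ha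
  have := p.parts_pos ha
  omega

theorem bb_cc (m j : ℕ) : bb (m+1) (j+1) = bb m (j+1) + 2 * X ^ (m+j+1) * cc m j := by
  induction m generalizing j with
  | zero =>
    induction j with
    | zero =>
      have := bb_rel 0 0
      simp only [bb_zero_right, bb_zero_left, cc_zero_left] at *
      linear_combination this
    | succ j ih =>
      have := bb_rel 0 (j+1)
      simp only [bb_zero_left, cc_zero_left] at *
      linear_combination this + X * ih
  | succ m ihm =>
    induction j with
    | zero =>
      have := bb_rel (m+1) 0
      simp only [bb_zero_right, cc_zero_right] at *
      linear_combination this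
    | succ j ih =>
      have h := bb_rel (m+1) (j+1)
      have h0 := bb_rel m (j+1)
      have h1 := ihm j
      have h2 := ihm (j+1)
      rw [cc_rel1]
      linear_combination h + X ^ (m+2) * ih - X * h0 + X^(m+2) * h1 + X * h2

theorem coeff_Rmj (m j n : ℕ) : coeff n (2 * X ^ (m+j+1) * cc m j) = ∑ p : n.Partition,
    if p.parts.sup = m + 1 ∧ p.parts.card = j + 1 then (2:ℤ) ^ (p.parts.toFinset.card) else 0 := by
  have := congrArg (coeff n) (bb_cc m j)
  rw [map_add, coeff_bb, coeff_bb, ← sub_eq_iff_eq_add'] at this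
  rw [← this, ← Finset.sum_sub_distrib]
  apply Finset.sum_congr rfl
  intro p _
  split_ifs <;> first | (exfalso; omega) | simp

theorem nbar_eq_sum (a : ℤ) (n : ℕ) : (nbar a 3 n : ℤ) = ∑ p : n.Partition,
    if (p.parts.sup : ℤ) - p.parts.card ≡ a [ZMOD 3] then (2:ℤ)^(p.parts.toFinset.card) else 0 := by
  classical
  unfold nbar
  let e : {P : Overpartition n // P.rank ≡ a [ZMOD ((3:ℕ):ℤ)]} ≃
     (Σ p : {p : n.Partition // (p.parts.sup : ℤ) - p.parts.card ≡ a [ZMOD 3]},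
       {s // s ∈ p.1.parts.toFinset.powerset}) :=
    { toFun := fun P => ⟨⟨P.1.1.1, P.2⟩, ⟨P.1.1.2, Finset.mem_powerset.mpr P.1.2⟩⟩
      invFun := fun Q => ⟨⟨(Q.1.1, Q.2.1), Finset.mem_powerset.mp Q.2.2⟩, Q.1.2⟩
      left_inv := fun _ => rfl
      right_inv := fun _ => rfl }
  rw [Nat.card_congr e, Nat.card_eq_fintype_card, Fintype.card_sigma]
  simp only [Fintype.card_coe, Finset.card_powerset]
  push_cast
  rw [← Finset.sum_filter]
  rw [Finset.sum_subtype (p := fun p : n.Partition => (p.parts.sup : ℤ) - p.parts.card ≡ a [ZMOD 3])]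
  intro x; simp

theorem nbar_eq (a : ℤ) (n : ℕ) (hn : 1 ≤ n) : (nbar a 3 n : ℤ) =
    ∑ m ∈ Finset.range n, ∑ j ∈ Finset.range n,
      if (m : ℤ) - j ≡ a [ZMOD 3] then coeff n (2 * X ^ (m+j+1) * cc m j) else 0 := by
  rw [nbar_eq_sum]
  have : ∀ p : n.Partition, (if (p.parts.sup : ℤ) - p.parts.card ≡ a [ZMOD 3] then (2:ℤ)^(p.parts.toFinset.card) else 0)
     = ∑ m ∈ Finset.range n, ∑ j ∈ Finset.range n, if (m : ℤ) - j ≡ a [ZMOD 3] then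
        (if p.parts.sup = m + 1 ∧ p.parts.card = j + 1 then (2:ℤ) ^ (p.parts.toFinset.card) else 0) else 0 := by
    intro p
    have hsum := p.parts_sum
    have hc : p.parts.card ≤ n := by
      have := Multiset.card_nsmul_le_sum (s := p.parts) (a := 1) (fun x hx => p.parts_pos hx)
      rw [hsum] at this; simpa using this
    have hs : p.parts.sup ≤ n := by
      rw [Multiset.sup_le]; intro b hb; rw [← hsum]; exact Multiset.le_sum_of_mem hb
    have hc0 : 0 < p.parts.card := by
      rw [Multiset.card_pos]; intro h; rw [h] at hsum; simp at hsum; omega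
    obtain ⟨x, hx⟩ := Multiset.card_pos_iff_exists_mem.mp hc0
    have hs0 : 0 < p.parts.sup := lt_of_lt_of_le (p.parts_pos hx) (Multiset.le_sup hx)
    rw [Finset.sum_eq_single (p.parts.sup - 1), Finset.sum_eq_single (p.parts.card - 1)]
    · have e : ((p.parts.sup - 1 : ℕ) : ℤ) - ((p.parts.card - 1 : ℕ):ℤ) = (p.parts.sup : ℤ) - p.parts.card := by omega
      rw [e, if_pos (show p.parts.sup = p.parts.sup - 1 + 1 ∧ p.parts.card = p.parts.card - 1 + 1 by omega)]
    · intro b _ hb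
      rw [if_neg (show ¬ (p.parts.sup = p.parts.sup - 1 + 1 ∧ p.parts.card = b + 1) by omega)]; simp
    · intro h; simp at h; omega
    · intro b _ hb
      apply Finset.sum_eq_zero; intro c _
      rw [if_neg (show ¬ (p.parts.sup = b + 1 ∧ p.parts.card = c + 1) by omega)]; simp
    · intro h; simp at h; omega
  simp only [this]
  rw [Finset.sum_comm]
  apply Finset.sum_congr rfl; intro m _
  rw [Finset.sum_comm]
  apply Finset.sum_congr rfl; intro j _
  rw [coeff_Rmj]
  split_ifs <;> simp

end

section
open PowerSeries

theorem cc_rel2 (m j : ℕ) :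
    cc (m + 1) (j + 1) = cc (m + 1) j + X ^ (j + 1) * cc m (j + 1) + X ^ j * cc m j := by
  induction m generalizing j with
  | zero =>
    induction j with
    | zero => rw [cc_rel1]; simp only [cc_zero_left, cc_zero_right]; ring
    | succ j ih =>
      have h := cc_rel1 0 j
      rw [cc_rel1]; simp only [cc_zero_left, cc_zero_right] at *
      linear_combination X * ih - h
  | succ m ihm =>
    induction j with
    | zero =>
      have h := cc_rel1 m 0
      have h2 := ihm 0
      rw [cc_rel1]; simp only [cc_zero_left, cc_zero_right] at *
      linear_combination h2 - X * h
    | succ j ih =>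
      have e1 := cc_rel1 (m+1) j
      have e2 := cc_rel1 m (j+1)
      have e3 := cc_rel1 m j
      have i2 := ihm (j+1)
      have i3 := ihm j
      rw [cc_rel1]
      linear_combination X^(m+2) * ih + i2 + X^(m+1) * i3 - e1 - X^(j+2) * e2 - X^(j+1) * e3

theorem cc_symm (m j : ℕ) : cc m j = cc j m := by
  induction m generalizing j with
  | zero => rw [cc_zero_left, cc_zero_right]
  | succ m ihm =>
    induction j with
    | zero => rw [cc_zero_left, cc_zero_right]
    | succ j ih => rw [cc_rel1, cc_rel2 j m, ih, ihm, ihm]; ring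

def NN (f : ℤ⟦X⟧) : Prop := ∀ n, 0 ≤ coeff n f

theorem NN.add {f g : ℤ⟦X⟧} (hf : NN f) (hg : NN g) : NN (f + g) := fun n => by
  rw [map_add]; exact add_nonneg (hf n) (hg n)
theorem NN.zero : NN 0 := fun n => by simp
theorem NN.one : NN 1 := fun n => by rw [coeff_one]; split_ifs <;> simp
theorem NN.X_mul {f : ℤ⟦X⟧} (k : ℕ) (hf : NN f) : NN (X ^ k * f) := fun n => by
  rw [coeff_X_pow_mul']; split_ifs; exacts [hf _, le_rfl]

theorem cc_NN (m j : ℕ) : NN (cc m j) := by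
  induction m generalizing j with
  | zero => rw [cc_zero_left]; exact NN.one
  | succ m ihm =>
    induction j with
    | zero => rw [cc_zero_right]; exact NN.one
    | succ j ih => rw [cc_rel1]; exact ((ih.X_mul _).add (ihm _)).add ((ihm _).X_mul _)

theorem cc_mono_left (m j : ℕ) : NN (cc (m+1) j - cc m j) := by
  cases j with
  | zero => simp only [cc_zero_right, sub_self]; exact NN.zero
  | succ j =>
    have : cc (m+1) (j+1) - cc m (j+1) = X ^ (m + 1) * cc (m + 1) j + X ^ m * cc m j := by
      rw [cc_rel1]; ring
    rw [this]; exact ((cc_NN _ _).X_mul _).add ((cc_NN _ _).X_mul _)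

theorem cc_mono_right (m j : ℕ) : NN (cc m (j+1) - cc m j) := by
  rw [cc_symm, cc_symm m j]; exact cc_mono_left _ _

/-! infinite sums -/
noncomputable def ssum (f : ℕ → ℤ⟦X⟧) : ℤ⟦X⟧ := mk fun n => ∑ i ∈ Finset.range (n+1), coeff n (f i)

def Adm (f : ℕ → ℤ⟦X⟧) : Prop := ∀ i, X ^ i ∣ f i

theorem coeff_ssum_of_lt {f : ℕ → ℤ⟦X⟧} (hf : Adm f) {n N : ℕ} (h : n < N) :
    coeff n (ssum f) = ∑ i ∈ Finset.range N, coeff n (f i) := by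
  rw [ssum, coeff_mk]
  apply Finset.sum_subset
  · intro i; simp; omega
  · intro i _ hi
    have := X_pow_dvd_iff.mp (hf i) n (by simpa using hi)
    exact this

theorem coeff_mul_of_dvd {a b : ℤ⟦X⟧} {n N : ℕ} (h : n < N) (hd : X ^ N ∣ b) : coeff n (a * b) = 0 :=
  X_pow_dvd_iff.mp (Dvd.dvd.mul_left hd a) n h

theorem ssum_trunc {f : ℕ → ℤ⟦X⟧} (hf : Adm f) (N : ℕ) :
    X ^ N ∣ ssum f - ∑ i ∈ Finset.range N, f i := by
  rw [X_pow_dvd_iff]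
  intro m hm
  rw [map_sub, coeff_ssum_of_lt hf hm, map_sum, sub_self]

theorem mul_ssum {f : ℕ → ℤ⟦X⟧} (hf : Adm f) (a : ℤ⟦X⟧) : a * ssum f = ssum (fun i => a * f i) := by
  ext n
  have h1 : coeff n (a * (ssum f - ∑ i ∈ Finset.range (n+1), f i)) = 0 :=
    coeff_mul_of_dvd (Nat.lt_succ_self n) (ssum_trunc hf _)
  rw [mul_sub, map_sub, sub_eq_zero] at h1
  rw [h1, Finset.mul_sum, map_sum, ssum, coeff_mk]

theorem ssum_add (f g : ℕ → ℤ⟦X⟧) : ssum f + ssum g = ssum (fun i => f i + g i) := by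
  ext n; simp [ssum, Finset.sum_add_distrib]
theorem ssum_sub (f g : ℕ → ℤ⟦X⟧) : ssum f - ssum g = ssum (fun i => f i - g i) := by
  ext n; simp [ssum, Finset.sum_sub_distrib]

theorem ssum_succ {f : ℕ → ℤ⟦X⟧} (hf : Adm f) : ssum f = f 0 + ssum (fun i => f (i+1)) := by
  ext n
  rw [coeff_ssum_of_lt hf (show n < n + 1 + 1 by omega), Finset.sum_range_succ', map_add, ssum, coeff_mk, add_comm]

theorem NN.ssum {f : ℕ → ℤ⟦X⟧} (hf : ∀ i, NN (f i)) : NN (ssum f) := fun n => by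
  rw [_root_.ssum, coeff_mk]; exact Finset.sum_nonneg (fun i _ => hf i n)

theorem Adm.of_pow {e : ℕ → ℕ} {f : ℕ → ℤ⟦X⟧} (he : ∀ i, i ≤ e i) : Adm (fun i => X ^ (e i) * f i) :=
  fun i => Dvd.dvd.mul_right (pow_dvd_pow _ (he i)) _

noncomputable def KK (r : ℕ) : ℤ⟦X⟧ := ssum fun j => X ^ j * cc (r + j) j
noncomputable def KT (r : ℕ) : ℤ⟦X⟧ := ssum fun j => X ^ (2 * j) * cc (r + j) j

theorem KK_adm (r : ℕ) : Adm (fun j => X ^ j * cc (r + j) j) := Adm.of_pow (fun i => le_rfl)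
theorem KT_adm (r : ℕ) : Adm (fun j => X ^ (2 * j) * cc (r + j) j) := Adm.of_pow (fun i => by omega)

theorem KK_R1 (r : ℕ) : KK (r+1) - KK r = X ^ (r+2) * (KT (r+1) + X * KT (r+2)) := by
  unfold KK KT
  rw [ssum_sub, mul_ssum (KT_adm _), ssum_add, mul_ssum, ssum_succ]
  · simp only [cc_zero_right, sub_self, zero_add, add_zero]
    congr 1; ext1 i
    have := cc_rel1 (r + (i+1)) i
    rw [show r + 1 + (i + 1) = r + (i+1) + 1 by ring, this,
      show r + 1 + i = r + (i+1) by ring, show r + 2 + i = r + (i+1) + 1 by ring]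
    ring
  · intro i; exact dvd_sub (KK_adm _ i) (KK_adm _ i)
  · intro i; exact dvd_add (KT_adm _ i) (Dvd.dvd.mul_left (KT_adm _ i) _)

theorem KK_R2 (s : ℕ) : KK (s+1) - X * KK (s+2) = KT s + X * KT (s+1) := by
  unfold KK KT
  rw [mul_ssum (KT_adm _), mul_ssum (KK_adm _), ssum_succ (KK_adm _), ssum_succ (KT_adm s), add_sub_assoc, ssum_sub]
  rw [add_assoc (X ^ (2 * 0) * cc (s + 0) 0), ssum_add]
  simp only [cc_zero_right, pow_zero, mul_zero, mul_one]
  congr 2; ext1 i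
  have := cc_rel2 (s + 1 + i) i
  rw [show s + 1 + (i + 1) = s + 1 + i + 1 by ring, this,
    show s + 2 + i = s + 1 + i + 1 by ring, show s + (i + 1) = s + 1 + i by ring]
  ring

theorem KK_R20 : KK 0 - X * KK 1 = 1 + X * (KT 0 + X * KT 1) := by
  unfold KK KT
  rw [mul_ssum (KT_adm _), mul_ssum (KK_adm _), ssum_succ (KK_adm _), add_sub_assoc, ssum_sub,
    ssum_add, mul_ssum]
  simp only [cc_zero_right, pow_zero, mul_one]
  congr 2; ext1 i
  have := cc_rel2 i i
  rw [show 0 + (i + 1) = i + 1 by ring, this,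
    show 1 + i = i + 1 by ring, show 0 + i = i by ring, cc_symm i (i+1)]
  ring
  · intro i; exact dvd_add (KT_adm _ i) (Dvd.dvd.mul_left (KT_adm _ i) _)

noncomputable def Cs : ℤ⟦X⟧ := 1 + 2 * X * KK 1

theorem KK_C (r : ℕ) : KK r + X ^ (r+2) * KK (r+2) = Cs := by
  induction r with
  | zero =>
    have h1 := KK_R2 0
    have h2 := KK_R20
    unfold Cs
    simp only [zero_add] at *
    linear_combination h2 - X * h1
  | succ r ih =>
    have h1 := KK_R1 r
    have h2 := KK_R2 (r+1)
    rw [← ih]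
    linear_combination h1 - X^(r+2) * h2

noncomputable def gg (r : ℕ) : ℤ⟦X⟧ := ssum fun n => X ^ (n^2+n+n*r) * (-1) ^ n

theorem gg_adm (r : ℕ) : Adm (fun n => X ^ (n^2+n+n*r) * (-1) ^ n) := Adm.of_pow (fun i => by nlinarith)

theorem gg_rel (r : ℕ) : gg r + X ^ (r+2) * gg (r+2) = 1 := by
  unfold gg
  rw [ssum_succ (gg_adm r), mul_ssum (gg_adm _), add_assoc, ssum_add]
  have : ∀ i : ℕ, (X:ℤ⟦X⟧) ^ ((i+1)^2+(i+1)+(i+1)*r) * (-1) ^ (i+1) + X ^ (r+2) * (X ^ (i^2+i+i*(r+2)) * (-1)^i) = 0 := by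
    intro i; ring
  simp only [this]
  ext n; simp [ssum]

theorem KK_eq (r : ℕ) : KK r = Cs * gg r := by
  have h : ∀ k r, X ^ k ∣ KK r - Cs * gg r := by
    intro k
    induction k with
    | zero => intro r; simp
    | succ k ih =>
      intro r
      have : KK r - Cs * gg r = X ^ (r+1) * (X * (-(KK (r+2) - Cs * gg (r+2)))) := by
        linear_combination KK_C r - Cs * gg_rel r
      rw [this, pow_succ']
      exact Dvd.dvd.mul_left (mul_dvd_mul_left _ ((ih _).neg_right)) _
  rw [← sub_eq_zero]
  ext n
  rw [map_zero]
  exact X_pow_dvd_iff.mp (h (n+1) r) n (Nat.lt_succ_self n)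

noncomputable def phis : ℤ⟦X⟧ := 1 - 2 * X * gg 1

theorem Cs_phis : Cs * phis = 1 := by
  have h := KK_eq 1
  have : Cs = 1 + 2 * X * KK 1 := rfl
  unfold phis
  linear_combination this + 2 * X * h

def chi (k : ℤ) : ℤ := if k % 3 = 1 then 1 else if k % 3 = 2 then -1 else 0
def tau (k : ℤ) : ℤ := if k % 3 = 0 then 2 else -1

noncomputable def Ss : ℤ⟦X⟧ := 1 - 6 * ssum fun r => X ^ (r+1) * (((chi r : ℤ) : ℤ⟦X⟧) * gg (r+1))

theorem T_eq (M : ℕ) : 2 * X * KT 0 + ∑ r ∈ Finset.range M, ((tau (r+1) : ℤ) : ℤ⟦X⟧) * (2 * X ^ (r+2) * KT (r+1))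
   = 2 * X * KK 1 - 6 * ∑ s ∈ Finset.range M, X ^ (s+1) * (((chi s : ℤ) : ℤ⟦X⟧) * KK (s+1))
    + X ^ (M+1) * (2 * ((tau (M+1) : ℤ) : ℤ⟦X⟧) * KK (M+1) - 2 * ((tau (M+2) : ℤ) : ℤ⟦X⟧) * KT M) := by
  induction M with
  | zero =>
    simp only [Finset.range_zero, Finset.sum_empty, tau]; norm_num; ring
  | succ M ih =>
    rw [Finset.sum_range_succ, ← add_assoc, ih, Finset.sum_range_succ]
    have h2 := KK_R2 M
    have e1 : ((tau (M+2) : ℤ) : ℤ⟦X⟧) = tau (M+1) + 3 * chi M := by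
      rw [show ((tau (M+2) : ℤ) : ℤ⟦X⟧) = ((tau (M+1) + 3 * chi M : ℤ) : ℤ⟦X⟧) from congrArg _ _]
      · push_cast; ring
      · unfold tau chi
        have : (M:ℤ) % 3 = 0 ∨ (M:ℤ) % 3 = 1 ∨ (M:ℤ)%3 = 2 := by omega
        split_ifs <;> omega
    have e2 : ((tau (M+3) : ℤ) : ℤ⟦X⟧) = - tau (M+1) - tau (M+2) := by
      rw [show ((tau (M+3) : ℤ) : ℤ⟦X⟧) = ((- tau (M+1) - tau (M+2) : ℤ) : ℤ⟦X⟧) from congrArg _ _]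
      · push_cast; ring
      · unfold tau
        split_ifs <;> omega
    push_cast
    rw [show (M:ℤ) + 1 + 1 = M + 2 by ring, show (M:ℤ) + 1 + 2 = M + 3 by ring, e2, e1]
    linear_combination 2 * (tau (M+1) + 3 * chi M) * X^(M+1) * h2

theorem sym_sum (n : ℕ) (B : ℕ → ℕ → ℤ) (hs : ∀ m j, B m j = B j m) (h0 : ∀ m j, n ≤ m → B m j = 0) :
    ∑ m ∈ Finset.range n, ∑ j ∈ Finset.range n, B m j =
    ∑ j ∈ Finset.range n, B j j + 2 * ∑ r ∈ Finset.range n, ∑ j ∈ Finset.range n, B (r+1+j) j := by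
  have h1 : ∀ m j, B m j = (if m < j then B m j else 0) + (if m = j then B m j else 0) + (if j < m then B m j else 0) := by
    intro m j
    rcases lt_trichotomy m j with h | h | h
    · simp [h, h.ne, h.le]
    · simp [h]
    · simp [h, h.ne', h.le]
  have h2 : ∑ m ∈ Finset.range n, ∑ j ∈ Finset.range n, (if m < j then B m j else 0)
     = ∑ m ∈ Finset.range n, ∑ j ∈ Finset.range n, (if j < m then B m j else 0) := by
    rw [Finset.sum_comm]
    apply Finset.sum_congr rfl; intro m _
    apply Finset.sum_congr rfl; intro j _
    rw [hs]
  have h3 : ∑ m ∈ Finset.range n, ∑ j ∈ Finset.range n, (if m = j then B m j else 0) = ∑ j ∈ Finset.range n, B j j := by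
    apply Finset.sum_congr rfl; intro m hm
    rw [Finset.sum_ite_eq, if_pos hm]
  have h4 : ∑ m ∈ Finset.range n, ∑ j ∈ Finset.range n, (if j < m then B m j else 0)
     = ∑ r ∈ Finset.range n, ∑ j ∈ Finset.range n, B (r+1+j) j := by
    rw [Finset.sum_comm, Finset.sum_comm (f := fun r j => B (r+1+j) j)]
    apply Finset.sum_congr rfl; intro j _
    rw [← Finset.sum_filter]
    have : (Finset.range n).filter (fun m => j < m) = Finset.Ico (j+1) n := by
      ext x; simp; omega
    rw [this, Finset.sum_Ico_eq_sum_range]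
    rw [← Finset.sum_subset (Finset.range_mono (show n - (j+1) ≤ n by omega))]
    · apply Finset.sum_congr rfl; intro r _; congr 1; ring
    · intro r _ hr
      apply h0; simp at hr; omega
  simp only [Finset.sum_congr rfl (fun m _ => Finset.sum_congr rfl (fun j _ => h1 m j)), Finset.sum_add_distrib]
  rw [h2, h3, h4]; ring

theorem nbar_diff (n : ℕ) (hn : 1 ≤ n) : (nbar 0 3 n : ℤ) - nbar 1 3 n =
    coeff n (2 * X * KT 0 + ∑ r ∈ Finset.range n, ((tau (r+1) : ℤ) : ℤ⟦X⟧) * (2 * X ^ (r+2) * KT (r+1))) := by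
  rw [nbar_eq _ _ hn, nbar_eq _ _ hn]
  set A : ℕ → ℕ → ℤ := fun m j => coeff n (2 * X ^ (m+j+1) * cc m j) with hA
  have hAs : ∀ m j, A m j = A j m := by
    intro m j; simp only [hA]; rw [cc_symm, add_comm m j]
  have hA0 : ∀ m j, n ≤ m + j → A m j = 0 := by
    intro m j h
    simp only [hA]
    rw [show (2 * X ^ (m+j+1) * cc m j : ℤ⟦X⟧) = X ^ (m+j+1) * (2 * cc m j) by ring, coeff_X_pow_mul', if_neg (by omega)]
  have hKT : ∀ r, coeff n (2 * X ^ (r+1) * KT r) = ∑ j ∈ Finset.range n, A (r + j) j := by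
    intro r
    unfold KT
    rw [mul_ssum (KT_adm r), coeff_ssum_of_lt (N := n+1) _ (by omega), Finset.sum_range_succ]
    · have : coeff n (2 * X ^ (r+1) * (X ^ (2*n) * cc (r+n) n)) = 0 := by
        rw [show (2 * X ^ (r+1) * (X ^ (2*n) * cc (r+n) n) : ℤ⟦X⟧) = X ^ (r+1+2*n) * (2 * cc (r+n) n) by ring, coeff_X_pow_mul', if_neg (by omega)]
      rw [this, add_zero]
      apply Finset.sum_congr rfl; intro j _
      simp only [hA]; congr 1; ring
    · intro i; exact Dvd.dvd.mul_left (KT_adm r i) _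
  rw [map_add, map_sum]
  have e0 := hKT 0
  simp only [zero_add, pow_one] at e0
  rw [e0]
  have e1 : ∀ r ∈ Finset.range n, coeff n (((tau (r+1) : ℤ) : ℤ⟦X⟧) * (2 * X ^ (r+2) * KT (r+1))) = ∑ j ∈ Finset.range n, tau (r+1) * A (r+1+j) j := by
    intro r _
    rw [show ((tau (r+1) : ℤ) : ℤ⟦X⟧) = C (tau (r+1)) by simp, coeff_C_mul, hKT, Finset.mul_sum]
  rw [Finset.sum_congr rfl e1]
  have e2 := sym_sum n (fun m j => tau ((m:ℤ) - j) * A m j) (by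
    intro m j; rw [hAs]; congr 1; unfold tau; split_ifs <;> omega) (by
    intro m j h; rw [hA0 _ _ (by omega)]; simp)
  have e3 : ∑ m ∈ Finset.range n, ∑ j ∈ Finset.range n, tau ((m:ℤ) - j) * A m j
     = 2 * (∑ m ∈ Finset.range n, ∑ j ∈ Finset.range n, (if (m : ℤ) - j ≡ 0 [ZMOD 3] then A m j else 0)
      - ∑ m ∈ Finset.range n, ∑ j ∈ Finset.range n, (if (m : ℤ) - j ≡ 1 [ZMOD 3] then A m j else 0)) := by
    have h5 : ∑ m ∈ Finset.range n, ∑ j ∈ Finset.range n, (if (m : ℤ) - j ≡ 1 [ZMOD 3] then A m j else 0)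
       = ∑ m ∈ Finset.range n, ∑ j ∈ Finset.range n, (if (m : ℤ) - j ≡ 2 [ZMOD 3] then A m j else 0) := by
      rw [Finset.sum_comm]
      apply Finset.sum_congr rfl; intro m _
      apply Finset.sum_congr rfl; intro j _
      rw [hAs j m]
      have : ((j:ℤ) - m ≡ 1 [ZMOD 3]) ↔ ((m:ℤ) - j ≡ 2 [ZMOD 3]) := by
        simp only [Int.ModEq]; omega
      simp only [this]
    have h6 : ∑ m ∈ Finset.range n, ∑ j ∈ Finset.range n, tau ((m:ℤ) - j) * A m j
     = 2 * ∑ m ∈ Finset.range n, ∑ j ∈ Finset.range n, (if (m : ℤ) - j ≡ 0 [ZMOD 3] then A m j else 0)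
      - ∑ m ∈ Finset.range n, ∑ j ∈ Finset.range n, (if (m : ℤ) - j ≡ 1 [ZMOD 3] then A m j else 0)
      - ∑ m ∈ Finset.range n, ∑ j ∈ Finset.range n, (if (m : ℤ) - j ≡ 2 [ZMOD 3] then A m j else 0) := by
      simp only [Finset.mul_sum, ← Finset.sum_sub_distrib]
      apply Finset.sum_congr rfl; intro m _
      apply Finset.sum_congr rfl; intro j _
      simp only [tau, Int.ModEq]
      have : ((m:ℤ) - j) % 3 = 0 ∨ ((m:ℤ) - j) % 3 = 1 ∨ ((m:ℤ) - j) % 3 = 2 := by omega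
      rcases this with h | h | h <;> simp [h]
    rw [h6, ← h5]; ring
  have e4 : ∀ r ∈ Finset.range n, ∀ j ∈ Finset.range n, tau (((r + 1 + j : ℕ):ℤ) - j) * A (r+1+j) j = tau (r+1) * A (r+1+j) j := by
    intro r _ j _; congr 2; push_cast; ring
  simp only [sub_self] at e2
  rw [e3, Finset.sum_congr rfl (fun r hr => Finset.sum_congr rfl (e4 r hr)), ← Finset.mul_sum] at e2
  simp only [show tau 0 = 2 from rfl] at e2
  linarith

theorem F_eq (n : ℕ) (hn : 1 ≤ n) : (nbar 0 3 n : ℤ) - nbar 1 3 n = coeff n (Cs * Ss) := by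
  rw [nbar_diff n hn, T_eq, map_add, coeff_X_pow_mul', if_neg (by omega), add_zero]
  have hadm : Adm (fun r => X ^ (r+1) * (((chi r : ℤ) : ℤ⟦X⟧) * gg (r+1))) := Adm.of_pow (fun i => by omega)
  have h1 : Cs * Ss - 1 = 2 * X * KK 1 - 6 * ssum (fun r => X ^ (r+1) * (((chi r : ℤ) : ℤ⟦X⟧) * KK (r+1))) := by
    have : ssum (fun r => X ^ (r+1) * (((chi r : ℤ) : ℤ⟦X⟧) * KK (r+1))) = Cs * ssum (fun r => X ^ (r+1) * (((chi r : ℤ) : ℤ⟦X⟧) * gg (r+1))) := by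
      rw [mul_ssum hadm]; congr 1; ext1 r; rw [KK_eq]; ring
    rw [this]; unfold Ss
    have : Cs = 1 + 2 * X * KK 1 := rfl
    linear_combination this
  have h2 : coeff n (Cs * Ss) = coeff n (Cs * Ss - 1) := by
    rw [map_sub, coeff_one, if_neg (by omega), sub_zero]
  have hadm2 : Adm (fun r => X ^ (r+1) * (((chi r : ℤ) : ℤ⟦X⟧) * KK (r+1))) := Adm.of_pow (fun i => by omega)
  rw [h2, h1, map_sub, map_sub]
  congr 1
  rw [show (6 : ℤ⟦X⟧) = C 6 from rfl, coeff_C_mul, coeff_C_mul, coeff_ssum_of_lt hadm2 (show n < n + 1 by omega),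
    Finset.sum_range_succ, map_sum]
  rw [coeff_X_pow_mul' _ (n+1) n, if_neg (by omega), add_zero]

end

section

def sg (k : ℤ) : ℤ := if k % 2 = 0 then 1 else -1

theorem chi_congr {a b : ℤ} (h : a % 3 = b % 3) : chi a = chi b := by unfold chi; rw [h]
theorem chi_neg (a : ℤ) : chi (-a) = - chi a := by unfold chi; split_ifs <;> omega
theorem chi_congr_neg {a b : ℤ} (h : (a + b) % 3 = 0) : chi a = - chi b := by
  rw [← chi_neg]; apply chi_congr; omega
theorem sg_congr {a b : ℤ} (h : a % 2 = b % 2) : sg a = sg b := by unfold sg; rw [h]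
theorem sg_congr_neg {a b : ℤ} (h : a % 2 ≠ b % 2) : sg a = - sg b := by
  unfold sg; split_ifs <;> omega
theorem tau_congr {a b : ℤ} (h : a % 3 = b % 3) : tau a = tau b := by unfold tau; rw [h]
theorem tau_even (a : ℤ) : tau (-a) = tau a := by unfold tau; split_ifs <;> omega

def psi (m u v : ℤ) : ℤ := (tau (u+v) - tau (2*m)) * chi (u - v)

theorem chi_of (a : ℤ) : (a % 3 = 0 ∧ chi a = 0) ∨ (a % 3 = 1 ∧ chi a = 1) ∨ (a % 3 = 2 ∧ chi a = -1) := by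
  unfold chi; split_ifs <;> omega
theorem tau_of (a : ℤ) : (a % 3 = 0 ∧ tau a = 2) ∨ (a % 3 = 1 ∧ tau a = -1) ∨ (a % 3 = 2 ∧ tau a = -1) := by
  unfold tau; split_ifs <;> omega

theorem psi_eq (m u v : ℤ) : psi m u v = chi v - chi u - chi (u - v - m) - chi (u - v + m) := by
  unfold psi
  have h1 : u % 3 = 0 ∨ u % 3 = 1 ∨ u % 3 = 2 := by omega
  have h2 : v % 3 = 0 ∨ v % 3 = 1 ∨ v % 3 = 2 := by omega
  have h3 : m % 3 = 0 ∨ m % 3 = 1 ∨ m % 3 = 2 := by omega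
  have key : ∀ m' u' v' : ℤ, u % 3 = u' → v % 3 = v' → m % 3 = m' → 
    (tau (u'+v') - tau (2*m')) * chi (u' - v') = chi v' - chi u' - chi (u' - v' - m') - chi (u' - v' + m') →
    (tau (u+v) - tau (2*m)) * chi (u - v) = chi v - chi u - chi (u - v - m) - chi (u - v + m) := by
    intro m' u' v' e1 e2 e3 h
    rw [tau_congr (show (u+v)%3 = (u'+v')%3 by omega), tau_congr (show (2*m)%3 = (2*m')%3 by omega),
      chi_congr (show (u-v)%3 = (u'-v')%3 by omega), chi_congr (show v%3 = v'%3 by omega),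
      chi_congr (show u%3 = u'%3 by omega), chi_congr (show (u-v-m)%3 = (u'-v'-m')%3 by omega),
      chi_congr (show (u-v+m)%3 = (u'-v'+m')%3 by omega), h]
  rcases h1 with h1 | h1 | h1 <;> rcases h2 with h2 | h2 | h2 <;> rcases h3 with h3 | h3 | h3 <;>
    exact key _ _ _ h1 h2 h3 (by decide)

noncomputable def TT (N : ℤ) : Finset (ℤ × ℤ × ℤ) :=
  ((Finset.Icc (-N) N) ×ˢ (Finset.Icc 1 N) ×ˢ (Finset.Icc 1 N)).filter
    (fun t => t.1 * t.1 + t.2.1 * t.2.2 = N)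

theorem mem_TT (N m u v : ℤ) : (m, u, v) ∈ TT N ↔ 0 < u ∧ 0 < v ∧ m * m + u * v = N := by
  unfold TT
  simp only [Finset.mem_filter, Finset.mem_product, Finset.mem_Icc]
  constructor
  · rintro ⟨⟨_, ⟨h1, _⟩, h2, _⟩, h⟩; exact ⟨by omega, by omega, h⟩
  · rintro ⟨h1, h2, h⟩
    refine ⟨⟨⟨?_, ?_⟩, ⟨by omega, ?_⟩, by omega, ?_⟩, h⟩ <;> nlinarith [mul_pos h1 h2, sq_nonneg (m-1), sq_nonneg (m+1), mul_self_nonneg m]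

noncomputable def SS (N : ℤ) (f : ℤ → ℤ → ℤ → ℤ) : ℤ := ∑ t ∈ TT N, f t.1 t.2.1 t.2.2

theorem SS_congr {N : ℤ} {f g : ℤ → ℤ → ℤ → ℤ}
    (h : ∀ m u v, 0 < u → 0 < v → m * m + u * v = N → f m u v = g m u v) : SS N f = SS N g := by
  apply Finset.sum_congr rfl
  rintro ⟨m, u, v⟩ ht
  rw [mem_TT] at ht
  exact h m u v ht.1 ht.2.1 ht.2.2

theorem SS_add {N : ℤ} (f g : ℤ → ℤ → ℤ → ℤ) : SS N f + SS N g = SS N (fun m u v => f m u v + g m u v) := by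
  simp [SS, Finset.sum_add_distrib]
theorem SS_sub {N : ℤ} (f g : ℤ → ℤ → ℤ → ℤ) : SS N f - SS N g = SS N (fun m u v => f m u v - g m u v) := by
  simp [SS, Finset.sum_sub_distrib]
theorem SS_neg {N : ℤ} (f : ℤ → ℤ → ℤ → ℤ) : - SS N f = SS N (fun m u v => - f m u v) := by
  simp [SS]
theorem SS_mul {N : ℤ} (c : ℤ) (f : ℤ → ℤ → ℤ → ℤ) : c * SS N f = SS N (fun m u v => c * f m u v) := by
  simp [SS, Finset.mul_sum]

theorem SS_reindex {N : ℤ} (P Q : ℤ → ℤ → ℤ → Prop) [∀ m u v, Decidable (P m u v)]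
    [∀ m u v, Decidable (Q m u v)] (f g a1 a2 a3 b1 b2 b3 : ℤ → ℤ → ℤ → ℤ)
    (ha : ∀ m u v, 0 < u → 0 < v → m * m + u * v = N → P m u v →
      (0 < a2 m u v ∧ 0 < a3 m u v ∧ a1 m u v * a1 m u v + a2 m u v * a3 m u v = N ∧
        Q (a1 m u v) (a2 m u v) (a3 m u v)) ∧
        (b1 (a1 m u v) (a2 m u v) (a3 m u v) = m ∧ b2 (a1 m u v) (a2 m u v) (a3 m u v) = u ∧
        b3 (a1 m u v) (a2 m u v) (a3 m u v) = v) ∧ f m u v = g (a1 m u v) (a2 m u v) (a3 m u v))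
    (hb : ∀ m u v, 0 < u → 0 < v → m * m + u * v = N → Q m u v →
      (0 < b2 m u v ∧ 0 < b3 m u v ∧ b1 m u v * b1 m u v + b2 m u v * b3 m u v = N ∧
        P (b1 m u v) (b2 m u v) (b3 m u v)) ∧
        (a1 (b1 m u v) (b2 m u v) (b3 m u v) = m ∧ a2 (b1 m u v) (b2 m u v) (b3 m u v) = u ∧
        a3 (b1 m u v) (b2 m u v) (b3 m u v) = v)) :
    SS N (fun m u v => if P m u v then f m u v else 0) = SS N (fun m u v => if Q m u v then g m u v else 0) := by
  unfold SS
  rw [← Finset.sum_filter (p := fun t : ℤ × ℤ × ℤ => P t.1 t.2.1 t.2.2) (f := fun t => f t.1 t.2.1 t.2.2),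
    ← Finset.sum_filter (p := fun t : ℤ × ℤ × ℤ => Q t.1 t.2.1 t.2.2) (f := fun t => g t.1 t.2.1 t.2.2)]
  refine Finset.sum_bij' (fun t _ => (a1 t.1 t.2.1 t.2.2, a2 t.1 t.2.1 t.2.2, a3 t.1 t.2.1 t.2.2))
    (fun t _ => (b1 t.1 t.2.1 t.2.2, b2 t.1 t.2.1 t.2.2, b3 t.1 t.2.1 t.2.2)) ?_ ?_ ?_ ?_ ?_
  all_goals
    rintro ⟨m, u, v⟩ ht
    rw [Finset.mem_filter, mem_TT] at ht
    obtain ⟨⟨h1, h2, h3⟩, h4⟩ := ht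
  · rw [Finset.mem_filter, mem_TT]
    obtain ⟨⟨k1, k2, k3, k4⟩, _⟩ := ha m u v h1 h2 h3 h4
    exact ⟨⟨k1, k2, k3⟩, k4⟩
  · rw [Finset.mem_filter, mem_TT]
    obtain ⟨⟨k1, k2, k3, k4⟩, _⟩ := hb m u v h1 h2 h3 h4
    exact ⟨⟨k1, k2, k3⟩, k4⟩
  · obtain ⟨_, ⟨k1, k2, k3⟩, _⟩ := ha m u v h1 h2 h3 h4
    simp only [k1, k2, k3]
  · obtain ⟨_, ⟨k1, k2, k3⟩⟩ := hb m u v h1 h2 h3 h4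
    simp only [k1, k2, k3]
  · exact (ha m u v h1 h2 h3 h4).2.2

/-- m -> -m -/
theorem SS_negm {N : ℤ} (f : ℤ → ℤ → ℤ → ℤ) : SS N f = SS N (fun m u v => f (-m) u v) := by
  have := SS_reindex (N := N) (fun _ _ _ => True) (fun _ _ _ => True) f (fun m u v => f (-m) u v)
    (fun m _ _ => -m) (fun _ u _ => u) (fun _ _ v => v) (fun m _ _ => -m) (fun _ u _ => u) (fun _ _ v => v)
    (fun m u v h1 h2 h3 _ => by simp_all) (fun m u v h1 h2 h3 _ => by simp_all)
  simpa using this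

/-- u <-> v -/
theorem SS_swap {N : ℤ} (f : ℤ → ℤ → ℤ → ℤ) : SS N f = SS N (fun m u v => f m v u) := by
  have := SS_reindex (N := N) (fun _ _ _ => True) (fun _ _ _ => True) f (fun m u v => f m v u)
    (fun m _ _ => m) (fun _ _ v => v) (fun _ u _ => u) (fun m _ _ => m) (fun _ _ v => v) (fun _ u _ => u)
    (fun m u v h1 h2 h3 _ => by simp_all [mul_comm]) (fun m u v h1 h2 h3 _ => by simp_all [mul_comm])
  simpa using this

end

section

/-- odd difference part -/
theorem L_odd (N : ℤ) : SS N (fun m u v => if u < v ∧ (u - v) % 2 ≠ 0 then sg (m+u) * psi m u v else 0)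
    = SS N (fun m u v => if (u - v) % 2 ≠ 0 then sg (m+u) * (- chi u + chi (v - u + 2 * m)) else 0) := by
  have h1 : SS N (fun m u v => if u < v ∧ (u - v) % 2 ≠ 0 then sg (m+u) * psi m u v else 0)
    = SS N (fun m u v => if v < u ∧ (u - v) % 2 ≠ 0 then sg (m+u) * psi m u v else 0) := by
    rw [SS_swap]
    apply SS_congr; intro m u v _ _ _
    have : (v < u ∧ (v - u) % 2 ≠ 0) ↔ (v < u ∧ (u - v) % 2 ≠ 0) := by omega
    simp only [this]
    split_ifs with h
    · rw [sg_congr_neg (show (m+v)%2 ≠ (m+u)%2 by omega)]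
      unfold psi
      rw [add_comm v u, show v - u = -(u - v) by ring, chi_neg]; ring
    · rfl
  have h2 : 2 * SS N (fun m u v => if u < v ∧ (u - v) % 2 ≠ 0 then sg (m+u) * psi m u v else 0)
     = SS N (fun m u v => if (u - v) % 2 ≠ 0 then sg (m+u) * psi m u v else 0) := by
    rw [two_mul]; nth_rewrite 2 [h1]; rw [SS_add]
    apply SS_congr; intro m u v _ _ _
    split_ifs <;> first | (exfalso; omega) | ring
  have h3 : SS N (fun m u v => if (u - v) % 2 ≠ 0 then sg (m+u) * chi v else 0) =
      - SS N (fun m u v => if (u - v) % 2 ≠ 0 then sg (m+u) * chi u else 0) := by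
    rw [SS_swap, SS_neg]
    apply SS_congr; intro m u v _ _ _
    have : ((v - u) % 2 ≠ 0) ↔ ((u - v) % 2 ≠ 0) := by omega
    simp only [this]
    split_ifs with h
    · rw [sg_congr_neg (show (m+v)%2 ≠ (m+u)%2 by omega)]; ring
    · rfl
  have h4 : SS N (fun m u v => if (u - v) % 2 ≠ 0 then sg (m+u) * chi (u - v - m) else 0) =
      SS N (fun m u v => if (u - v) % 2 ≠ 0 then sg (m+u) * chi (u - v + m) else 0) := by
    rw [SS_negm]
    apply SS_congr; intro m u v _ _ _
    rw [sg_congr (show (-m+u)%2 = (m+u)%2 by omega), sub_neg_eq_add]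
  have h5 : SS N (fun m u v => if (u - v) % 2 ≠ 0 then sg (m+u) * psi m u v else 0) =
     SS N (fun m u v => if (u - v) % 2 ≠ 0 then sg (m+u) * chi v else 0)
     - SS N (fun m u v => if (u - v) % 2 ≠ 0 then sg (m+u) * chi u else 0)
     - SS N (fun m u v => if (u - v) % 2 ≠ 0 then sg (m+u) * chi (u - v - m) else 0)
     - SS N (fun m u v => if (u - v) % 2 ≠ 0 then sg (m+u) * chi (u - v + m) else 0) := by
    simp only [SS_sub]
    apply SS_congr; intro m u v _ _ _
    rw [psi_eq]; split_ifs <;> ring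
  have h6 : SS N (fun m u v => if (u - v) % 2 ≠ 0 then sg (m+u) * (- chi u + chi (v - u + 2 * m)) else 0)
     = - SS N (fun m u v => if (u - v) % 2 ≠ 0 then sg (m+u) * chi u else 0)
     - SS N (fun m u v => if (u - v) % 2 ≠ 0 then sg (m+u) * chi (u - v + m) else 0) := by
    rw [SS_neg, SS_sub]
    apply SS_congr; intro m u v _ _ _
    rw [chi_congr_neg (show (v - u + 2 * m + (u - v + m)) % 3 = 0 by omega)]
    split_ifs <;> ring
  rw [h6]
  rw [h4, h3] at h5
  linarith

theorem C4 (N : ℤ) : SS N (fun m u v => if (u - v) % 2 ≠ 0 then sg (m+u) * chi (v - u + 2 * m) else 0)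
   = 2 * SS N (fun m u v => if u % 2 ≠ 0 ∧ v + 2 * m < u then sg m * chi u else 0) := by
  have h1 : SS N (fun m u v => if (u - v) % 2 ≠ 0 ∧ 0 < v - u + 2 * m then sg (m+u) * chi (v - u + 2 * m) else 0)
    = SS N (fun m u v => if v % 2 ≠ 0 ∧ u + 2 * m < v then sg m * chi v else 0) := by
    apply SS_reindex (fun m u v => (u - v) % 2 ≠ 0 ∧ 0 < v - u + 2 * m) (fun m u v => v % 2 ≠ 0 ∧ u + 2 * m < v) _ _
      (fun m u v => m - u) (fun m u v => u) (fun m u v => v - u + 2 * m)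
      (fun m u v => m + u) (fun m u v => u) (fun m u v => v - u - 2 * m)
    · intro m u v h1 h2 h3 h4
      refine ⟨⟨h1, by omega, by linarith [h3], by omega, by omega⟩, ⟨by ring, rfl, by ring⟩, ?_⟩
      rw [sg_congr (show (m+u)%2 = (m-u)%2 by omega)]
    · intro m u v h1 h2 h3 h4
      refine ⟨⟨h1, by omega, by linarith [h3], by omega, by omega⟩, ⟨by ring, rfl, by ring⟩⟩
  have h2 : SS N (fun m u v => if (u - v) % 2 ≠ 0 ∧ v - u + 2 * m < 0 then sg (m+u) * chi (v - u + 2 * m) else 0)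
    = SS N (fun m u v => if u % 2 ≠ 0 ∧ v - 2 * m < u then sg m * chi u else 0) := by
    apply SS_reindex (fun m u v => (u - v) % 2 ≠ 0 ∧ v - u + 2 * m < 0) (fun m u v => u % 2 ≠ 0 ∧ v - 2 * m < u) _ _
      (fun m u v => m + v) (fun m u v => u - v - 2 * m) (fun m u v => v)
      (fun m u v => m - v) (fun m u v => u - v + 2 * m) (fun m u v => v)
    · intro m u v h1 h2 h3 h4
      refine ⟨⟨by omega, h2, by linarith [h3], by omega, by omega⟩, ⟨by ring, by ring, rfl⟩, ?_⟩
      rw [sg_congr_neg (show (m+u)%2 ≠ (m+v)%2 by omega), chi_congr_neg (show (v - u + 2*m + (u - v - 2 * m)) % 3 = 0 by omega)]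
      ring
    · intro m u v h1 h2 h3 h4
      refine ⟨⟨by omega, h2, by linarith [h3], by omega, by omega⟩, ⟨by ring, by ring, rfl⟩⟩
  have h3 : SS N (fun m u v => if u % 2 ≠ 0 ∧ v - 2 * m < u then sg m * chi u else 0) =
     SS N (fun m u v => if u % 2 ≠ 0 ∧ v + 2 * m < u then sg m * chi u else 0) := by
    rw [SS_negm]
    apply SS_congr; intro m u v _ _ _
    rw [sg_congr (show (-m)%2 = m%2 by omega), show v - 2 * (-m) = v + 2 * m by ring]
  have h4 : SS N (fun m u v => if (u - v) % 2 ≠ 0 then sg (m+u) * chi (v - u + 2 * m) else 0)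
    = SS N (fun m u v => if (u - v) % 2 ≠ 0 ∧ 0 < v - u + 2 * m then sg (m+u) * chi (v - u + 2 * m) else 0)
    + SS N (fun m u v => if (u - v) % 2 ≠ 0 ∧ v - u + 2 * m < 0 then sg (m+u) * chi (v - u + 2 * m) else 0) := by
    rw [SS_add]
    apply SS_congr; intro m u v _ _ _
    split_ifs <;> first | (exfalso; omega) | ring
  rw [h4, h1, h2, h3, SS_swap]; ring

theorem C1 (N : ℤ) : SS N (fun m u v => if u < v ∧ (u - v) % 2 = 0 ∧ v - u < 2 * |m| then sg (m+u) * psi m u v else 0) = 0 := by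
  have h1 : SS N (fun m u v => if u < v ∧ (u - v) % 2 = 0 ∧ v - u < 2 * m then sg (m+u) * psi m u v else 0)
     = SS N (fun m u v => if u < v ∧ (u - v) % 2 = 0 ∧ v - u < 2 * m then -(sg (m+u) * psi m u v) else 0) := by
    apply SS_reindex (fun m u v => u < v ∧ (u - v) % 2 = 0 ∧ v - u < 2 * m) (fun m u v => u < v ∧ (u - v) % 2 = 0 ∧ v - u < 2 * m)
      _ _ (fun m u v => v + (u - v)/2) (fun m u v => m + (u - v)/2) (fun m u v => m - (u - v)/2)
      (fun m u v => v + (u - v)/2) (fun m u v => m + (u - v)/2) (fun m u v => m - (u - v)/2)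
    · intro m u v h1 h2 h3 h4
      obtain ⟨k, hk⟩ : ∃ k, u - v = 2 * k := ⟨(u-v)/2, by omega⟩
      have e : (u - v)/2 = k := by omega
      have e2 : (m + k - (m - k))/2 = k := by omega
      simp only [e, e2]
      obtain rfl : u = v + 2 * k := by omega
      refine ⟨⟨by omega, by omega, by linarith, by omega, by omega, by omega⟩, ⟨by ring, by ring, by ring⟩, ?_⟩
      rw [sg_congr (show (m + (v + 2 * k)) % 2 = (v + k + (m + k)) % 2 by omega)]
      unfold psi
      rw [show v + 2 * k + v = 2 * (v + k) by ring, show m + k + (m - k) = 2 * m by ring,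
        show v + 2 * k - v = 2 * k by ring, show m + k - (m - k) = 2 * k by ring]
      ring
    · intro m u v h1 h2 h3 h4
      obtain ⟨k, hk⟩ : ∃ k, u - v = 2 * k := ⟨(u-v)/2, by omega⟩
      have e : (u - v)/2 = k := by omega
      have e2 : (m + k - (m - k))/2 = k := by omega
      simp only [e, e2]
      obtain rfl : u = v + 2 * k := by omega
      refine ⟨⟨by omega, by omega, by linarith, by omega, by omega, by omega⟩, ⟨by ring, by ring, by ring⟩⟩
  have h2 : SS N (fun m u v => if u < v ∧ (u - v) % 2 = 0 ∧ v - u < 2 * m then sg (m+u) * psi m u v else 0)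
     = SS N (fun m u v => if u < v ∧ (u - v) % 2 = 0 ∧ v - u < -2 * m then sg (m+u) * psi m u v else 0) := by
    rw [SS_negm]
    apply SS_congr; intro m u v _ _ _
    rw [sg_congr (show (-m+u)%2 = (m+u)%2 by omega), show 2 * -m = -2*m by ring]
    unfold psi; rw [show 2 * -m = -(2*m) by ring, tau_even]
  have h3 : SS N (fun m u v => if u < v ∧ (u - v) % 2 = 0 ∧ v - u < 2 * |m| then sg (m+u) * psi m u v else 0)
    = SS N (fun m u v => if u < v ∧ (u - v) % 2 = 0 ∧ v - u < 2 * m then sg (m+u) * psi m u v else 0)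
     + SS N (fun m u v => if u < v ∧ (u - v) % 2 = 0 ∧ v - u < -2 * m then sg (m+u) * psi m u v else 0) := by
    rw [SS_add]
    apply SS_congr; intro m u v _ _ _
    rcases abs_cases m with ⟨h, _⟩ | ⟨h, _⟩ <;> rw [h] <;> split_ifs <;> first | (exfalso; omega) | ring
  have h4 : SS N (fun m u v => if u < v ∧ (u - v) % 2 = 0 ∧ v - u < 2 * m then -(sg (m+u) * psi m u v) else 0)
    = - SS N (fun m u v => if u < v ∧ (u - v) % 2 = 0 ∧ v - u < 2 * m then sg (m+u) * psi m u v else 0) := by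
    rw [SS_neg]; apply SS_congr; intro m u v _ _ _; split_ifs <;> ring
  rw [h3, ← h2]
  rw [h4] at h1
  linarith

theorem C6 (N : ℤ) : SS N (fun m u v => if (u - v) % 2 = 0 ∧ 2 * |m| < v - u then sg (m+u) * psi m u v else 0)
   = SS N (fun m u v => if (u - v) % 2 = 0 ∧ 2 * |m| < u - v then sg (m+u) * chi u else 0)
   - SS N (fun m u v => if (u - v) % 2 = 0 ∧ 2 * |m| < v - u then sg (m+u) * chi u else 0)
   - 2 * SS N (fun m u v => if v % 2 = 0 ∧ v + 2 * m < u then sg m * chi u else 0) := by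
  have h1 : SS N (fun m u v => if (u - v) % 2 = 0 ∧ 2 * |m| < v - u then sg (m+u) * chi v else 0)
    = SS N (fun m u v => if (u - v) % 2 = 0 ∧ 2 * |m| < u - v then sg (m+u) * chi u else 0) := by
    rw [SS_swap]
    apply SS_congr; intro m u v _ _ _
    have : ((v - u) % 2 = 0 ∧ 2 * |m| < u - v) ↔ ((u - v) % 2 = 0 ∧ 2 * |m| < u - v) := by omega
    simp only [this]
    split_ifs with h
    · rw [sg_congr (show (m+v)%2 = (m+u)%2 by omega)]
    · rfl
  have h2 : SS N (fun m u v => if (u - v) % 2 = 0 ∧ 2 * |m| < v - u then sg (m+u) * chi (u - v - m) else 0)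
    = SS N (fun m u v => if (u - v) % 2 = 0 ∧ 2 * |m| < v - u then sg (m+u) * chi (u - v + m) else 0) := by
    rw [SS_negm]
    apply SS_congr; intro m u v _ _ _
    rw [sg_congr (show (-m+u)%2 = (m+u)%2 by omega), sub_neg_eq_add, abs_neg]
  have h3 : SS N (fun m u v => if (u - v) % 2 = 0 ∧ 2 * |m| < v - u then sg (m+u) * psi m u v else 0) =
     SS N (fun m u v => if (u - v) % 2 = 0 ∧ 2 * |m| < v - u then sg (m+u) * chi v else 0)
     - SS N (fun m u v => if (u - v) % 2 = 0 ∧ 2 * |m| < v - u then sg (m+u) * chi u else 0)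
     - SS N (fun m u v => if (u - v) % 2 = 0 ∧ 2 * |m| < v - u then sg (m+u) * chi (u - v - m) else 0)
     - SS N (fun m u v => if (u - v) % 2 = 0 ∧ 2 * |m| < v - u then sg (m+u) * chi (u - v + m) else 0) := by
    simp only [SS_sub]
    apply SS_congr; intro m u v _ _ _
    rw [psi_eq]; split_ifs <;> ring
  have h4 : SS N (fun m u v => if (u - v) % 2 = 0 ∧ 2 * |m| < v - u then sg (m+u) * chi (u - v + m) else 0)
     = SS N (fun m u v => if u % 2 = 0 ∧ u + 2 * m < v then sg m * chi v else 0) := by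
    apply SS_reindex (fun m u v => (u - v) % 2 = 0 ∧ 2 * |m| < v - u) (fun m u v => u % 2 = 0 ∧ u + 2 * m < v) _ _
      (fun m u v => m - u) (fun m u v => 2 * u) (fun m u v => m + (v - u)/2)
      (fun m u v => m + u/2) (fun m u v => u/2) (fun m u v => 2 * v - u/2 - 2 * m)
    · intro m u v h1 h2 h3 h4
      have a1 := le_abs_self m
      have a2 := neg_abs_le m
      obtain ⟨k, hk⟩ : ∃ k, v - u = 2 * k := ⟨(v-u)/2, by omega⟩
      have e : (v - u)/2 = k := by omega
      have e2 : (2 * u)/2 = u := by omega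
      simp only [e, e2]
      obtain rfl : v = u + 2 * k := by omega
      refine ⟨⟨by omega, by omega, by linarith, by omega, by omega⟩, ⟨by ring, by trivial, by ring⟩, ?_⟩
      rw [sg_congr (show (m+u)%2 = (m-u)%2 by omega), chi_congr (show (u - (u + 2 * k) + m) % 3 = (m + k) % 3 by omega)]
    · intro m u v h1 h2 h3 h4
      obtain ⟨k, hk⟩ : ∃ k, u = 2 * k := ⟨u/2, by omega⟩
      have e : u/2 = k := by omega
      have e3 : (2 * v - k - 2 * m - k)/2 = v - m - k := by omega
      simp only [e, e3]
      subst hk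
      refine ⟨⟨by omega, by omega, by linarith, by omega, ?_⟩, ⟨by ring, by ring, by ring⟩⟩
      rcases abs_cases (m+k) with ⟨h, _⟩ | ⟨h, _⟩ <;> rw [h] <;> omega
  rw [h3, h2, h1, h4]
  have h5 : SS N (fun m u v => if u % 2 = 0 ∧ u + 2 * m < v then sg m * chi v else 0)
     = SS N (fun m u v => if v % 2 = 0 ∧ v + 2 * m < u then sg m * chi u else 0) := SS_swap _
  rw [h5]; ring

theorem L_eq (N : ℤ) : SS N (fun m u v => if u < v then sg (m+u) * psi m u v else 0)
   = - SS N (fun m u v => sg (m+u) * chi u) + SS N (fun m u v => if v - u = 2 * |m| then sg (m+u) * chi u else 0)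
    + SS N (fun m u v => if u < v ∧ v - u = 2 * |m| then sg (m+u) * psi m u v else 0) := by
  have h1 : SS N (fun m u v => if u < v then sg (m+u) * psi m u v else 0)
    = SS N (fun m u v => if u < v ∧ (u - v) % 2 ≠ 0 then sg (m+u) * psi m u v else 0)
    + SS N (fun m u v => if u < v ∧ (u - v) % 2 = 0 ∧ v - u < 2 * |m| then sg (m+u) * psi m u v else 0)
    + SS N (fun m u v => if (u - v) % 2 = 0 ∧ 2 * |m| < v - u then sg (m+u) * psi m u v else 0)
    + SS N (fun m u v => if u < v ∧ v - u = 2 * |m| then sg (m+u) * psi m u v else 0) := by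
    simp only [SS_add]
    apply SS_congr; intro m u v _ _ _
    have := abs_nonneg m
    split_ifs <;> first | (exfalso; omega) | ring
  have h2 : SS N (fun m u v => if (u - v) % 2 ≠ 0 then sg (m+u) * (- chi u + chi (v - u + 2 * m)) else 0)
    = - SS N (fun m u v => if (u - v) % 2 ≠ 0 then sg (m+u) * chi u else 0)
    + SS N (fun m u v => if (u - v) % 2 ≠ 0 then sg (m+u) * chi (v - u + 2 * m) else 0) := by
    rw [SS_neg, SS_add]
    apply SS_congr; intro m u v _ _ _
    split_ifs <;> ring
  have h3 : SS N (fun m u v => if u % 2 ≠ 0 ∧ v + 2 * m < u then sg m * chi u else 0)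
     - SS N (fun m u v => if v % 2 = 0 ∧ v + 2 * m < u then sg m * chi u else 0)
     = - SS N (fun m u v => if (u - v) % 2 = 0 ∧ v + 2 * m < u then sg (m+u) * chi u else 0) := by
    rw [SS_neg, SS_sub]
    apply SS_congr; intro m u v _ _ _
    by_cases hu : u % 2 = 0
    · rw [sg_congr (show (m+u)%2 = m%2 by omega)]
      split_ifs <;> first | (exfalso; omega) | ring
    · rw [sg_congr_neg (show (m+u)%2 ≠ m%2 by omega)]
      split_ifs <;> first | (exfalso; omega) | ring
  have h4 : SS N (fun m u v => if (u - v) % 2 = 0 ∧ v + 2 * m < u then sg (m+u) * chi u else 0)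
    = SS N (fun m u v => if (u - v) % 2 = 0 ∧ v - 2 * m < u then sg (m+u) * chi u else 0) := by
    rw [SS_negm]
    apply SS_congr; intro m u v _ _ _
    rw [sg_congr (show (-m+u)%2 = (m+u)%2 by omega), show v + 2 * -m = v - 2*m by ring]
  have h5 : - SS N (fun m u v => sg (m+u) * chi u) + SS N (fun m u v => if v - u = 2 * |m| then sg (m+u) * chi u else 0)
    = - SS N (fun m u v => if (u - v) % 2 ≠ 0 then sg (m+u) * chi u else 0)
    + SS N (fun m u v => if (u - v) % 2 = 0 ∧ 2 * |m| < u - v then sg (m+u) * chi u else 0)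
    - SS N (fun m u v => if (u - v) % 2 = 0 ∧ 2 * |m| < v - u then sg (m+u) * chi u else 0)
    - SS N (fun m u v => if (u - v) % 2 = 0 ∧ v + 2 * m < u then sg (m+u) * chi u else 0)
    - SS N (fun m u v => if (u - v) % 2 = 0 ∧ v - 2 * m < u then sg (m+u) * chi u else 0) := by
    simp only [SS_neg, SS_add, SS_sub]
    apply SS_congr; intro m u v _ _ _
    rcases abs_cases m with ⟨h, _⟩ | ⟨h, _⟩ <;> rw [h] <;> split_ifs <;> first | (exfalso; omega) | ring
  rw [h1, L_odd, C1, C6, h2, C4, h5]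
  linarith

end

section

theorem bdry_sq (R : ℕ) (f : ℤ → ℤ → ℤ → ℤ) :
    SS (((R:ℤ)+1)*(R+1)) (fun m u v => if v - u = 2 * |m| then f m u v else 0)
    = ∑ m ∈ Finset.Ioo (-((R:ℤ)+1)) (R+1), f m (R + 1 - |m|) (R + 1 + |m|) := by
  unfold SS
  rw [← Finset.sum_filter (p := fun t : ℤ × ℤ × ℤ => t.2.2 - t.2.1 = 2 * |t.1|) (f := fun t => f t.1 t.2.1 t.2.2)]
  symm
  refine Finset.sum_bij' (fun m _ => (m, (R:ℤ) + 1 - |m|, (R:ℤ) + 1 + |m|)) (fun t _ => t.1) ?_ ?_ ?_ ?_ ?_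
  · intro m hm
    rw [Finset.mem_filter, mem_TT]
    rw [Finset.mem_Ioo, ← abs_lt] at hm
    have := abs_nonneg m
    refine ⟨⟨by omega, by omega, ?_⟩, by ring⟩
    have := abs_mul_abs_self m
    linarith
  · rintro ⟨m, u, v⟩ ht
    rw [Finset.mem_filter, mem_TT] at ht
    obtain ⟨⟨h1, h2, h3⟩, h4⟩ := ht
    simp only at h4 ⊢
    rw [Finset.mem_Ioo, ← abs_lt]
    have e := abs_mul_abs_self m
    have e0 := abs_nonneg m
    have : (u + |m|) * (u + |m|) = ((R:ℤ)+1)*(R+1) := by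
      obtain rfl : v = u + 2 * |m| := by omega
      linarith
    nlinarith
  · intro m _; rfl
  · rintro ⟨m, u, v⟩ ht
    rw [Finset.mem_filter, mem_TT] at ht
    obtain ⟨⟨h1, h2, h3⟩, h4⟩ := ht
    simp only at h4 ⊢
    have e := abs_mul_abs_self m
    have e0 := abs_nonneg m
    have : (u + |m|) * (u + |m|) = ((R:ℤ)+1)*(R+1) := by
      obtain rfl : v = u + 2 * |m| := by omega
      linarith
    have : u + |m| = R + 1 := by nlinarith
    ext <;> simp <;> omega
  · intro m _; rfl

theorem bdry_nsq (N : ℤ) (hN : ∀ R : ℕ, N ≠ ((R:ℤ)+1)*(R+1)) (f : ℤ → ℤ → ℤ → ℤ) :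
    SS N (fun m u v => if v - u = 2 * |m| then f m u v else 0) = 0 := by
  unfold SS
  apply Finset.sum_eq_zero
  rintro ⟨m, u, v⟩ ht
  rw [mem_TT] at ht
  obtain ⟨h1, h2, h3⟩ := ht
  simp only
  rw [if_neg]
  intro h4
  have e := abs_mul_abs_self m
  have e0 := abs_nonneg m
  apply hN (u + |m| - 1).toNat
  rw [Int.toNat_of_nonneg (by omega)]
  obtain rfl : v = u + 2 * |m| := by omega
  linarith

theorem sum_abs (R : ℕ) (h : ℤ → ℤ) : ∑ m ∈ Finset.Ioo (-((R:ℤ)+1)) (R+1), h |m| =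
    h 0 + 2 * ∑ k ∈ Finset.range R, h (k+1) := by
  induction R with
  | zero =>
    have : Finset.Ioo (-(((0:ℕ):ℤ)+1)) (((0:ℕ):ℤ)+1) = {0} := by ext x; simp; omega
    rw [this]; simp
  | succ R ih =>
    have : Finset.Ioo (-(((R+1:ℕ):ℤ)+1)) (((R+1:ℕ):ℤ)+1) = insert ((R:ℤ)+1) (insert (-((R:ℤ)+1)) (Finset.Ioo (-((R:ℤ)+1)) (R+1))) := by
      ext x; simp; omega
    rw [this, Finset.sum_insert, Finset.sum_insert, ih, Finset.sum_range_succ, abs_neg, abs_of_nonneg (by positivity)]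
    · ring
    · simp
    · simp; omega

theorem sum_chi (R : ℕ) : ∑ k ∈ Finset.range R, chi (k+1) = if R % 3 = 1 then 1 else 0 := by
  induction R with
  | zero => simp
  | succ R ih =>
    rw [Finset.sum_range_succ, ih]; unfold chi; split_ifs <;> omega

theorem sum_chi' (R : ℕ) : ∑ k ∈ Finset.range R, chi ((R:ℤ) + 1 - (k+1)) = if R % 3 = 1 then 1 else 0 := by
  rw [← sum_chi, ← Finset.sum_range_reflect]
  apply Finset.sum_congr rfl; intro k hk
  rw [Finset.mem_range] at hk
  congr 1; omega

noncomputable def sqv (N : ℤ) : ℤ := SS N (fun m u v => if v - u = 2 * |m| then sg (m+u) * chi u else 0)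

theorem sqv_sq (R : ℕ) : sqv (((R:ℤ)+1)*(R+1)) = sg (R+1) * chi (R+1) ^ 2 := by
  unfold sqv
  rw [bdry_sq R (fun m u v => sg (m+u) * chi u)]
  have h : ∀ m : ℤ, sg (m + (R + 1 - |m|)) * chi (R + 1 - |m|) = sg (R+1) * (fun k => chi (R + 1 - k)) |m| := by
    intro m
    rw [sg_congr (show (m + ((R:ℤ) + 1 - |m|)) % 2 = ((R:ℤ)+1) % 2 by rcases abs_cases m with ⟨h, _⟩ | ⟨h, _⟩ <;> omega)]
  simp only [h]
  rw [← Finset.mul_sum, sum_abs R (fun k => chi (R + 1 - k)), sum_chi']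
  congr 1
  unfold chi; split_ifs <;> first | (exfalso; omega) | norm_num

theorem sqv_nsq (N : ℤ) (hN : ∀ R : ℕ, N ≠ ((R:ℤ)+1)*(R+1)) : sqv N = 0 := bdry_nsq N hN _

theorem bdry_psi (N : ℤ) : SS N (fun m u v => if u < v ∧ v - u = 2 * |m| then sg (m+u) * psi m u v else 0) = 0 := by
  have h1 : SS N (fun m u v => if u < v ∧ v - u = 2 * |m| then sg (m+u) * psi m u v else 0)
    = SS N (fun m u v => if v - u = 2 * |m| then sg (m+u) * psi m u v else 0) := by
    apply SS_congr; intro m u v _ _ _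
    have := abs_nonneg m
    by_cases h : u < v
    · simp [h]
    · by_cases h2 : v - u = 2 * |m|
      · have : u = v := by omega
        subst this; simp [psi, chi]
      · simp [h2]
  rw [h1]
  by_cases hN : ∀ R : ℕ, N ≠ ((R:ℤ)+1)*(R+1)
  · exact bdry_nsq N hN _
  · push Not at hN
    obtain ⟨R, rfl⟩ := hN
    rw [bdry_sq R (fun m u v => sg (m+u) * psi m u v)]
    have h : ∀ m : ℤ, sg (m + (R + 1 - |m|)) * psi m (R + 1 - |m|) (R + 1 + |m|)
       = (sg (R+1) * (tau (2*(R+1)) + 1)) * chi |m| := by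
      intro m
      rw [sg_congr (show (m + ((R:ℤ) + 1 - |m|)) % 2 = ((R:ℤ)+1) % 2 by rcases abs_cases m with ⟨h, _⟩ | ⟨h, _⟩ <;> omega)]
      unfold psi
      rw [show (R:ℤ) + 1 - |m| + (R + 1 + |m|) = 2 * (R+1) by ring, 
        chi_congr (show ((R:ℤ) + 1 - |m| - (R + 1 + |m|)) % 3 = |m| % 3 by omega)]
      have : tau (2 * m) * chi |m| = - chi |m| := by
        rcases chi_of |m| with ⟨h, h'⟩ | ⟨h, h'⟩ | ⟨h, h'⟩
        · rw [h']; simp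
        · rcases tau_of (2*m) with ⟨k, k'⟩ | ⟨k, k'⟩ | ⟨k, k'⟩
          · rcases abs_cases m with ⟨a, _⟩ | ⟨a, _⟩ <;> omega
          · rw [k']; ring
          · rw [k']; ring
        · rcases tau_of (2*m) with ⟨k, k'⟩ | ⟨k, k'⟩ | ⟨k, k'⟩
          · rcases abs_cases m with ⟨a, _⟩ | ⟨a, _⟩ <;> omega
          · rw [k']; ring
          · rw [k']; ring
      linear_combination - sg (R+1) * this
    simp only [h]
    rw [← Finset.mul_sum, sum_abs, sum_chi]
    rcases tau_of (2*((R:ℤ)+1)) with ⟨k, k'⟩ | ⟨k, k'⟩ | ⟨k, k'⟩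
    · rw [if_neg (by omega)]; simp [chi]
    · rw [k']; simp
    · rw [k']; simp

theorem Liou (N : ℤ) : SS N (fun m u v => if u < v then sg (m+u) * psi m u v else 0)
   = - SS N (fun m u v => sg (m+u) * chi u) + sqv N := by
  rw [L_eq, bdry_psi, add_zero]; rfl

end

section
open PowerSeries

noncomputable def DS (f : ℤ → ℤ → ℤ) : ℤ⟦X⟧ := mk fun j => ∑ p ∈ j.divisorsAntidiagonal, f p.1 p.2

noncomputable def TH (a : ℤ → ℤ) : ℤ⟦X⟧ :=
  mk fun n => ∑ m ∈ Finset.Ioo (-((n:ℤ)+1)) (n+1), if m * m = n then a m else 0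

theorem TH_DS (a : ℤ → ℤ) (f : ℤ → ℤ → ℤ) (N : ℕ) :
    coeff N (TH a * DS f) = SS N (fun m u v => a m * f u v) := by
  rw [coeff_mul]
  simp only [TH, DS, coeff_mk, Finset.sum_mul_sum]
  have e : ∀ p : ℕ × ℕ, (∑ i ∈ Finset.Ioo (-((p.1:ℤ)+1)) (p.1+1), ∑ j ∈ p.2.divisorsAntidiagonal,
      (if i * i = (p.1:ℤ) then a i else 0) * f j.1 j.2) =
      ∑ x ∈ ((Finset.Ioo (-((p.1:ℤ)+1)) (p.1+1)) ×ˢ p.2.divisorsAntidiagonal).filter (fun x => x.1 * x.1 = (p.1 : ℤ)),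
        a x.1 * f x.2.1 x.2.2 := by
    intro p
    rw [Finset.sum_filter, Finset.sum_product]
    apply Finset.sum_congr rfl; intro i _
    apply Finset.sum_congr rfl; intro j _
    simp only
    split_ifs <;> simp
  rw [Finset.sum_congr rfl (fun p _ => e p), Finset.sum_sigma']
  unfold SS
  refine Finset.sum_bij' (fun x _ => (x.2.1, (x.2.2.1 : ℤ), (x.2.2.2 : ℤ)))
    (fun t _ => ⟨((t.1 * t.1).toNat, (t.2.1 * t.2.2).toNat), (t.1, t.2.1.toNat, t.2.2.toNat)⟩) ?_ ?_ ?_ ?_ ?_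
  · rintro ⟨⟨i, j⟩, m, u, v⟩ h
    simp only [Finset.mem_sigma, Finset.mem_filter, Finset.mem_product, Finset.mem_Ioo,
      Nat.mem_divisorsAntidiagonal, Finset.HasAntidiagonal.mem_antidiagonal] at h ⊢
    rw [mem_TT]
    obtain ⟨h1, ⟨h2, h3, h4⟩, h5⟩ := h
    have hu : u ≠ 0 := by rintro rfl; simp at h3; omega
    have hv : v ≠ 0 := by rintro rfl; simp at h3; omega
    refine ⟨by omega, by omega, ?_⟩
    rw [h5, ← h1, ← h3]; push_cast; rfl
  · rintro ⟨m, u, v⟩ h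
    rw [mem_TT] at h
    obtain ⟨h1, h2, h3⟩ := h
    have hm := mul_self_nonneg m
    have huv := mul_pos h1 h2
    have huv' : (u * v).toNat = u.toNat * v.toNat := by
      rw [Int.toNat_mul h1.le h2.le]
    simp only [Finset.mem_sigma, Finset.mem_filter, Finset.mem_product, Finset.mem_Ioo,
      Nat.mem_divisorsAntidiagonal, Finset.HasAntidiagonal.mem_antidiagonal]
    refine ⟨by zify; rw [Int.toNat_of_nonneg hm, Int.toNat_of_nonneg huv.le, h3], ⟨⟨?_, ?_⟩, huv'.symm, by omega⟩, by omega⟩ <;>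
      rw [Int.toNat_of_nonneg hm] <;> nlinarith [sq_nonneg (m-1), sq_nonneg (m+1)]
  · rintro ⟨⟨i, j⟩, m, u, v⟩ h
    simp only [Finset.mem_sigma, Finset.mem_filter, Finset.mem_product, Finset.mem_Ioo,
      Nat.mem_divisorsAntidiagonal, Finset.HasAntidiagonal.mem_antidiagonal] at h
    obtain ⟨h1, ⟨h2, h3, h4⟩, h5⟩ := h
    have e1 : (m * m).toNat = i := by omega
    have e2 : ((u:ℤ) * v).toNat = j := by rw [← h3]; norm_cast
    simp [e1, e2]
  · rintro ⟨m, u, v⟩ h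
    rw [mem_TT] at h
    simp [h.1.le, h.2.1.le]
  · rintro ⟨⟨i, j⟩, m, u, v⟩ h
    rfl

theorem TH_coeff (a : ℤ → ℤ) (ha : ∀ m, a (-m) = a m) (n : ℕ) : coeff n (TH a) =
    (if n = 0 then a 0 else 0) + 2 * ∑ k ∈ Finset.range n, if (k+1)*(k+1) = n then a (k+1) else 0 := by
  have := sum_abs n (fun m => if m * m = n then a m else 0)
  simp only [TH, coeff_mk]
  rw [Finset.sum_congr rfl (g := fun m : ℤ => if |m| * |m| = n then a |m| else 0)]
  · rw [this]
    congr 1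
    · simp [eq_comm]
    · congr 1
      apply Finset.sum_congr rfl
      intro k _
      apply if_congr _ rfl rfl
      norm_cast
  · intro m _
    rw [abs_mul_abs_self]
    rcases abs_choice m with h | h <;> rw [h]
    rw [ha]

theorem TH_coeff_zero (a : ℤ → ℤ) (ha : ∀ m, a (-m) = a m) : coeff 0 (TH a) = a 0 := by
  rw [TH_coeff a ha]; simp

theorem TH_coeff_sq (a : ℤ → ℤ) (ha : ∀ m, a (-m) = a m) (R : ℕ) :
    coeff ((R+1)*(R+1)) (TH a) = 2 * a (R+1) := by
  rw [TH_coeff a ha, if_neg (by positivity), zero_add, Finset.sum_eq_single R]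
  · simp
  · intro k _ hk
    rw [if_neg]
    intro h
    rw [Nat.mul_self_inj] at h
    omega
  · intro h
    simp at h
    nlinarith

theorem TH_coeff_nsq (a : ℤ → ℤ) (ha : ∀ m, a (-m) = a m) (n : ℕ) (h0 : n ≠ 0)
    (hn : ∀ R : ℕ, n ≠ (R+1)*(R+1)) :
    coeff n (TH a) = 0 := by
  rw [TH_coeff a ha, if_neg h0, zero_add, Finset.sum_eq_zero]
  · simp
  · intro k _
    rw [if_neg (fun h => hn k h.symm)]

theorem sg_neg (m : ℤ) : sg (-m) = sg m := sg_congr (by omega)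

theorem sg_nat (n : ℕ) : sg n = (-1)^n := by
  unfold sg
  rcases Nat.even_or_odd n with h | h
  · rw [h.neg_one_pow, if_pos]; obtain ⟨k, rfl⟩ := h; omega
  · rw [h.neg_one_pow, if_neg]; obtain ⟨k, rfl⟩ := h; omega

theorem coeff_gg_shift (e r N : ℕ) : coeff N (X ^ e * gg r) = ∑ n ∈ Finset.range (N+1),
    if n^2+n+n*r+e = N then (-1 : ℤ)^n else 0 := by
  unfold gg
  rw [mul_ssum (gg_adm r)]
  simp only [ssum, coeff_mk]
  apply Finset.sum_congr rfl
  intro n _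
  rw [← mul_assoc, ← pow_add, show ((-1 : ℤ⟦X⟧)^n) = C ((-1:ℤ)^n) by simp, coeff_mul_C, coeff_X_pow]
  simp only [ite_mul, one_mul, zero_mul]
  apply if_congr _ rfl rfl
  omega

theorem phis_eq : phis = TH sg := by
  ext n
  rw [TH_coeff _ sg_neg, phis, map_sub, coeff_one]
  rw [show sg 0 = 1 from rfl, sub_eq_add_neg]
  congr 1
  rw [mul_assoc, show (2:ℤ⟦X⟧) = C (2:ℤ) by simp, coeff_C_mul, ← pow_one (X:ℤ⟦X⟧), coeff_gg_shift,
    Finset.sum_range_succ, if_neg (by nlinarith), add_zero, ← mul_neg, ← Finset.sum_neg_distrib]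
  congr 1
  apply Finset.sum_congr rfl
  intro k _
  rw [apply_ite Neg.neg, neg_zero]
  apply if_congr
  · constructor <;> intro h <;> nlinarith
  · have := sg_nat (k+1); push_cast at this; rw [this]; ring
  · rfl

end

section
open PowerSeries

noncomputable def EX : ℤ⟦X⟧ →ₐ[ℤ] ℤ⟦X⟧ := PowerSeries.expand 9 (by norm_num)

theorem coeff_EX (f : ℤ⟦X⟧) (n : ℕ) : coeff n (EX f) = if 9 ∣ n then coeff (n/9) f else 0 :=
  PowerSeries.coeff_expand 9 (by norm_num) f

def sg3 (m : ℤ) : ℤ := if m % 3 = 0 then sg m else 0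

theorem sg3_neg (m : ℤ) : sg3 (-m) = sg3 m := by
  unfold sg3
  rw [sg_neg]
  apply if_congr _ rfl rfl
  omega

theorem phi9_eq : EX phis = TH sg3 := by
  ext n
  rw [coeff_EX, phis_eq]
  by_cases h0 : n = 0
  · subst h0
    rw [if_pos (by simp), TH_coeff_zero _ sg3_neg, show 0/9 = 0 from rfl, TH_coeff_zero _ sg_neg]; rfl
  split_ifs with h9
  · obtain ⟨k, rfl⟩ := h9
    rw [Nat.mul_div_cancel_left _ (by norm_num)]
    have hk : k ≠ 0 := by omega
    by_cases hs : ∃ R : ℕ, k = (R+1)*(R+1)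
    · obtain ⟨R, rfl⟩ := hs
      rw [TH_coeff_sq _ sg_neg, show 9*((R+1)*(R+1)) = ((3*R+2)+1)*((3*R+2)+1) by ring,
        TH_coeff_sq _ sg3_neg]
      push_cast
      unfold sg3
      rw [if_pos (by omega)]
      congr 1
      apply sg_congr; omega
    · push Not at hs
      rw [TH_coeff_nsq _ sg_neg _ hk hs, TH_coeff_nsq _ sg3_neg _ h0]
      intro R h
      have h3 : 3 ∣ R + 1 := by
        have : 3 ∣ (R+1)*(R+1) := ⟨3*k, by omega⟩
        exact (Nat.prime_three.dvd_mul.1 this).elim id id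
      obtain ⟨t, ht⟩ := h3
      have ht0 : t ≠ 0 := by omega
      apply hs (t-1)
      rw [Nat.sub_add_cancel (by omega)]
      rw [ht] at h
      nlinarith
  · by_cases hs : ∃ R : ℕ, n = (R+1)*(R+1)
    · obtain ⟨R, rfl⟩ := hs
      rw [TH_coeff_sq _ sg3_neg]
      unfold sg3
      rw [if_neg]; · rfl
      intro h
      apply h9
      have : 3 ∣ R + 1 := by omega
      exact mul_dvd_mul this this
    · push Not at hs
      rw [TH_coeff_nsq _ sg3_neg _ h0 hs]

def fS (u v : ℤ) : ℤ := if u < v then sg u * chi (v - u) else 0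
def fS2 (u v : ℤ) : ℤ := if u < v ∧ (u * v) % 3 = 2 then sg u * chi (v - u) else 0
def fLam (u _v : ℤ) : ℤ := sg u * chi u

theorem Ss_eq : Ss = 1 + 6 * DS fS := by
  unfold Ss
  rw [sub_eq_add_neg, ← mul_neg]
  congr 2
  ext N
  simp only [ssum, DS, map_neg, coeff_mk]
  have e : ∀ r : ℕ, coeff N (X ^ (r+1) * (((chi r : ℤ) : ℤ⟦X⟧) * gg (r+1))) =
      ∑ n ∈ Finset.range (N+1), if (n+1)*(n+1+r) = N then chi r * (-1)^n else 0 := by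
    intro r
    rw [mul_left_comm, show ((chi r : ℤ) : ℤ⟦X⟧) = C (chi r) by simp, coeff_C_mul, coeff_gg_shift,
      Finset.mul_sum]
    apply Finset.sum_congr rfl
    intro n _
    rw [mul_ite, mul_zero]
    apply if_congr _ rfl rfl
    constructor <;> intro h <;> nlinarith
  rw [Finset.sum_congr rfl (fun r _ => e r)]
  rw [← Finset.sum_product', ← Finset.sum_filter, ← Finset.sum_neg_distrib]
  have : ∀ p ∈ N.divisorsAntidiagonal, fS p.1 p.2 = if p.1 ≤ p.2 then sg p.1 * chi (p.2 - p.1) else 0 := by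
    intro p _
    unfold fS
    by_cases h : p.1 = p.2
    · simp [h, chi]
    · apply if_congr _ rfl rfl
      omega
  rw [Finset.sum_congr rfl this, ← Finset.sum_filter]
  refine Finset.sum_bij' (fun x _ => (x.2+1, x.2+1+x.1)) (fun p _ => (p.2 - p.1, p.1 - 1)) ?_ ?_ ?_ ?_ ?_
  · rintro ⟨r, n⟩ h
    simp only [Finset.mem_filter, Finset.mem_product, Finset.mem_range, Nat.mem_divisorsAntidiagonal] at h ⊢
    refine ⟨⟨h.2, ?_⟩, by omega⟩
    rw [← h.2]; positivity
  · rintro ⟨u, v⟩ h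
    simp only [Finset.mem_filter, Finset.mem_product, Finset.mem_range, Nat.mem_divisorsAntidiagonal] at h ⊢
    obtain ⟨⟨h1, h2⟩, h3⟩ := h
    have hu : u ≠ 0 := by rintro rfl; simp at h1; omega
    have hv : v ≠ 0 := by rintro rfl; simp at h1; omega
    have : u ≤ N := by rw [← h1]; exact Nat.le_mul_of_pos_right _ (by omega)
    have : v ≤ N := by rw [← h1]; exact Nat.le_mul_of_pos_left _ (by omega)
    refine ⟨⟨by omega, by omega⟩, ?_⟩
    rw [Nat.sub_add_cancel (by omega), Nat.add_sub_cancel' h3, h1]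
  · rintro ⟨r, n⟩ h
    simp
  · rintro ⟨u, v⟩ h
    simp only [Finset.mem_filter, Nat.mem_divisorsAntidiagonal] at h ⊢
    obtain ⟨⟨h1, h2⟩, h3⟩ := h
    have hu : u ≠ 0 := by rintro rfl; simp at h1; omega
    ext <;> simp only <;> omega
  · rintro ⟨r, n⟩ h
    simp only
    rw [sg_nat]
    push_cast
    rw [show (n:ℤ)+1+r-(n+1) = r by ring]
    ring

theorem psi_val (m u v : ℤ) : psi m u v =
    3 * ((if m % 3 = 0 then 1 else 0) - (if (u*v)%3 = 2 then 1 else 0)) * chi (v - u) := by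
  unfold psi
  have h1 : u % 3 = 0 ∨ u % 3 = 1 ∨ u % 3 = 2 := by omega
  have h2 : v % 3 = 0 ∨ v % 3 = 1 ∨ v % 3 = 2 := by omega
  have h3 : m % 3 = 0 ∨ m % 3 = 1 ∨ m % 3 = 2 := by omega
  have key : ∀ m' u' v' : ℤ, u % 3 = u' → v % 3 = v' → m % 3 = m' → 
    (tau (u'+v') - tau (2*m')) * chi (u' - v') =
    3 * ((if m' % 3 = 0 then 1 else 0) - (if (u'*v')%3 = 2 then 1 else 0)) * chi (v' - u') →
    (tau (u+v) - tau (2*m)) * chi (u - v) =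
    3 * ((if m % 3 = 0 then 1 else 0) - (if (u*v)%3 = 2 then 1 else 0)) * chi (v - u) := by
    intro m' u' v' e1 e2 e3 h
    rw [tau_congr (show (u+v)%3 = (u'+v')%3 by omega), tau_congr (show (2*m)%3 = (2*m')%3 by omega),
      chi_congr (show (u-v)%3 = (u'-v')%3 by omega), chi_congr (show (v-u)%3 = (v'-u')%3 by omega),
      show (u*v)%3 = (u'*v')%3 by rw [Int.mul_emod, e1, e2], show m % 3 = m' % 3 by omega, h]
  rcases h1 with h1 | h1 | h1 <;> rcases h2 with h2 | h2 | h2 <;> rcases h3 with h3 | h3 | h3 <;>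
    exact key _ _ _ h1 h2 h3 (by decide)

theorem sg_add (a b : ℤ) : sg (a + b) = sg a * sg b := by
  unfold sg; split_ifs <;> omega

theorem main_id : TH sg3 * Ss = TH sg * (1 - 2 * DS fLam + 6 * DS fS2) := by
  rw [Ss_eq]
  ext N
  have e1 : TH sg3 * (1 + 6 * DS fS) = TH sg3 + C (6:ℤ) * (TH sg3 * DS fS) := by
    rw [show (C (6:ℤ)) = (6 : ℤ⟦X⟧) by simp]; ring
  have e2 : TH sg * (1 - 2 * DS fLam + 6 * DS fS2) = TH sg - C (2:ℤ) * (TH sg * DS fLam) + C (6:ℤ) * (TH sg * DS fS2) := by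
    rw [show (C (6:ℤ)) = (6 : ℤ⟦X⟧) by simp, show (C (2:ℤ)) = (2 : ℤ⟦X⟧) by simp]; ring
  rw [e1, e2, map_add, map_add, map_sub, coeff_C_mul, coeff_C_mul, coeff_C_mul, TH_DS, TH_DS, TH_DS]
  have hL := Liou N
  have h1 : SS N (fun m u v => if u<v then sg (m+u)*psi m u v else 0) =
      3 * SS N (fun m u v => sg3 m * fS u v) - 3 * SS N (fun m u v => sg m * fS2 u v) := by
    rw [SS_mul, SS_mul, SS_sub]
    apply SS_congr
    intro m u v _ _ _
    rw [psi_val, sg_add]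
    unfold fS fS2 sg3
    split_ifs <;> first | ring1 | omega | tauto | (exfalso; tauto)
  have h2 : SS N (fun m u v => sg (m+u)*chi u) = SS N (fun m u v => sg m * fLam u v) := by
    apply SS_congr
    intro m u v _ _ _
    rw [sg_add]; unfold fLam; ring
  have h3 : coeff N (TH sg) - coeff N (TH sg3) = 2 * sqv N := by
    by_cases h0 : N = 0
    · subst h0
      rw [TH_coeff_zero _ sg3_neg, TH_coeff_zero _ sg_neg, sqv_nsq]; · rfl
      intro R; push_cast; positivity
    by_cases hs : ∃ R : ℕ, N = (R+1)*(R+1)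
    · obtain ⟨R, rfl⟩ := hs
      rw [TH_coeff_sq _ sg3_neg, TH_coeff_sq _ sg_neg]
      push_cast
      rw [sqv_sq]
      unfold sg3 chi
      split_ifs <;> first | ring1 | omega | tauto | (exfalso; tauto)
    · push Not at hs
      rw [TH_coeff_nsq _ sg3_neg _ h0 hs, TH_coeff_nsq _ sg_neg _ h0 hs, sqv_nsq]; · rfl
      intro R h
      exact hs R (by exact_mod_cast h)
  rw [h1, h2] at hL
  linarith

theorem F_id : Cs * Ss = EX Cs * (1 - 2 * DS fLam + 6 * DS fS2) := by
  have h1 : EX Cs * EX phis = 1 := by rw [← map_mul, Cs_phis, map_one]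
  have h2 := main_id
  rw [← phis_eq, ← phi9_eq] at h2
  calc Cs * Ss = Cs * ((EX Cs * EX phis) * Ss) := by rw [h1, one_mul]
    _ = EX Cs * (Cs * (EX phis * Ss)) := by ring
    _ = EX Cs * ((Cs * phis) * (1 - 2 * DS fLam + 6 * DS fS2)) := by rw [h2]; ring
    _ = _ := by rw [Cs_phis, one_mul]

end

section
open PowerSeries

theorem coeff_X_EX (e N : ℕ) (g : ℤ⟦X⟧) :
    coeff N (X ^ e * EX g) = if e ≤ N ∧ 9 ∣ N - e then coeff ((N - e)/9) g else 0 := by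
  rw [coeff_X_pow_mul', coeff_EX]
  split_ifs <;> first | rfl | tauto

theorem coeff_X_EX_gg (e s N : ℕ) : coeff N (X ^ e * EX (gg s)) = ∑ a ∈ Finset.range (N+1),
    if 9*(a^2+a+a*s)+e = N then (-1 : ℤ)^a else 0 := by
  rw [coeff_X_EX]
  split_ifs with h
  · unfold gg
    rw [coeff_ssum_of_lt (gg_adm s) (N := N+1) (by omega)]
    apply Finset.sum_congr rfl
    intro a _
    rw [show ((-1 : ℤ⟦X⟧)^a) = C ((-1:ℤ)^a) by simp, coeff_mul_C, coeff_X_pow]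
    simp only [ite_mul, one_mul, zero_mul]
    apply if_congr _ rfl rfl
    omega
  · symm
    apply Finset.sum_eq_zero
    intro a _
    rw [if_neg]
    intro h1
    apply h
    refine ⟨by omega, ⟨a^2+a+a*s, by omega⟩⟩

theorem fS2_split (u v : ℤ) : fS2 u v = -((if u % 3 = 1 ∧ v % 3 = 2 ∧ u < v then - sg u else 0) +
    (if u % 3 = 2 ∧ v % 3 = 1 ∧ u < v then sg u else 0)) := by
  unfold fS2
  have h1 : u % 3 = 0 ∨ u % 3 = 1 ∨ u % 3 = 2 := by omega
  have h2 : v % 3 = 0 ∨ v % 3 = 1 ∨ v % 3 = 2 := by omega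
  have hm := Int.mul_emod u v 3
  have h3 : chi (v - u) = chi (v%3 - u%3) := chi_congr (by omega)
  rw [hm, h3]
  rcases h1 with h1 | h1 | h1 <;> rcases h2 with h2 | h2 | h2 <;> rw [h1, h2] <;> by_cases h : u < v <;>
    simp [h, chi]

theorem S2_eq : DS fS2 = - (ssum (fun s => X^(2+3*s) * EX (gg s)) + ssum (fun s => X^(8+6*s) * EX (gg (s+1)))) := by
  ext N
  simp only [DS, ssum, map_neg, map_add, coeff_mk, fS2_split, Finset.sum_neg_distrib, Finset.sum_add_distrib, coeff_X_EX_gg]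
  congr 2
  · rw [← Finset.sum_product', ← Finset.sum_filter, ← Finset.sum_filter]
    symm
    refine Finset.sum_bij' (fun x _ => (3*x.2+1, 3*(x.2+x.1)+2)) (fun p _ => (p.2/3 - p.1/3, p.1/3)) ?_ ?_ ?_ ?_ ?_
    · rintro ⟨s, a⟩ h
      simp only [Finset.mem_filter, Finset.mem_product, Finset.mem_range, Nat.mem_divisorsAntidiagonal] at h ⊢
      refine ⟨⟨?_, ?_⟩, ?_, ?_, ?_⟩
      · rw [← h.2]; ring
      · rw [← h.2]; omega
      · push_cast; omega
      · push_cast; omega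
      · push_cast; omega
    · rintro ⟨u, v⟩ h
      simp only [Finset.mem_filter, Finset.mem_product, Finset.mem_range, Nat.mem_divisorsAntidiagonal] at h ⊢
      obtain ⟨⟨h1, h2⟩, h3, h4, h5⟩ := h
      have : u ≤ N := by rw [← h1]; exact Nat.le_mul_of_pos_right _ (by omega)
      have : v ≤ N := by rw [← h1]; exact Nat.le_mul_of_pos_left _ (by omega)
      refine ⟨⟨by omega, by omega⟩, ?_⟩
      obtain ⟨a, rfl⟩ : ∃ a, u = 3*a+1 := ⟨u/3, by omega⟩
      obtain ⟨s, rfl⟩ : ∃ s, v = 3*(a+s)+2 := ⟨v/3-a, by omega⟩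
      rw [show (3*(a+s)+2)/3 - (3*a+1)/3 = s by omega, show (3*a+1)/3 = a by omega, ← h1]
      ring
    · rintro ⟨s, a⟩ h
      ext <;> simp only <;> omega
    · rintro ⟨u, v⟩ h
      simp only [Finset.mem_filter, Nat.mem_divisorsAntidiagonal] at h ⊢
      ext <;> simp only <;> omega
    · rintro ⟨s, a⟩ h
      simp only
      rw [sg_nat, pow_succ, pow_mul]; norm_num
  · rw [← Finset.sum_product', ← Finset.sum_filter, ← Finset.sum_filter]
    symm
    refine Finset.sum_bij' (fun x _ => (3*x.2+2, 3*(x.2+x.1+1)+1)) (fun p _ => (p.2/3 - p.1/3-1, p.1/3)) ?_ ?_ ?_ ?_ ?_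
    · rintro ⟨s, a⟩ h
      simp only [Finset.mem_filter, Finset.mem_product, Finset.mem_range, Nat.mem_divisorsAntidiagonal] at h ⊢
      refine ⟨⟨?_, ?_⟩, ?_, ?_, ?_⟩
      · rw [← h.2]; ring
      · rw [← h.2]; omega
      · push_cast; omega
      · push_cast; omega
      · push_cast; omega
    · rintro ⟨u, v⟩ h
      simp only [Finset.mem_filter, Finset.mem_product, Finset.mem_range, Nat.mem_divisorsAntidiagonal] at h ⊢
      obtain ⟨⟨h1, h2⟩, h3, h4, h5⟩ := h
      have : u ≤ N := by rw [← h1]; exact Nat.le_mul_of_pos_right _ (by omega)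
      have : v ≤ N := by rw [← h1]; exact Nat.le_mul_of_pos_left _ (by omega)
      refine ⟨⟨by omega, by omega⟩, ?_⟩
      obtain ⟨a, rfl⟩ : ∃ a, u = 3*a+2 := ⟨u/3, by omega⟩
      obtain ⟨s, rfl⟩ : ∃ s, v = 3*(a+s+1)+1 := ⟨v/3-a-1, by omega⟩
      rw [show (3*(a+s+1)+1)/3 - (3*a+2)/3-1 = s by omega, show (3*a+2)/3 = a by omega, ← h1]
      ring
    · rintro ⟨s, a⟩ h
      ext <;> simp only <;> omega
    · rintro ⟨u, v⟩ h
      simp only [Finset.mem_filter, Nat.mem_divisorsAntidiagonal] at h ⊢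
      ext <;> simp only <;> omega
    · rintro ⟨s, a⟩ h
      simp only
      rw [sg_nat, pow_add, pow_mul]; norm_num

noncomputable def VV : ℤ⟦X⟧ := ssum (fun s => X^(2+3*s) * EX (KK s)) + ssum (fun s => X^(8+6*s) * EX (KK (s+1)))

theorem F_id2 : Cs * Ss = EX Cs * (1 - 2 * DS fLam) - 6 * VV := by
  have : EX Cs * DS fS2 = - VV := by
    rw [S2_eq, mul_neg, mul_add, mul_ssum (Adm.of_pow (fun i => by omega)), mul_ssum (Adm.of_pow (fun i => by omega)), VV]
    simp only [KK_eq, map_mul]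
    congr 2
    all_goals
      congr 1
      ext1 s
      ring
  rw [F_id, mul_add, mul_left_comm, this]
  ring

/-! positivity facts -/

theorem NN.mul {f g : ℤ⟦X⟧} (hf : NN f) (hg : NN g) : NN (f * g) := fun n => by
  rw [coeff_mul]
  exact Finset.sum_nonneg fun p _ => mul_nonneg (hf _) (hg _)

theorem NN.X1 {f : ℤ⟦X⟧} (hf : NN f) : NN (X * f) := by
  have := hf.X_mul 1; rwa [pow_one] at this

theorem KK_NN (r : ℕ) : NN (KK r) := NN.ssum fun j => (cc_NN _ _).X_mul _
theorem KT_NN (r : ℕ) : NN (KT r) := NN.ssum fun j => (cc_NN _ _).X_mul _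

theorem KK_mono (r : ℕ) : NN (KK (r+1) - KK r) := by
  rw [KK_R1]
  exact ((KT_NN _).add (KT_NN _).X1).X_mul _

theorem KK_mono' (r s : ℕ) (h : r ≤ s) : NN (KK s - KK r) := by
  induction s, h using Nat.le_induction with
  | base => rw [sub_self]; exact NN.zero
  | succ s _ ih =>
    have := ih.add (KK_mono s)
    rwa [show KK s - KK r + (KK (s+1) - KK s) = KK (s+1) - KK r by ring] at this

theorem KK_shift (s : ℕ) : NN (KK s - X * KK (s+1)) := by
  rcases s with _ | s
  · rw [KK_R20]
    exact NN.one.add ((KT_NN _).add (KT_NN _).X1).X1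
  · rw [KK_R2]
    exact (KT_NN _).add (KT_NN _).X1

/-- (1-q) K_r has nonnegative coefficients -/
theorem KK_step (r : ℕ) : NN (KK r - X * KK r) := by
  have h1 : X * KK r = ssum (fun j => X * (X^j * cc (r+j) j)) := by
    unfold KK; rw [mul_ssum (KK_adm r)]
  have h2 : KK r = 1 + ssum (fun j => X^(j+1) * cc (r+(j+1)) (j+1)) := by
    conv_lhs => unfold KK
    rw [ssum_succ (KK_adm r)]
    simp [cc_zero_right]
  rw [h1]
  conv in KK r => rw [h2]
  rw [add_sub_assoc, ssum_sub]
  refine NN.one.add (NN.ssum fun j => ?_)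
  have e : X ^ (j+1) * cc (r+(j+1)) (j+1) - X * (X^j * cc (r+j) j) =
    X^(j+1) * ((cc (r+j+1) (j+1) - cc (r+j) (j+1)) + (cc (r+j) (j+1) - cc (r+j) j)) := by
    rw [show r + (j+1) = r+j+1 by ring]; ring
  rw [e]
  exact ((cc_mono_left _ _).add (cc_mono_right _ _)).X_mul _

theorem KK_two (s : ℕ) : NN (2 * KK s - Cs) := by
  rw [← KK_C 0]
  have h1 := KK_mono' 0 s (by omega)
  have h2 := (KK_shift 0).add (KK_shift 1).X1
  have h3 := (h1.add h1).add h2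
  have e : KK s - KK 0 + (KK s - KK 0) + (KK 0 - X * KK (0+1) + X * (KK 1 - X * KK (1+1))) =
    2 * KK s - (KK 0 + X^(0+2) * KK (0+2)) := by ring
  rwa [e] at h3

theorem KK_03 : NN (KK 0 + X * KK 3 - Cs) := by
  rw [← KK_C 0]
  have h1 := (KK_mono 2).X1.add (KK_step 2).X1
  have e : X * (KK (2+1) - KK 2) + X * (KK 2 - X * KK 2) = 
    KK 0 + X * KK 3 - (KK 0 + X^(0+2) * KK (0+2)) := by ring
  rwa [e] at h1

theorem Cs_step : NN (Cs - X * Cs) := by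
  rw [← KK_C 0]
  have h := (KK_step 0).add ((KK_step 2).X_mul 2)
  have e : KK 0 - X * KK 0 + X^2 * (KK 2 - X * KK 2) =
    KK 0 + X^(0+2) * KK (0+2) - X * (KK 0 + X^(0+2) * KK (0+2)) := by ring
  rwa [e] at h

noncomputable def cs (i : ℕ) : ℤ := coeff i Cs

theorem cs_zero : cs 0 = 1 := by
  simp [cs, Cs, mul_assoc]

theorem cs_mono : Monotone cs := by
  apply monotone_nat_of_le_succ
  intro i
  have := Cs_step (i+1)
  rw [map_sub, mul_comm X, coeff_succ_mul_X] at this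
  unfold cs; linarith

theorem cs_pos (i : ℕ) : 1 ≤ cs i := by rw [← cs_zero]; exact cs_mono (Nat.zero_le _)

theorem coeff_EX_mul (f g : ℤ⟦X⟧) (I ρ : ℕ) (hρ : ρ < 9) : coeff (9*I+ρ) (EX f * g) =
    ∑ k ∈ Finset.range (I+1), coeff (I-k) f * coeff (9*k+ρ) g := by
  rw [coeff_mul]
  simp only [coeff_EX, ite_mul, zero_mul]
  rw [← Finset.sum_filter]
  symm
  refine Finset.sum_bij' (fun k _ => (9*(I-k), 9*k+ρ)) (fun p _ => p.2/9) ?_ ?_ ?_ ?_ ?_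
  · intro k hk
    simp only [Finset.mem_filter, Finset.HasAntidiagonal.mem_antidiagonal, Finset.mem_range] at hk ⊢
    exact ⟨by omega, by omega⟩
  · rintro ⟨a, b⟩ h
    simp only [Finset.mem_filter, Finset.HasAntidiagonal.mem_antidiagonal, Finset.mem_range] at h ⊢
    omega
  · intro k hk
    simp only; omega
  · rintro ⟨a, b⟩ h
    simp only [Finset.mem_filter, Finset.HasAntidiagonal.mem_antidiagonal] at h ⊢
    ext <;> simp only <;> omega
  · intro k hk
    simp only
    rw [Nat.mul_div_cancel_left _ (by norm_num)]

def Lam (j : ℕ) : ℤ := -2 * ∑ d ∈ j.divisors, sg d * chi d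

theorem coeff_Lam (j : ℕ) : coeff j (1 - 2 * DS fLam) = if j = 0 then 1 else Lam j := by
  rw [map_sub, coeff_one, show (2:ℤ⟦X⟧) = C (2:ℤ) by simp, coeff_C_mul, DS, coeff_mk]
  unfold fLam
  rw [Nat.sum_divisorsAntidiagonal (f := fun i _ => sg i * chi i)]
  split_ifs with h
  · subst h; simp
  · unfold Lam; ring

/-- abel summation -/
theorem abel (I : ℕ) : ∀ (c : ℕ → ℤ) (w : ℕ → ℤ), Monotone c →
    (∀ k, k < I → 0 ≤ ∑ i ∈ Finset.range (k+1), w i) →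
    c 0 * ∑ i ∈ Finset.range (I+1), w i ≤ ∑ k ∈ Finset.range (I+1), c (I-k) * w k := by
  induction I with
  | zero => intro c w _ _; simp
  | succ I ih =>
    intro c w hc hw
    have h := ih (fun i => c (i+1)) w (fun a b hab => hc (by omega)) (fun k hk => hw k (by omega))
    rw [Finset.sum_range_succ _ (I+1), Finset.sum_range_succ _ (I+1)]
    have e : ∑ k ∈ Finset.range (I+1), c (I+1-k) * w k = ∑ k ∈ Finset.range (I+1), c (I-k+1) * w k := by
      apply Finset.sum_congr rfl
      intro k hk
      rw [Finset.mem_range] at hk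
      rw [show I+1-k = I-k+1 by omega]
    rw [e, Nat.sub_self, mul_add]
    have h2 := mul_le_mul_of_nonneg_right (hc (show 0 ≤ 1 by norm_num)) (hw I (by omega))
    simp only [zero_add] at h
    linarith

noncomputable def kk (r i : ℕ) : ℤ := coeff i (KK r)

theorem kk_nn (r i : ℕ) : 0 ≤ kk r i := KK_NN r i

theorem kk_two (r i : ℕ) : cs i ≤ 2 * kk r i := by
  have := KK_two r i
  rw [map_sub, show (2:ℤ⟦X⟧) = C (2:ℤ) by simp, coeff_C_mul] at this
  unfold kk cs; linarith

theorem kk_03 (i : ℕ) : cs (i+1) ≤ kk 0 (i+1) + kk 3 i := by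
  have := KK_03 (i+1)
  rw [map_sub, map_add, mul_comm X, coeff_succ_mul_X] at this
  unfold kk cs; linarith

theorem VV_ge (I t : ℕ) (ht : t < 3) : ∑ k ∈ Finset.range (I+1), (kk (3*k+t) (I-k) +
    if (3*k+t)%2 = 0 ∧ 3*k+t ≠ 0 then kk ((3*k+t)/2) (I-k) else 0) ≤ coeff (9*I+(3*t+2)) VV := by
  rw [Finset.sum_add_distrib, VV, map_add]
  simp only [ssum, coeff_mk]
  have hnn : ∀ e r N, 0 ≤ coeff N (X^e * EX (KK r)) := by
    intro e r N
    rw [coeff_X_EX]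
    split_ifs
    · exact kk_nn _ _
    · rfl
  apply add_le_add
  · rw [Finset.sum_congr rfl (g := fun k => coeff (9*I+(3*t+2)) (X^(2+3*(3*k+t)) * EX (KK (3*k+t))))]
    · rw [← Finset.sum_image (s := Finset.range (I+1)) (g := fun k => 3*k+t)
        (f := fun s => coeff (9*I+(3*t+2)) (X^(2+3*s) * EX (KK s))) (by intro a _ b _ h; simp only at h; omega)]
      apply Finset.sum_le_sum_of_subset_of_nonneg
      · intro s hs
        simp only [Finset.mem_image, Finset.mem_range] at hs ⊢
        omega
      · intro s _ _; exact hnn _ _ _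
    · intro k hk
      rw [Finset.mem_range] at hk
      rw [coeff_X_EX, if_pos ⟨by omega, by omega⟩, kk]
      congr 2; omega
  · rw [← Finset.sum_filter]
    rw [Finset.sum_congr rfl (g := fun k => coeff (9*I+(3*t+2)) (X^(8+6*((3*k+t)/2-1)) * EX (KK (((3*k+t)/2-1)+1))))]
    · rw [← Finset.sum_image (s := (Finset.range (I+1)).filter _) (g := fun k => (3*k+t)/2-1)
        (f := fun s => coeff (9*I+(3*t+2)) (X^(8+6*s) * EX (KK (s+1))))
        (by
          intro a ha b hb h
          simp only [Finset.coe_filter, Set.mem_setOf_eq] at ha hb h; omega)]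
      apply Finset.sum_le_sum_of_subset_of_nonneg
      · intro s hs
        simp only [Finset.mem_image, Finset.mem_filter, Finset.mem_range] at hs ⊢
        omega
      · intro s _ _; exact hnn _ _ _
    · intro k hk
      rw [Finset.mem_filter, Finset.mem_range] at hk
      rw [coeff_X_EX, if_pos ⟨by omega, by omega⟩, kk]
      congr 2
      · omega
      · congr 1; omega

def ww (t k : ℕ) : ℤ := 3 * (1 + if (3*k+t)%2 = 0 ∧ 3*k+t ≠ 0 then 1 else 0) - Lam (9*k+(3*t+2))

theorem F2 (I t : ℕ) (ht : t < 3) : coeff (9*I+(3*t+2)) (Cs * Ss) =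
    ∑ k ∈ Finset.range (I+1), cs (I-k) * Lam (9*k+(3*t+2)) - 6 * coeff (9*I+(3*t+2)) VV := by
  rw [F_id2, map_sub, coeff_EX_mul _ _ _ _ (by omega), show (6:ℤ⟦X⟧) = C (6:ℤ) by simp, coeff_C_mul]
  congr 1
  apply Finset.sum_congr rfl
  intro k _
  rw [coeff_Lam, if_neg (by omega), cs]

theorem V_bound (t k i : ℕ) : cs i * (3 * (1 + if (3*k+t)%2 = 0 ∧ 3*k+t ≠ 0 then 1 else 0)) ≤
    6 * (kk (3*k+t) i + if (3*k+t)%2 = 0 ∧ 3*k+t ≠ 0 then kk ((3*k+t)/2) i else 0) := by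
  have h1 := kk_two (3*k+t) i
  have h2 := kk_two ((3*k+t)/2) i
  split_ifs <;> linarith

theorem neg_of_P (I t : ℕ) (ht : t < 3) (h0 : t ≠ 0) (hP : ∀ k, k ≤ I → 0 < ∑ i ∈ Finset.range (k+1), ww t i) :
    coeff (9*I+(3*t+2)) (Cs * Ss) < 0 := by
  rw [F2 I t ht]
  have h1 := VV_ge I t ht
  have h2 := abel I cs (ww t) cs_mono (fun k hk => (hP k hk.le).le)
  rw [cs_zero, one_mul] at h2
  have h3 := hP I le_rfl
  have h4 : ∑ k ∈ Finset.range (I+1), cs (I-k) * ww t k ≤ 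
    ∑ k ∈ Finset.range (I+1), (6 * (kk (3*k+t) (I-k) + if (3*k+t)%2 = 0 ∧ 3*k+t ≠ 0 then kk ((3*k+t)/2) (I-k) else 0)
      - cs (I-k) * Lam (9*k+(3*t+2))) := by
    apply Finset.sum_le_sum
    intro k _
    have := V_bound t k (I-k)
    unfold ww
    rw [mul_sub]; linarith
  rw [Finset.sum_sub_distrib, ← Finset.mul_sum] at h4
  linarith

theorem Lam_two : Lam 2 = 4 := by decide

theorem neg_of_P0 (I : ℕ) (hP : ∀ k, k ≤ I → k ≠ 0 → 0 < ∑ i ∈ Finset.range (k+1), ww 0 i) :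
    coeff (9*I+(3*0+2)) (Cs * Ss) < 0 := by
  rw [F2 I 0 (by norm_num)]
  have h1 := VV_ge I 0 (by norm_num)
  rcases I with _ | I
  · have h5 : cs 0 ≤ kk 0 0 := by
      unfold cs kk
      rw [← KK_C 0]; simp
    have := cs_zero
    simp [Lam_two] at h1 ⊢
    linarith
  · let w' : ℕ → ℤ := fun k => if k = 0 then ww 0 0 + 3 else if k = 1 then ww 0 1 - 3 else ww 0 k
    have e : ∀ m, w' (m+2) = ww 0 (m+2) := by intro m; simp [w']
    have hs : ∀ (c : ℕ → ℤ) k, ∑ i ∈ Finset.range (k+2), c i * w' i =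
       ∑ i ∈ Finset.range (k+2), c i * ww 0 i + 3 * (c 0 - c 1) := by
      intro c k
      rw [Finset.sum_range_succ', Finset.sum_range_succ', Finset.sum_range_succ', Finset.sum_range_succ']
      simp only [Nat.add_assoc, Nat.reduceAdd, e]
      simp only [w', zero_add, if_true, one_ne_zero, if_false]
      ring
    have hs1 : ∀ k, ∑ i ∈ Finset.range (k+2), w' i = ∑ i ∈ Finset.range (k+2), ww 0 i := by
      intro k
      have := hs (fun _ => 1) k
      simpa using this
    have hw0 : ww 0 0 = -1 := by simp [ww, Lam_two]
    have h2 := abel (I+1) cs w' cs_mono (by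
      intro k hk
      rcases k with _ | k
      · simp [w', hw0]
      · rw [hs1 k]; exact (hP (k+1) hk.le (by omega)).le)
    rw [cs_zero, one_mul, hs1, hs (fun k => cs (I+1-k))] at h2
    have h3 := hP (I+1) le_rfl (by omega)
    simp only [Nat.sub_zero, Nat.add_sub_cancel] at h2
    have h4 : ∑ k ∈ Finset.range (I+1+1), cs (I+1-k) * ww 0 k + 3 * (cs (I+1) - cs I) ≤ 
      ∑ k ∈ Finset.range (I+1+1), (6 * (kk (3*k+0) (I+1-k) + if (3*k+0)%2 = 0 ∧ 3*k+0 ≠ 0 then kk ((3*k+0)/2) (I+1-k) else 0)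
        - cs (I+1-k) * Lam (9*k+(3*0+2))) := by
      rw [Finset.sum_range_succ', Finset.sum_range_succ', Finset.sum_range_succ', Finset.sum_range_succ']
      have h6 : ∑ k ∈ Finset.range I, cs (I+1-(k+1+1)) * ww 0 (k+1+1) ≤
        ∑ k ∈ Finset.range I, (6 * (kk (3*(k+1+1)+0) (I+1-(k+1+1)) + if (3*(k+1+1)+0)%2 = 0 ∧ 3*(k+1+1)+0 ≠ 0 then kk ((3*(k+1+1)+0)/2) (I+1-(k+1+1)) else 0)
        - cs (I+1-(k+1+1)) * Lam (9*(k+1+1)+(3*0+2))) := by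
        apply Finset.sum_le_sum
        intro k _
        have := V_bound 0 (k+1+1) (I+1-(k+1+1))
        unfold ww
        rw [mul_sub]; linarith
      have h7 := kk_03 I
      have h8 : cs I * ww 0 1 = 3 * cs I - cs I * Lam 11 := by
        unfold ww; norm_num; ring
      have h9 : cs (I+1) * ww 0 0 = 3 * cs (I+1) - cs (I+1) * Lam 2 := by
        unfold ww; norm_num; ring
      simp only [zero_add, Nat.add_sub_cancel, Nat.sub_zero, h8, h9]
      norm_num at h6 ⊢
      linarith
    rw [Finset.sum_sub_distrib, ← Finset.mul_sum] at h4
    linarith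

end

section
open PowerSeries

theorem card_class (A B v : ℕ) (h : A ≤ B) :
    18 * ((Finset.Ioc A B).filter (fun x => x ≡ v [MOD 18])).card ≤ B - A + 17 ∧
    B - A ≤ 18 * ((Finset.Ioc A B).filter (fun x => x ≡ v [MOD 18])).card + 17 := by
  have h1 := Nat.Ioc_filter_modEq_card A B (r := 18) (by norm_num) v
  have e1 : ⌊((B:ℚ) - v) / ((18:ℕ):ℚ)⌋ = ((B:ℤ) - v) / 18 := by
    have := Rat.floor_intCast_div_natCast ((B:ℤ) - v) 18
    push_cast at this ⊢
    exact this
  have e2 : ⌊((A:ℚ) - v) / ((18:ℕ):ℚ)⌋ = ((A:ℤ) - v) / 18 := by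
    have := Rat.floor_intCast_div_natCast ((A:ℤ) - v) 18
    push_cast at this ⊢
    exact this
  rw [e1, e2] at h1
  omega

def cd (n d : ℕ) : ℕ := ((Finset.Ioc d (n/d)).filter (fun e => (d*e)%9 = n%9 ∧ (d+e)%2 = 1)).card

set_option maxRecDepth 100000 in
theorem class_exists : ∀ d : Fin 18, d.val % 3 ≠ 0 → ∀ n : Fin 9, ∃ v : Fin 18, ∀ e : Fin 18,
    ((d.val*e.val)%9 = n.val ∧ (d.val+e.val)%2 = 1) ↔ e.val = v.val := by
  decide +kernel

theorem class_exists' (n d : ℕ) (hd : d % 3 ≠ 0) : ∃ v, ∀ e, ((d*e)%9 = n%9 ∧ (d+e)%2 = 1) ↔ e ≡ v [MOD 18] := by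
  obtain ⟨⟨v, hv⟩, h⟩ := class_exists ⟨d%18, by omega⟩ (by simp only; omega) ⟨n%9, by omega⟩
  refine ⟨v, fun e => ?_⟩
  have := h ⟨e%18, by omega⟩
  simp only at this
  have e1 : (d*e)%9 = (d%18*(e%18))%9 := by
    rw [Nat.mul_mod, Nat.mul_mod (d%18)]
    rw [Nat.mod_mod_of_dvd _ (by norm_num), Nat.mod_mod_of_dvd _ (by norm_num)]
  rw [e1, show (d+e)%2 = (d%18+e%18)%2 by omega, this, Nat.ModEq, Nat.mod_eq_of_lt hv]

theorem cd_bound (n d : ℕ) (hd : d % 3 ≠ 0) (h : d ≤ n/d) :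
    18 * cd n d ≤ n/d - d + 17 ∧ n/d - d ≤ 18 * cd n d + 17 := by
  obtain ⟨v, hv⟩ := class_exists' n d hd
  have := card_class d (n/d) v h
  unfold cd
  rw [Finset.filter_congr (fun e _ => hv e)]
  exact this

theorem cd_zero (n d : ℕ) (h : n ≤ d * d) : cd n d = 0 := by
  unfold cd
  rw [Finset.card_eq_zero, Finset.filter_eq_empty_iff]
  intro e he
  rw [Finset.mem_Ioc] at he
  exfalso
  have : d * e ≤ n := by
    rw [mul_comm]; exact (Nat.mul_le_of_le_div _ _ _ he.2)
  rcases Nat.eq_zero_or_pos d with rfl | hd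
  · simp at he; omega
  · nlinarith

theorem cd_step (n d : ℕ) (hd : (d+3) % 3 ≠ 0) : cd n (d+3) ≤ cd n d + 1 := by
  by_cases h : n ≤ (d+3)*(d+3)
  · rw [cd_zero n (d+3) h]; omega
  · push Not at h
    have h1 : d + 3 ≤ n / (d+3) := by
      rw [Nat.le_div_iff_mul_le (by omega)]; omega
    have h2 : n/(d+3) ≤ n/d := Nat.div_le_div_left (by omega) (by omega)
    have b1 := cd_bound n (d+3) hd h1
    have b2 := cd_bound n d (by omega) (by omega)
    omega

def chp (d : ℕ) : ℤ := - (sg d * chi d)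

theorem chp_val (d : ℕ) : chp d = if d%6 = 1 ∨ d%6 = 2 then 1 else if d%6=4 ∨ d%6=5 then -1 else 0 := by
  have e1 : sg d = sg ((d%6:ℕ):ℤ) := sg_congr (by omega)
  have e2 : chi d = chi ((d%6:ℕ):ℤ) := chi_congr (by omega)
  unfold chp
  rw [e1, e2]
  have h : d % 6 < 6 := by omega
  generalize d % 6 = r at *
  interval_cases r <;> decide

theorem Lam_pair (j : ℕ) (hj : j % 3 = 2) : Lam j =
    4 * ∑ p ∈ j.divisorsAntidiagonal, if p.1 < p.2 ∧ (p.1+p.2)%2 = 1 then chp p.1 else 0 := by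
  unfold Lam
  rw [← Nat.sum_divisorsAntidiagonal (f := fun i _ => sg i * chi i)]
  have e : ∑ p ∈ j.divisorsAntidiagonal, sg p.1 * chi p.1 =
      ∑ p ∈ j.divisorsAntidiagonal, ((if p.1 < p.2 then sg p.1 * chi p.1 else 0) + (if p.2 < p.1 then sg p.1 * chi p.1 else 0)) := by
    apply Finset.sum_congr rfl
    rintro ⟨a, b⟩ hp
    rw [Nat.mem_divisorsAntidiagonal] at hp
    simp only at hp ⊢
    have : a ≠ b := by
      rintro rfl
      have := Nat.mul_mod a a 3
      rw [hp.1, hj] at this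
      have h3 : a % 3 < 3 := by omega
      generalize a % 3 = r at *
      interval_cases r <;> simp at this
    split_ifs <;> first | omega | simp
  rw [e, Finset.sum_add_distrib]
  have e2 : ∑ p ∈ j.divisorsAntidiagonal, (if p.2 < p.1 then sg p.1 * chi p.1 else 0) = 
      ∑ p ∈ j.divisorsAntidiagonal, (if p.1 < p.2 then sg p.2 * chi p.2 else 0) := by
    conv_lhs => rw [← Nat.map_swap_divisorsAntidiagonal, Finset.sum_map]
    rfl
  rw [e2, ← Finset.sum_add_distrib, Finset.mul_sum, Finset.mul_sum]
  apply Finset.sum_congr rfl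
  rintro ⟨a, b⟩ hp
  rw [Nat.mem_divisorsAntidiagonal] at hp
  simp only at hp ⊢
  by_cases hab : a < b
  · have hc : chi (b:ℤ) = - chi a := by
      have := Nat.mul_mod a b 3
      rw [hp.1, hj] at this
      apply chi_congr_neg
      have h3 : a % 3 < 3 := by omega
      have h4 : b % 3 < 3 := by omega
      have h5 : (a % 3 + b % 3) = 3 := by
        generalize a % 3 = r at *
        generalize b % 3 = s at *
        interval_cases r <;> interval_cases s <;> simp at this ⊢
      omega
    rw [if_pos hab, if_pos hab, hc]
    by_cases hpar : (a+b)%2 = 1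
    · rw [if_pos ⟨hab, hpar⟩, chp, sg_congr_neg (a := (b:ℤ)) (b := (a:ℤ)) (by omega)]; ring
    · rw [if_neg (by tauto), sg_congr (a := (b:ℤ)) (b := (a:ℤ)) (by omega)]; ring
  · simp [hab]

theorem sum_Lam (I ρ K : ℕ) (hρ : ρ < 9) (h3 : ρ % 3 = 2) (hK : 9*I+ρ < 6*K) :
    ∑ k ∈ Finset.range (I+1), Lam (9*k+ρ) = 4 * ∑ d ∈ Finset.range (6*K), chp d * cd (9*I+ρ) d := by
  rw [Finset.sum_congr rfl (fun k _ => Lam_pair (9*k+ρ) (by omega)), ← Finset.mul_sum]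
  congr 1
  rw [Finset.sum_sigma']
  have e : ∀ d ∈ Finset.range (6*K), chp d * (cd (9*I+ρ) d : ℤ) = 
    ∑ e ∈ (Finset.Ioc d ((9*I+ρ)/d)).filter (fun e => (d*e)%9 = (9*I+ρ)%9 ∧ (d+e)%2 = 1), chp d := by
    intro d _
    rw [Finset.sum_const, cd, nsmul_eq_mul, mul_comm]
  rw [Finset.sum_congr rfl e, Finset.sum_sigma', ← Finset.sum_filter]
  refine Finset.sum_bij' (fun x _ => ⟨x.2.1, x.2.2⟩) (fun y _ => ⟨(y.1*y.2)/9, (y.1, y.2)⟩) ?_ ?_ ?_ ?_ ?_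
  · rintro ⟨k, d, e⟩ h
    simp only [Finset.mem_filter, Finset.mem_sigma, Finset.mem_range, Nat.mem_divisorsAntidiagonal, Finset.mem_Ioc] at h ⊢
    obtain ⟨⟨h1, h2, _⟩, h4, h5⟩ := h
    have hd : 0 < d := by rcases Nat.eq_zero_or_pos d with rfl | h; (simp at h2; omega); exact h
    have : d ≤ d * e := Nat.le_mul_of_pos_right _ (by omega)
    refine ⟨by omega, ⟨h4, ?_⟩, by omega, h5⟩
    rw [Nat.le_div_iff_mul_le hd, mul_comm]; omega
  · rintro ⟨d, e⟩ h
    simp only [Finset.mem_filter, Finset.mem_sigma, Finset.mem_range, Nat.mem_divisorsAntidiagonal, Finset.mem_Ioc] at h ⊢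
    obtain ⟨h1, ⟨h2, h4⟩, h5, h6⟩ := h
    have : d * e ≤ 9*I+ρ := by rw [mul_comm]; exact (Nat.mul_le_of_le_div _ _ _ h4)
    refine ⟨⟨by omega, by omega, by omega⟩, h2, h6⟩
  · rintro ⟨k, d, e⟩ h
    simp only [Finset.mem_filter, Finset.mem_sigma, Finset.mem_range, Nat.mem_divisorsAntidiagonal, Finset.mem_Ioc] at h ⊢
    obtain ⟨⟨h1, h2, _⟩, h4, h5⟩ := h
    rw [h2, show (9*k+ρ)/9 = k by omega]
  · rintro ⟨d, e⟩ h
    rfl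
  · rintro ⟨k, d, e⟩ h
    rfl

theorem sum_blocks (f : ℕ → ℤ) (K : ℕ) : ∑ d ∈ Finset.range (6*K), chp d * f d =
    ∑ k ∈ Finset.range K, (f (6*k+1) + f (6*k+2) - f (6*k+4) - f (6*k+5)) := by
  induction K with
  | zero => simp
  | succ K ih =>
    rw [Finset.sum_range_succ, ← ih, show 6*(K+1) = 6*K+5+1 by ring]
    rw [Finset.sum_range_succ, Finset.sum_range_succ, Finset.sum_range_succ, Finset.sum_range_succ, Finset.sum_range_succ, Finset.sum_range_succ]
    rw [chp_val, chp_val, chp_val, chp_val, chp_val, chp_val]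
    rw [show (6*K)%6 = 0 by omega, show (6*K+1)%6 = 1 by omega, show (6*K+2)%6 = 2 by omega, show (6*K+3)%6 = 3 by omega,
      show (6*K+4)%6 = 4 by omega, show (6*K+5)%6 = 5 by omega]
    norm_num
    ring

theorem blocks_bound (n q K : ℕ) (hq : n ≤ (6*q+7)*(6*q+7)) :
    ∑ k ∈ Finset.range (K+1), ((cd n (6*k+1) : ℤ) + cd n (6*k+2) - cd n (6*k+4) - cd n (6*k+5))
      + cd n (6*K+4) + cd n (6*K+5) ≤ cd n 1 + cd n 2 + 2 * (min K q : ℕ) := by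
  induction K with
  | zero => simp; linarith
  | succ K ih =>
    rw [Finset.sum_range_succ]
    have h1 := cd_step n (6*K+4) (by omega)
    have h2 := cd_step n (6*K+5) (by omega)
    rw [show 6*K+4+3 = 6*(K+1)+1 by ring] at h1
    rw [show 6*K+5+3 = 6*(K+1)+2 by ring] at h2
    by_cases h : K + 1 ≤ q
    · rw [min_eq_left (by omega)] at ih ⊢
      push_cast
      omega
    · rw [min_eq_right (by omega)] at ih ⊢
      have h3 : cd n (6*(K+1)+1) = 0 := cd_zero _ _ (hq.trans (Nat.mul_le_mul (by omega) (by omega)))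
      have h4 : cd n (6*(K+1)+2) = 0 := cd_zero _ _ (hq.trans (Nat.mul_le_mul (by omega) (by omega)))
      rw [h3, h4]
      push_cast
      omega

theorem sum_Lam_le (I ρ q : ℕ) (hρ : ρ < 9) (h3 : ρ % 3 = 2) (hq : 9*I+ρ ≤ (6*q+7)*(6*q+7)) :
    ∑ k ∈ Finset.range (I+1), Lam (9*k+ρ) ≤ 4 * (cd (9*I+ρ) 1 + cd (9*I+ρ) 2 + 2 * q) := by
  rw [sum_Lam I ρ (9*I+ρ+1) hρ h3 (by omega), sum_blocks]
  have := blocks_bound (9*I+ρ) q (9*I+ρ) hq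
  have h : ((min (9*I+ρ) q : ℕ) : ℤ) ≤ q := by exact_mod_cast min_le_right _ _
  linarith

theorem sum_J (t I : ℕ) : 3 * (I:ℤ) + 1 ≤ 2 * ∑ k ∈ Finset.range (I+1), (1 + if (3*k+t)%2 = 0 ∧ 3*k+t ≠ 0 then (1:ℤ) else 0) := by
  -- parity bookkeeping
  have h : ∀ I : ℕ, 3 * (I:ℤ) + 1 + (if (3*I+t)%2 = 0 ∧ 3*I+t ≠ 0 then 1 else 0) ≤ 2 * ∑ k ∈ Finset.range (I+1), (1 + if (3*k+t)%2 = 0 ∧ 3*k+t ≠ 0 then (1:ℤ) else 0) := by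
    intro I
    induction I with
    | zero => simp; split_ifs <;> norm_num
    | succ I ih =>
      rw [Finset.sum_range_succ]
      push_cast
      split_ifs at ih ⊢ <;> omega
  have := h I
  split_ifs at this <;> linarith

theorem P_large (t I : ℕ) (ht : t < 3) (hn : 105 ≤ 9*I+(3*t+2)) : 0 < ∑ i ∈ Finset.range (I+1), ww t i := by
  obtain ⟨q, hq1, hq2⟩ : ∃ q, (6*q+1)*(6*q+1) < 9*I+(3*t+2) ∧ 9*I+(3*t+2) ≤ (6*q+7)*(6*q+7) := by
    have hex : ∃ q, 9*I+(3*t+2) ≤ (6*q+7)*(6*q+7) := ⟨9*I+(3*t+2), by nlinarith⟩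
    classical
    refine ⟨Nat.find hex, ?_, Nat.find_spec hex⟩
    by_contra hc
    push Not at hc
    rcases hf : Nat.find hex with _ | q
    · rw [hf] at hc; omega
    · have := Nat.find_min hex (m := q) (by omega)
      apply this
      rw [hf] at hc
      rw [show 6*q+7 = 6*(q+1)+1 by ring]; exact hc
  have h1 := sum_Lam_le I (3*t+2) q (by omega) (by omega) hq2
  have h2 := sum_J t I
  have b1 := (cd_bound (9*I+(3*t+2)) 1 (by norm_num) (by omega)).1
  have b2 := (cd_bound (9*I+(3*t+2)) 2 (by norm_num) (by omega)).1
  unfold ww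
  rw [Finset.sum_sub_distrib, ← Finset.mul_sum]
  have hq3 : 48 * q + 57 ≤ 9*I+(3*t+2) := by
    rcases Nat.lt_or_ge q 2 with h | h
    · omega
    · nlinarith
  omega

set_option maxRecDepth 100000 in
theorem P_small : ∀ t < 3, ∀ I < 12, (t ≠ 0 ∨ I ≠ 0) → 0 < ∑ i ∈ Finset.range (I+1), ww t i := by
  decide +kernel

theorem P_pos (t I : ℕ) (ht : t < 3) (h : t ≠ 0 ∨ I ≠ 0) : 0 < ∑ i ∈ Finset.range (I+1), ww t i := by
  by_cases hI : I < 12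
  · exact P_small t ht I hI h
  · exact P_large t I ht (by omega)

theorem class2 (n : ℕ) (hn : n % 3 = 2) : coeff n (Cs * Ss) < 0 := by
  have e : n = 9*(n/9) + (3*((n%9)/3)+2) := by omega
  rw [e]
  by_cases h : (n%9)/3 = 0
  · rw [h]
    exact neg_of_P0 _ (fun k _ hk => P_pos 0 k (by norm_num) (Or.inr hk))
  · exact neg_of_P _ _ (by omega) h (fun k _ => P_pos _ k (by omega) (Or.inl h))

end

section
open PowerSeries

theorem chi_mul (a b : ℤ) : chi (a*b) = chi a * chi b := by
  have h1 : a % 3 = 0 ∨ a % 3 = 1 ∨ a % 3 = 2 := by omega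
  have h2 : b % 3 = 0 ∨ b % 3 = 1 ∨ b % 3 = 2 := by omega
  have hm := Int.mul_emod a b 3
  unfold chi
  rw [hm]
  rcases h1 with h1 | h1 | h1 <;> rcases h2 with h2 | h2 | h2 <;> rw [h1, h2] <;> decide

theorem chi_pow (a : ℤ) (i : ℕ) : chi (a^i) = chi a ^ i := by
  induction i with
  | zero => rw [pow_zero, pow_zero]; rfl
  | succ i ih => rw [pow_succ, chi_mul, ih, pow_succ]

theorem sg_even {a : ℕ} (h : a % 2 = 0) : sg a = 1 := by
  unfold sg; rw [if_pos (by omega)]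
theorem sg_odd {a : ℕ} (h : a % 2 = 1) : sg a = -1 := by
  unfold sg; rw [if_neg (by omega)]

def chA : ArithmeticFunction ℤ := ⟨chp, by decide⟩

theorem chA_apply (n : ℕ) : chA n = chp n := rfl

theorem chA_mult : chA.IsMultiplicative := by
  refine ⟨by decide, fun {m n} h => ?_⟩
  rw [chA_apply, chA_apply, chA_apply]
  unfold chp
  push_cast
  rw [chi_mul]
  have hmn := Nat.mul_mod m n 2
  rcases Nat.mod_two_eq_zero_or_one m with hm | hm <;> rcases Nat.mod_two_eq_zero_or_one n with hn | hn
  · exfalso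
    have := Nat.dvd_gcd (Nat.dvd_of_mod_eq_zero hm) (Nat.dvd_of_mod_eq_zero hn)
    rw [h] at this; omega
  · rw [hm, hn] at hmn
    have := sg_even hmn
    push_cast at this
    rw [this, sg_even hm, sg_odd hn]; ring
  · rw [hm, hn] at hmn
    have := sg_even hmn
    push_cast at this
    rw [this, sg_even hn, sg_odd hm]; ring
  · rw [hm, hn] at hmn
    have := sg_odd hmn
    push_cast at this
    rw [this, sg_odd hn, sg_odd hm]; ring

theorem geom_nn (x : ℤ) (h : x = 0 ∨ x = 1 ∨ x = -1) (k : ℕ) : 0 ≤ ∑ i ∈ Finset.range k, x^i := by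
  rcases h with rfl | rfl | rfl
  · exact Finset.sum_nonneg fun i _ => by positivity
  · exact Finset.sum_nonneg fun i _ => by positivity
  · rw [neg_one_geom_sum]; split_ifs <;> norm_num

theorem pp_nn (p k : ℕ) (hp : p.Prime) : 0 ≤ ∑ i ∈ Finset.range (k+1), chp (p^i) := by
  rcases hp.eq_two_or_odd with rfl | ho
  · rw [Finset.sum_range_succ', Finset.sum_congr rfl (g := fun i => (-1:ℤ)^i)]
    · have := geom_nn (-1) (by simp) k
      have h1 : chp (2^0) = 1 := by decide
      rw [h1]; linarith
    · intro i _
      unfold chp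
      rw [sg_even (by rw [pow_succ]; omega)]
      push_cast
      rw [chi_pow, show chi 2 = -1 by decide, pow_succ]; ring
  · rw [Finset.sum_congr rfl (g := fun i => (chi p)^i)]
    · apply geom_nn
      have := chi_of p
      tauto
    · intro i _
      unfold chp
      rw [sg_odd (by rw [Nat.pow_mod, ho]; simp)]
      push_cast
      rw [chi_pow]; ring

theorem Lam_nn (j : ℕ) : 0 ≤ Lam j := by
  rcases Nat.eq_zero_or_pos j with rfl | hj
  · decide
  have e : Lam j = 2 * (chA * (ArithmeticFunction.zeta : ArithmeticFunction ℕ)) j := by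
    rw [ArithmeticFunction.coe_mul_zeta_apply, Lam, Finset.mul_sum, Finset.mul_sum]
    apply Finset.sum_congr rfl
    intro d _
    rw [chA_apply, chp]; ring
  have hm : (chA * (ArithmeticFunction.zeta : ArithmeticFunction ℕ) : ArithmeticFunction ℤ).IsMultiplicative :=
    chA_mult.mul ArithmeticFunction.isMultiplicative_zeta.natCast
  rw [e, hm.multiplicative_factorization _ hj.ne']
  apply mul_nonneg (by norm_num)
  apply Finset.prod_nonneg
  intro p hp
  have hp' : p.Prime := Nat.prime_of_mem_primeFactors hp
  beta_reduce
  rw [ArithmeticFunction.coe_mul_zeta_apply, Nat.sum_divisors_prime_pow hp']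
  exact pp_nn p _ hp'

theorem VV_zero (n : ℕ) (hn : n % 3 ≠ 2) : coeff n VV = 0 := by
  unfold VV
  rw [map_add]
  simp only [ssum, coeff_mk, coeff_X_EX]
  rw [Finset.sum_eq_zero, Finset.sum_eq_zero, add_zero]
  · intro s _; rw [if_neg]; omega
  · intro s _; rw [if_neg]; omega

theorem class01 (n : ℕ) (hn : n % 3 ≠ 2) : 0 < coeff n (Cs * Ss) := by
  have e : n = 9*(n/9) + n%9 := by omega
  rw [F_id2, map_sub, show (6:ℤ⟦X⟧) = C (6:ℤ) by simp, coeff_C_mul, VV_zero n hn, mul_zero, sub_zero]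
  rw [e, coeff_EX_mul _ _ _ _ (by omega)]
  have hr : n % 9 < 9 := by omega
  have hr3 : (n % 9) % 3 ≠ 2 := by omega
  generalize n % 9 = r at hr hr3
  generalize n / 9 = I
  have hnn : ∀ j, 0 ≤ coeff j (1 - 2 * DS fLam) := by
    intro j; rw [coeff_Lam]; split_ifs
    · norm_num
    · exact Lam_nn j
  apply Finset.sum_pos'
  · intro k _
    exact mul_nonneg (le_trans zero_le_one (cs_pos _)) (hnn _)
  · refine ⟨0, by simp, ?_⟩
    apply mul_pos
    · exact lt_of_lt_of_le zero_lt_one (cs_pos _)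
    · rw [coeff_Lam]
      interval_cases r <;> first | (exfalso; omega) | decide

end

theorem stmt9 (n : ℕ) (hn : 1 ≤ n) :
    ((n % 3 = 0 ∨ n % 3 = 1) → nbar 1 3 n < nbar 0 3 n) ∧
    (n % 3 = 2 → nbar 0 3 n < nbar 1 3 n) := by
  have hF := F_eq n hn
  constructor
  · intro h
    have := class01 n (by omega)
    omega
  · intro h
    have := class2 n h
    omega
end
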